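/- arXiv:1702.04915 — 3 statements merged into one kernel-verified Lean document; each statement's English description precedes it below -/
import Mathlib

section
/- There exist a constant c > 0 and a symmetric positive-definite 2×2 real matrix Σ such that, under P^+_{unif,L}, the law of √L (π̃^L_1 − c e⃗_1) converges weakly, as L → ∞, to the centered Gaussian measure N(0,Σ) on ℝ²; i.e. for every bounded continuous f : ℝ² → ℝ, lim_{L→∞} E^+_{unif,L}[ f(√L(π̃^L_1 − c e⃗_1)) ] = ∫_{ℝ²} f dN(0,Σ). -/
open Filter Set

/-- One admissible step of a nearest-neighbour walk on `ℤ²`. -/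
def IsStep (s : ℤ × ℤ) : Prop :=
  s = (1, 0) ∨ s = (-1, 0) ∨ s = (0, 1) ∨ s = (0, -1)

/-- The set `Ω_L` of prudent paths of length `L`. -/
def prudentSet (L : ℕ) : Set (Fin (L + 1) → ℤ × ℤ) :=
  {π | π 0 = (0, 0) ∧ ∀ i : Fin L,
    IsStep (π i.succ - π i.castSucc) ∧
    ∀ k : ℕ, 1 ≤ k → ∀ j : Fin (L + 1), j ≤ i.castSucc →
      π i.castSucc + (k : ℤ) • (π i.succ - π i.castSucc) ≠ π j}

/-- The uniform probability of a set `A` of paths under `P_{unif,L}`. -/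
noncomputable def probUnif (L : ℕ) (A : Set (Fin (L + 1) → ℤ × ℤ)) : ℝ :=
  (Nat.card ↥(A ∩ prudentSet L) : ℝ) / (Nat.card ↥(prudentSet L) : ℝ)

/-- Coercion `ℤ² → ℝ²`. -/
def toR (p : ℤ × ℤ) : ℝ × ℝ := ((p.1 : ℝ), (p.2 : ℝ))

/-- The rescaled interpolated path `π̃^L : [0,1] → ℝ²`. -/
noncomputable def rescaled (L : ℕ) (π : Fin (L + 1) → ℤ × ℤ) (t : ℝ) : ℝ × ℝ :=
  let n : ℕ := ⌊t * L⌋₊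
  let p : ℝ × ℝ := toR (π ⟨min n L, by omega⟩)
  let q : ℝ × ℝ := toR (π ⟨min (n + 1) L, by omega⟩)
  (L : ℝ)⁻¹ • (p + (t * L - (n : ℝ)) • (q - p))

/-- Euclidean norm on `ℝ²`. -/
noncomputable def enorm2 (v : ℝ × ℝ) : ℝ := Real.sqrt (v.1 ^ 2 + v.2 ^ 2)

/-- The four diagonal directions. -/
def evec : ℕ → ℝ × ℝ
  | 1 => (1, 1)
  | 2 => (-1, 1)
  | 3 => (-1, -1)
  | 4 => (1, -1)
  | _ => (0, 0)

/-- The set `Ω_L^+` of 2-sided prudent paths of length `L` (north-east direction):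
prudent paths that never take a step in the direction of the quadrant
`{(x,y) : x ≤ 0 ∧ y ≤ 0}`, whose endpoint is the top-right corner of the smallest
rectangle containing the path, and which start with an east step. -/
def twoSidedSet (L : ℕ) : Set (Fin (L + 1) → ℤ × ℤ) :=
  {π | π ∈ prudentSet L ∧
    (∀ i : Fin L, ∀ k : ℕ, 1 ≤ k →
      ¬((π i.castSucc + (k : ℤ) • (π i.succ - π i.castSucc)).1 ≤ 0 ∧
        (π i.castSucc + (k : ℤ) • (π i.succ - π i.castSucc)).2 ≤ 0)) ∧
    (∀ i : Fin (L + 1),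
      (π i).1 ≤ (π (Fin.last L)).1 ∧ (π i).2 ≤ (π (Fin.last L)).2) ∧
    (∀ h : 0 < L, π ⟨1, by omega⟩ = (1, 0))}

/-- The uniform probability of a set `A` of paths under `P^+_{unif,L}`. -/
noncomputable def probUnifPlus (L : ℕ) (A : Set (Fin (L + 1) → ℤ × ℤ)) : ℝ :=
  (Nat.card ↥(A ∩ twoSidedSet L) : ℝ) / (Nat.card ↥(twoSidedSet L) : ℝ)
open Matrix MeasureTheory

/-- Expectation with respect to the uniform law `P^+_{unif,L}` on 2-sided prudent paths. -/
noncomputable def expUnifPlus (L : ℕ) (g : (Fin (L + 1) → ℤ × ℤ) → ℝ) : ℝ :=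
  (∑ᶠ π ∈ twoSidedSet L, g π) / (Nat.card ↥(twoSidedSet L) : ℝ)

/-- The density of the centered Gaussian measure `N(0,Σ)` on `ℝ²` with (positive-definite)
covariance matrix `Σ`. -/
noncomputable def gaussDensity2 (S : Matrix (Fin 2) (Fin 2) ℝ) (v : ℝ × ℝ) : ℝ :=
  (2 * Real.pi * Real.sqrt S.det)⁻¹ *
    Real.exp (-(1 / 2) * (![v.1, v.2] ⬝ᵥ (S⁻¹ *ᵥ ![v.1, v.2])))

section
open Filter Topology Finset

namespace PrudAux

lemma hsc {f g : ℕ → ℂ} {x : ℂ} (h : ∀ n, f n = g n) : HasSum f x ↔ HasSum g x := by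
  rw [show f = g from funext h]

/-- uniqueness of power series coefficients -/
lemma coeff_unique {α β : ℕ → ℂ} {f : ℂ → ℂ} {r : ℝ} (hr : 0 < r)
    (h1 : ∀ z : ℂ, ‖z‖ < r → HasSum (fun n => α n * z ^ n) (f z))
    (h2 : ∀ z : ℂ, ‖z‖ < r → HasSum (fun n => β n * z ^ n) (f z)) : α = β := by
  have key : ∀ γ : ℕ → ℂ, (∀ z : ℂ, ‖z‖ < r → HasSum (fun n => γ n * z ^ n) (f z)) →
      HasFPowerSeriesAt f (FormalMultilinearSeries.ofScalars ℂ γ) 0 := by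
    intro γ h
    rw [hasFPowerSeriesAt_iff]
    filter_upwards [Metric.ball_mem_nhds (0 : ℂ) hr] with z hz
    have := h z (by simpa using hz)
    simp only [zero_add]
    refine (hsc fun n => ?_).mp this
    rw [FormalMultilinearSeries.coeff_ofScalars, smul_eq_mul, mul_comm]
  have := (key α h1).eq_formalMultilinearSeries (key β h2)
  funext n
  have h3 := congrArg (fun p => FormalMultilinearSeries.coeff p n) this
  simpa [FormalMultilinearSeries.coeff_ofScalars] using h3

/-- Two-variable geometric sum. -/
noncomputable def gs (z w : ℂ) (n : ℕ) : ℂ := ∑ i ∈ range n, z ^ i * w ^ (n - 1 - i)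

lemma gs_mul (z w : ℂ) (n : ℕ) : gs z w n * (z - w) = z ^ n - w ^ n := geom_sum₂_mul z w n

lemma norm_gs_le {R : ℝ} (hR : 1 ≤ R) {z w : ℂ} (hz : ‖z‖ ≤ R) (hw : ‖w‖ ≤ R) (n : ℕ) :
    ‖gs z w n‖ ≤ n * R ^ n := by
  unfold gs
  refine (norm_sum_le _ _).trans ?_
  calc _ ≤ ∑ i ∈ range n, R ^ n := by
        apply Finset.sum_le_sum
        intro i hi
        rw [norm_mul, norm_pow, norm_pow]
        have hi' := Finset.mem_range.1 hi
        calc _ ≤ R ^ i * R ^ (n - 1 - i) := by gcongr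
          _ = R ^ (i + (n - 1 - i)) := by rw [pow_add]
          _ ≤ R ^ n := pow_le_pow_right₀ hR (by omega)
    _ = _ := by simp

lemma summable_lemma {p : ℕ → ℝ} (hp : ∀ n, 0 ≤ p n) {R S : ℝ} (hS : 0 ≤ S) (hSR : S < R)
    (h : Summable fun n => p n * R ^ n) : Summable fun n : ℕ => p n * (n * S ^ n) := by
  have hR : 0 < R := hS.trans_lt hSR
  have ht := tendsto_self_mul_const_pow_of_lt_one (r := S / R) (by positivity)
    ((div_lt_one hR).2 hSR)
  obtain ⟨C, hC⟩ := ht.bddAbove_range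
  refine Summable.of_nonneg_of_le (fun n => by have := hp n; positivity) (fun n => ?_)
    (h.mul_left C)
  have h1 : (n : ℝ) * (S / R) ^ n ≤ C := hC ⟨n, rfl⟩
  have h2 : (n : ℝ) * S ^ n ≤ C * R ^ n := by
    rw [div_pow] at h1
    have : (n : ℝ) * S ^ n = (n * (S ^ n / R ^ n)) * R ^ n := by field_simp
    rw [this]; gcongr
  calc _ ≤ p n * (C * R ^ n) := mul_le_mul_of_nonneg_left h2 (hp n)
    _ = _ := by ring

variable {p : ℕ → ℝ} {a : ℕ → ℂ}

lemma summable_Q (ha : ∀ n, ‖a n‖ ≤ p n) {R : ℝ} (hR : 1 ≤ R)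
    (h : Summable fun n : ℕ => p n * (n * R ^ n)) {z w : ℂ} (hz : ‖z‖ ≤ R) (hw : ‖w‖ ≤ R) :
    Summable fun n => a n * gs z w n := by
  refine Summable.of_norm_bounded h (fun n => ?_)
  rw [norm_mul]
  have := norm_gs_le hR hz hw n
  have h0 : 0 ≤ p n := (norm_nonneg _).trans (ha n)
  gcongr
  exact ha n

lemma summable_pow (ha : ∀ n, ‖a n‖ ≤ p n) {R : ℝ} (h : Summable fun n : ℕ => p n * R ^ n)
    {z : ℂ} (hz : ‖z‖ ≤ R) : Summable fun n => ‖a n * z ^ n‖ := by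
  refine Summable.of_nonneg_of_le (fun n => norm_nonneg _) (fun n => ?_) h
  rw [norm_mul, norm_pow]
  have h0 : 0 ≤ p n := (norm_nonneg _).trans (ha n)
  gcongr
  exact ha n

lemma Q_mul (ha : ∀ n, ‖a n‖ ≤ p n) {R : ℝ}
    (h : Summable fun n : ℕ => p n * R ^ n)
    {z w : ℂ} (hz : ‖z‖ ≤ R) (hw : ‖w‖ ≤ R) :
    (∑' n, a n * gs z w n) * (z - w) = (∑' n, a n * z ^ n) - ∑' n, a n * w ^ n := by
  rw [← tsum_mul_right, ← Summable.tsum_sub (summable_pow ha h hz).of_norm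
    (summable_pow ha h hw).of_norm]
  congr 1; funext n
  rw [mul_assoc, gs_mul]; ring

lemma single (ha : ∀ n, ‖a n‖ ≤ p n) (ha0 : a 0 = 0) {R R' q m : ℝ} (hR' : 1 < R') (hRR : R' < R)
    (h : Summable fun n : ℕ => p n * R ^ n)
    (h' : Summable fun n : ℕ => p n * (n * R ^ n))
    {w : ℂ} (hq0 : 0 ≤ q) (hq : q < 1) (hw : ‖w‖ ≤ q * R') (hw1 : ∑' n, a n * w ^ n = 1)
    (hm : 0 < m) (hQ : ∀ z : ℂ, ‖z‖ ≤ R' → m ≤ ‖∑' n, a n * gs z w n‖)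
    {u : ℕ → ℂ} (hu0 : u 0 = 1) (hu : ∀ n, u (n + 1) = ∑ k ∈ range (n + 1), a (k + 1) * u (n - k))
    (n : ℕ) :
    ‖w ^ (n + 1) * u n - (∑' n, a n * gs w w n)⁻¹‖ ≤ m⁻¹ * q ^ (n + 1) / (1 - q) := by
  have hR'0 : (0:ℝ) < R' := by linarith
  have hwR' : ‖w‖ < R' := hw.trans_lt (by nlinarith)
  have hwR : ‖w‖ ≤ R := by linarith
  set Q : ℂ → ℂ := fun z => ∑' n, a n * gs z w n with hQdef
  have hdiff : DifferentiableOn ℂ Q (Metric.ball 0 R) := by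
    apply Complex.differentiableOn_tsum_of_summable_norm h' _ Metric.isOpen_ball
    · intro n z hz
      rw [norm_mul]
      have hz' : ‖z‖ ≤ R := by simpa using (mem_ball_iff_norm.1 hz).le
      have := norm_gs_le (by linarith) hz' hwR n
      have h0 : 0 ≤ p n := (norm_nonneg _).trans (ha n)
      gcongr
      exact ha n
    · intro n
      unfold gs
      fun_prop
  set g : ℂ → ℂ := fun z => (Q z)⁻¹ with hg
  have hne : ∀ z : ℂ, ‖z‖ ≤ R' → Q z ≠ 0 := by
    intro z hz h0
    have := hQ z hz
    have h1 : Q z = ∑' n, a n * gs z w n := rfl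
    rw [← h1, h0, norm_zero] at this
    linarith
  have hgd : DifferentiableOn ℂ g (Metric.closedBall 0 R') := by
    apply DifferentiableOn.inv (hdiff.mono (Metric.closedBall_subset_ball hRR))
    intro z hz
    exact hne z (by simpa using hz)
  have hgdc : DiffContOnCl ℂ g (Metric.ball 0 R') := hgd.diffContOnCl_ball subset_rfl
  set c : ℕ → ℂ := fun n => (n.factorial : ℂ)⁻¹ * iteratedDeriv n g 0 with hc
  have hcs : ∀ z : ℂ, ‖z‖ < R' → HasSum (fun n => c n * z ^ n) (g z) := by
    intro z hz
    have := Complex.hasSum_taylorSeries_on_ball (hgd.mono Metric.ball_subset_closedBall)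
      (show z ∈ Metric.ball 0 R' by simpa using hz)
    refine (hsc fun n => ?_).mp this
    simp only [hc, smul_eq_mul, sub_zero]; ring
  have hcb : ∀ n, ‖c n‖ ≤ m⁻¹ / R' ^ n := by
    intro n
    have h1 := Complex.norm_iteratedDeriv_le_of_forall_mem_sphere_norm_le (C := m⁻¹) n hR'0 hgdc
      (by
        intro z hz
        simp only [hg, norm_inv]
        apply inv_anti₀ hm
        exact hQ z (by simpa using (mem_sphere_iff_norm.1 hz).le))
    simp only [hc, norm_mul, norm_inv, Complex.norm_natCast]
    have : (0:ℝ) < n.factorial := by positivity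
    rw [inv_mul_le_iff₀ this]
    rwa [← mul_div_assoc]
  -- convolution identity
  set b : ℕ → ℂ := fun n => (if n = 0 then 1 else 0) - a n with hb
  have hbs : ∀ z : ℂ, ‖z‖ ≤ R → HasSum (fun n => b n * z ^ n) (1 - ∑' n, a n * z ^ n) := by
    intro z hz
    have h1 : HasSum (fun n : ℕ => (if n = 0 then (1:ℂ) else 0) * z ^ n) 1 := by
      convert hasSum_ite_eq (0:ℕ) (1:ℂ) using 2 with n
      split_ifs with hn <;> simp [hn]
    refine (hsc fun n => ?_).mp (h1.sub (summable_pow ha h hz).of_norm.hasSum)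
    simp only [hb]; ring
  have hbn : ∀ z : ℂ, ‖z‖ ≤ R → Summable fun n => ‖b n * z ^ n‖ := fun z hz =>
    (hbs z hz).summable.norm
  have hconv : ∀ N, ∑ kl ∈ antidiagonal N, b kl.1 * c kl.2 =
      if N = 0 then w else if N = 1 then -1 else 0 := by
    have : (fun N => ∑ kl ∈ antidiagonal N, b kl.1 * c kl.2) =
      fun N => if N = 0 then w else if N = 1 then -1 else 0 := by
      apply coeff_unique (f := fun z => w - z) hR'0
      · intro z hz
        have hzR : ‖z‖ ≤ R := by linarith
        have e1 := tsum_mul_tsum_eq_tsum_sum_antidiagonal_of_summable_norm (hbn z hzR)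
          (hcs z hz).summable.norm
        have e2 := summable_norm_sum_mul_antidiagonal_of_summable_norm (hbn z hzR)
          (hcs z hz).summable.norm
        have e3 := e2.of_norm.hasSum
        rw [← e1, (hbs z hzR).tsum_eq, (hcs z hz).tsum_eq] at e3
        have e4 : (1 - ∑' n, a n * z ^ n) * g z = w - z := by
          have := Q_mul ha h hzR hwR
          rw [hw1] at this
          have h5 : Q z = ∑' n, a n * gs z w n := rfl
          rw [← h5] at this
          have h6 : 1 - ∑' n, a n * z ^ n = Q z * (w - z) := by linear_combination this
          rw [h6, hg]
          have := hne z hz.le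
          field_simp
        rw [e4] at e3
        refine (hsc fun N => ?_).mp e3
        symm
        rw [Finset.sum_mul]
        apply Finset.sum_congr rfl
        rintro ⟨k, l⟩ hkl
        rw [HasAntidiagonal.mem_antidiagonal] at hkl
        simp only at hkl ⊢
        rw [← hkl, pow_add]; ring
      · intro z hz
        have h1 := hasSum_sum_of_ne_finset_zero (L := SummationFilter.unconditional ℕ)
          (f := fun N : ℕ => (if N = 0 then w else if N = 1 then -1 else 0) * z ^ N) (s := range 2)
          (by
            intro N hN
            have : 2 ≤ N := by simpa [Nat.succ_le_iff] using hN
            have h0 : N ≠ 0 := by omega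
            have h1 : N ≠ 1 := by omega
            simp [h0, h1])
        simpa [Finset.sum_range_succ, sub_eq_add_neg] using h1
    exact fun N => congrFun this N
  -- formal power series
  have hPS : (PowerSeries.mk b) * PowerSeries.mk c = PowerSeries.C w - PowerSeries.X := by
    ext N
    rw [PowerSeries.coeff_mul]
    simp only [PowerSeries.coeff_mk, map_sub]
    rw [hconv, PowerSeries.coeff_C, PowerSeries.coeff_X]
    rcases N with _ | _ | N <;> simp
  have hU : (PowerSeries.mk u) * PowerSeries.mk b = 1 := by
    ext N
    rw [PowerSeries.coeff_mul]
    simp only [PowerSeries.coeff_mk, PowerSeries.coeff_one]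
    rw [Finset.Nat.sum_antidiagonal_eq_sum_range_succ (fun i j => u i * b j),
      ← Finset.sum_range_reflect]
    rcases N with _ | N
    · simp [hu0, hb, ha0]
    · rw [Finset.sum_range_succ']
      simp only [Nat.succ_eq_add_one]
      have : ∀ k ∈ range (N + 1), u (N + 1 + 1 - 1 - (k + 1)) * b (N + 1 - (N + 1 + 1 - 1 - (k + 1)))
          = - (a (k + 1) * u (N - k)) := by
        intro k hk
        have hk' := Finset.mem_range.1 hk
        have e1 : N + 1 + 1 - 1 - (k + 1) = N - k := by omega
        have e2 : N + 1 - (N - k) = k + 1 := by omega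
        rw [e1, e2]
        simp [hb]; ring
      rw [Finset.sum_congr rfl this, Finset.sum_neg_distrib, ← hu]
      simp [hb, ha0]
  have hUc : PowerSeries.mk u * (PowerSeries.C w - PowerSeries.X) = PowerSeries.mk c := by
    rw [← hPS, ← mul_assoc, hU, one_mul]
  have hr0 : w * u 0 = c 0 := by
    have := congrArg (PowerSeries.coeff 0) hUc
    simp [mul_sub] at this
    rw [← this]; ring
  have hr1 : ∀ n, w * u (n + 1) = c (n + 1) + u n := by
    intro n
    have := congrArg (PowerSeries.coeff (n + 1)) hUc
    rw [mul_sub, map_sub, PowerSeries.coeff_succ_mul_X] at this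
    simp at this
    rw [← this]; ring
  have hsumw : ∀ n, w ^ (n + 1) * u n = ∑ k ∈ range (n + 1), c k * w ^ k := by
    intro n
    induction n with
    | zero => simp [← hr0]
    | succ n ih =>
      rw [Finset.sum_range_succ, ← ih]
      have := hr1 n
      rw [pow_succ, mul_assoc, this]; ring
  rw [hsumw]
  have hsw := hcs w hwR'
  have : (∑' n, a n * gs w w n)⁻¹ = g w := rfl
  rw [this, ← hsw.tsum_eq, ← hsw.summable.sum_add_tsum_nat_add (n + 1), sub_add_cancel_left,
    norm_neg]
  have hbound : ∀ k, ‖c (k + (n + 1)) * w ^ (k + (n + 1))‖ ≤ m⁻¹ * q ^ (n + 1) * q ^ k := by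
    intro k
    rw [norm_mul, norm_pow]
    calc _ ≤ m⁻¹ / R' ^ (k + (n + 1)) * (q * R') ^ (k + (n + 1)) := by
          gcongr
          exact hcb _
      _ = m⁻¹ * q ^ (n + 1) * q ^ k := by
          rw [mul_pow]; field_simp; ring
  have hgeo := (hasSum_geometric_of_lt_one hq0 hq).mul_left (m⁻¹ * q ^ (n + 1))
  exact tsum_of_norm_bounded hgeo hbound

end PrudAux

end

section
open Filter Topology Finset

namespace PrudAux

lemma norm_pow_sub_one_le {w : ℂ} {r : ℝ} (hw : ‖w - 1‖ ≤ r) (k : ℕ) :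
    ‖w ^ k - 1‖ ≤ (1 + r) ^ k - 1 := by
  have hr : 0 ≤ r := (norm_nonneg _).trans hw
  have hw' : ‖w‖ ≤ 1 + r := by
    calc ‖w‖ = ‖1 + (w - 1)‖ := by ring_nf
      _ ≤ ‖(1:ℂ)‖ + ‖w - 1‖ := norm_add_le _ _
      _ ≤ 1 + r := by simpa using hw
  induction k with
  | zero => simp
  | succ k ih =>
    have : w ^ (k + 1) - 1 = w * (w ^ k - 1) + (w - 1) := by ring
    rw [this]
    calc _ ≤ ‖w‖ * ‖w ^ k - 1‖ + ‖w - 1‖ := by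
          rw [← norm_mul]; exact norm_add_le _ _
      _ ≤ (1 + r) * ((1 + r) ^ k - 1) + r := by gcongr
      _ = _ := by ring

lemma norm_gs_sub_le {R r : ℝ} (hR : 1 ≤ R) {z w : ℂ} (hz : ‖z‖ ≤ R) (hw : ‖w - 1‖ ≤ r) (n : ℕ) :
    ‖gs z w n - gs z 1 n‖ ≤ n * R ^ n * ((1 + r) ^ n - 1) := by
  have hr : 0 ≤ r := (norm_nonneg _).trans hw
  unfold gs
  rw [← Finset.sum_sub_distrib]
  refine (norm_sum_le _ _).trans ?_
  calc _ ≤ ∑ i ∈ range n, R ^ n * ((1 + r) ^ n - 1) := by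
        apply Finset.sum_le_sum
        intro i hi
        have hi' := Finset.mem_range.1 hi
        rw [one_pow, ← mul_sub, norm_mul, norm_pow]
        have h1 := norm_pow_sub_one_le hw (n - 1 - i)
        have h2 : (1 + r) ^ (n - 1 - i) ≤ (1 + r) ^ n :=
          pow_le_pow_right₀ (by linarith) (by omega)
        have h3 : ‖z‖ ^ i ≤ R ^ n :=
          (pow_le_pow_left₀ (norm_nonneg _) hz i).trans (pow_le_pow_right₀ hR (by omega))
        gcongr
        linarith
    _ = _ := by simp; ring

lemma gs_one (n : ℕ) : gs 1 1 n = n := by simp [gs]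

variable {p : ℕ → ℝ}

/-- nonvanishing -/
lemma Q0_ne (hp : ∀ n, 0 ≤ p n) (hsum : HasSum p 1) (hp1 : 0 < p 1)
    {R : ℝ} (hR : 1 < R)
    (hRs : Summable fun n => p n * R ^ n) (hRs' : Summable fun n => p n * (n * R ^ n))
    {z : ℂ} (hz : ‖z‖ ≤ 1) : ∑' n, (p n : ℂ) * gs z 1 n ≠ 0 := by
  have hpn : ∀ n, ‖(p n : ℂ)‖ ≤ p n := fun n => by simp [abs_of_nonneg (hp n)]
  intro h0
  have h1 := Q_mul hpn hRs (hz.trans hR.le) (w := 1) (by simpa using hR.le)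
  rw [h0, zero_mul] at h1
  simp only [one_pow, mul_one] at h1
  have hs1 : ∑' n, (p n : ℂ) = 1 := by
    have := Complex.hasSum_ofReal.2 hsum
    simpa using this.tsum_eq
  rw [hs1] at h1
  have hS := (summable_pow hpn hRs (hz.trans hR.le)).of_norm
  have h2 : HasSum (fun n => (p n : ℂ) * z ^ n) 1 := by
    rw [← sub_eq_zero.1 h1.symm]; exact hS.hasSum
  have h3 : HasSum (fun n => p n * (z ^ n).re) 1 := by
    have := Complex.hasSum_re h2
    simpa using this
  have h4 := hsum.sub h3
  rw [sub_self] at h4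
  have hnn : ∀ n, 0 ≤ p n - p n * (z ^ n).re := by
    intro n
    have : (z ^ n).re ≤ 1 := (Complex.re_le_norm _).trans (by
      rw [norm_pow]; exact pow_le_one₀ (norm_nonneg _) hz)
    nlinarith [hp n]
  have h5 := (hasSum_zero_iff_of_nonneg hnn).1 h4
  have h6 := congrFun h5 1
  simp at h6
  have hre : z.re = 1 := by nlinarith
  have hz1 : z = 1 := by
    have h7 := Complex.sq_norm z
    rw [Complex.normSq_apply, hre] at h7
    have h8 : ‖z‖ ^ 2 ≤ 1 := pow_le_one₀ (norm_nonneg _) hz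
    have : z.im = 0 := by nlinarith
    exact Complex.ext (by simpa using hre) (by simpa using this)
  subst hz1
  have h9 : (∑' n, (p n : ℂ) * gs 1 1 n) = ((∑' n : ℕ, p n * n : ℝ) : ℂ) := by
    rw [Complex.ofReal_tsum]; congr 1; funext n; rw [gs_one]; push_cast; rfl
  rw [h9] at h0
  have h10 : ∑' n : ℕ, p n * n = 0 := by exact_mod_cast h0
  have hsn : Summable fun n : ℕ => p n * n := by
    refine Summable.of_nonneg_of_le (fun n => mul_nonneg (hp n) (by positivity)) (fun n => ?_) hRs'
    have : (1:ℝ) ≤ R ^ n := one_le_pow₀ hR.le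
    have h := hp n
    gcongr
    nlinarith [(Nat.cast_nonneg n : (0:ℝ) ≤ n)]
  have := hsn.le_tsum 1 (fun j _ => mul_nonneg (hp j) (by positivity))
  simp at this
  linarith

lemma Q0_cont (hp : ∀ n, 0 ≤ p n) {R : ℝ} (hR : 1 < R)
    (hRs' : Summable fun n => p n * (n * R ^ n)) :
    ContinuousOn (fun z => ∑' n, (p n : ℂ) * gs z 1 n) (Metric.closedBall 0 R) := by
  refine continuousOn_tsum (fun n => ?_) hRs' (fun n z hz => ?_)
  · unfold gs; fun_prop
  · rw [norm_mul]
    have := norm_gs_le (w := 1) hR.le (by simpa using hz) (by simpa using hR.le) n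
    have h := hp n
    simp only [Complex.norm_real, Real.norm_eq_abs, abs_of_nonneg h]
    gcongr

/-- lower bound -/
lemma Q0_lower (hp : ∀ n, 0 ≤ p n) (hsum : HasSum p 1) (hp1 : 0 < p 1)
    {R : ℝ} (hR : 1 < R)
    (hRs : Summable fun n => p n * R ^ n) (hRs' : Summable fun n => p n * (n * R ^ n)) :
    ∃ R' m : ℝ, 1 < R' ∧ R' < R ∧ 0 < m ∧
      ∀ z : ℂ, ‖z‖ ≤ R' → m ≤ ‖∑' n, (p n : ℂ) * gs z 1 n‖ := by
  set Q : ℂ → ℂ := fun z => ∑' n, (p n : ℂ) * gs z 1 n with hQ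
  have hc := Q0_cont hp hR hRs'
  have hopen : IsOpen (Metric.ball (0:ℂ) R ∩ Q ⁻¹' {0}ᶜ) :=
    (hc.mono Metric.ball_subset_closedBall).isOpen_inter_preimage Metric.isOpen_ball
      isOpen_compl_singleton
  have hsub : Metric.closedBall (0:ℂ) 1 ⊆ Metric.ball (0:ℂ) R ∩ Q ⁻¹' {0}ᶜ := by
    intro z hz
    have hz' : ‖z‖ ≤ 1 := by simpa using hz
    refine ⟨by simpa using hz'.trans_lt hR, ?_⟩
    exact Q0_ne hp hsum hp1 hR hRs hRs' hz'
  obtain ⟨δ, hδ, hδs⟩ := (isCompact_closedBall (0:ℂ) 1).exists_thickening_subset_open hopen hsub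
  rw [thickening_closedBall hδ zero_le_one] at hδs
  set R' := min (1 + δ / 2) ((1 + R) / 2) with hR'
  have h1 : 1 < R' := lt_min (by linarith) (by linarith)
  have h2 : R' < R := (min_le_right _ _).trans_lt (by linarith)
  have h3 : R' < δ + 1 := (min_le_left _ _).trans_lt (by linarith)
  have hcont : ContinuousOn (fun z => ‖Q z‖) (Metric.closedBall 0 R') :=
    (hc.mono (Metric.closedBall_subset_closedBall h2.le)).norm
  obtain ⟨x, hx, hmin⟩ := (isCompact_closedBall (0:ℂ) R').exists_isMinOn
    ⟨0, by simp; linarith⟩ hcont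
  refine ⟨R', ‖Q x‖, h1, h2, ?_, fun z hz => hmin (by simpa using hz)⟩
  have : x ∈ Metric.ball (0:ℂ) (δ + 1) := by
    have : ‖x‖ ≤ R' := by simpa using hx
    simpa using this.trans_lt h3
  exact norm_pos_iff.2 (hδs this).2

/-- uniform closeness -/
lemma Q_close (hp : ∀ n, 0 ≤ p n) {R : ℝ} (hR : 1 < R)
    (hRs : Summable fun n => p n * (n * (R * R) ^ n))
    {a : ℕ → ℕ → ℂ} (ha : ∀ L n, ‖a L n‖ ≤ p n)
    (hlim : ∀ n, Tendsto (fun L => a L n) atTop (𝓝 (p n))) {ε : ℝ} (hε : 0 < ε) :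
    ∃ r > 0, 1 + r ≤ R ∧ ∀ᶠ L in atTop, ∀ z w : ℂ, ‖z‖ ≤ R → ‖w - 1‖ ≤ r →
      ‖(∑' n, a L n * gs z w n) - ∑' n, (p n : ℂ) * gs z 1 n‖ ≤ ε := by
  have hR2 : Summable fun n => p n * (n * R ^ n) := by
    refine Summable.of_nonneg_of_le (fun n => mul_nonneg (hp n) (by positivity)) (fun n => ?_) hRs
    have := hp n
    gcongr
    nlinarith
  have t1 : Tendsto (fun L => ∑' n : ℕ, ‖a L n - p n‖ * (n * R ^ n)) atTop (𝓝 0) := by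
    have := tendsto_tsum_of_dominated_convergence (𝓕 := atTop)
      (f := fun L n => ‖a L n - p n‖ * (n * R ^ n)) (g := fun n : ℕ => (0:ℝ))
      (bound := fun n => 2 * (p n * (n * R ^ n))) (hR2.mul_left 2)
      (by
        intro n
        have := ((hlim n).sub_const (p n : ℂ)).norm.mul_const (n * R ^ n)
        simpa using this)
      (by
        refine Eventually.of_forall fun L n => ?_
        rw [Real.norm_of_nonneg (by positivity)]
        have h1 : ‖a L n - p n‖ ≤ 2 * p n := by
          refine (norm_sub_le _ _).trans ?_
          have := ha L n
          have h := hp n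
          simp only [Complex.norm_real, Real.norm_eq_abs, abs_of_nonneg h]
          linarith
        rw [← mul_assoc 2]
        gcongr)
    simpa using this
  have t2 : Tendsto (fun r : ℝ => ∑' n : ℕ, p n * (n * R ^ n * ((1 + r) ^ n - 1))) (𝓝[>] 0) (𝓝 0) := by
    have := tendsto_tsum_of_dominated_convergence (𝓕 := 𝓝[>] (0:ℝ))
      (f := fun r n => p n * (n * R ^ n * ((1 + r) ^ n - 1))) (g := fun n : ℕ => (0:ℝ))
      (bound := fun n => (p n * (n * (R * R) ^ n))) hRs
      (by
        intro n
        have : Continuous fun r : ℝ => p n * (n * R ^ n * ((1 + r) ^ n - 1)) := by fun_prop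
        have := (this.tendsto 0).mono_left (nhdsWithin_le_nhds (s := Set.Ioi 0))
        simpa using this)
      (by
        filter_upwards [Ioo_mem_nhdsGT (show (0:ℝ) < R - 1 by linarith)] with r hr n
        have h1 : (1:ℝ) ≤ (1 + r) ^ n := one_le_pow₀ (by linarith [hr.1])
        have h2 : (1 + r) ^ n ≤ R ^ n := pow_le_pow_left₀ (by linarith [hr.1]) (by linarith [hr.2]) n
        have h := hp n
        rw [Real.norm_of_nonneg (mul_nonneg h (mul_nonneg (by positivity) (by linarith)))]
        rw [mul_pow, ← mul_assoc (n:ℝ)]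
        gcongr
        linarith)
    simpa using this
  have t2' := (t2.eventually_lt_const (show 0 < ε / 2 by linarith)).and
    (Ioo_mem_nhdsGT (show (0:ℝ) < R - 1 by linarith))
  obtain ⟨r, hr1, hr2⟩ := t2'.exists
  refine ⟨r, hr2.1, by linarith [hr2.2], ?_⟩
  filter_upwards [t1.eventually_lt_const (show 0 < ε / 2 by linarith)] with L hL z w hz hw
  have hwR : ‖w‖ ≤ R := by
    calc ‖w‖ = ‖1 + (w - 1)‖ := by ring_nf
      _ ≤ ‖(1:ℂ)‖ + ‖w - 1‖ := norm_add_le _ _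
      _ ≤ R := by simp; linarith [hr2.2]
  have hpn : ∀ n, ‖(p n : ℂ)‖ ≤ p n := fun n => by simp [abs_of_nonneg (hp n)]
  have hs1 := summable_Q (ha L) hR.le hR2 hz hwR
  have hs2 := summable_Q hpn hR.le hR2 hz (w := 1) (by simpa using hR.le)
  rw [← Summable.tsum_sub hs1 hs2]
  have hsA : Summable fun n : ℕ => ‖a L n - p n‖ * (n * R ^ n) := by
    refine Summable.of_nonneg_of_le (fun n => by positivity) (fun n => ?_) (hR2.mul_left 2)
    have h1 : ‖a L n - p n‖ ≤ 2 * p n := by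
      refine (norm_sub_le _ _).trans ?_
      have := ha L n
      have h := hpn n
      linarith
    rw [← mul_assoc 2]
    gcongr
  have hsB : Summable fun n : ℕ => p n * (n * R ^ n * ((1 + r) ^ n - 1)) := by
    have h1 : ∀ n : ℕ, (1:ℝ) ≤ (1 + r) ^ n := fun n => one_le_pow₀ (by linarith [hr2.1])
    refine Summable.of_nonneg_of_le (fun n => mul_nonneg (hp n) (mul_nonneg (by positivity)
      (by linarith [h1 n]))) (fun n => ?_) hRs
    have h2 : (1 + r) ^ n ≤ R ^ n := pow_le_pow_left₀ (by linarith [hr2.1]) (by linarith [hr2.2]) n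
    have h := hp n
    rw [mul_pow, ← mul_assoc (n:ℝ)]
    gcongr
    linarith
  have hb := tsum_of_norm_bounded (hsA.hasSum.add hsB.hasSum)
    (f := fun n => a L n * gs z w n - (p n : ℂ) * gs z 1 n) (fun n => by
      have : a L n * gs z w n - (p n : ℂ) * gs z 1 n =
        (a L n - p n) * gs z w n + p n * (gs z w n - gs z 1 n) := by ring
      rw [this]
      refine (norm_add_le _ _).trans ?_
      rw [norm_mul, norm_mul]
      have g1 := norm_gs_le hR.le hz hwR n
      have g2 := norm_gs_sub_le hR.le hz hw n
      have g3 := hpn n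
      have := hp n
      gcongr)
  linarith

end PrudAux

end

section
open Filter Topology Finset

namespace PrudAux

variable {p : ℕ → ℝ}

lemma fixed_point {φ : ℂ → ℂ} {r : ℝ} (hr : 0 < r)
    (hφ : ∀ z w : ℂ, ‖z - 1‖ ≤ r → ‖w - 1‖ ≤ r → ‖φ z - φ w‖ ≤ 1 / 2 * ‖z - w‖)
    (h1 : ‖φ 1 - 1‖ ≤ r / 2) : ∃ z, ‖z - 1‖ ≤ r ∧ φ z = z := by
  have hmaps : Set.MapsTo φ (Metric.closedBall 1 r) (Metric.closedBall 1 r) := by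
    intro z hz
    have hz' : ‖z - 1‖ ≤ r := by simpa [dist_eq_norm] using hz
    have h2 := hφ z 1 hz' (by simpa using hr.le)
    have : ‖φ z - 1‖ ≤ r := by
      calc ‖φ z - 1‖ = ‖(φ z - φ 1) + (φ 1 - 1)‖ := by ring_nf
        _ ≤ ‖φ z - φ 1‖ + ‖φ 1 - 1‖ := norm_add_le _ _
        _ ≤ r := by linarith
    simpa [dist_eq_norm] using this
  have hc : ContractingWith (1/2) (hmaps.restrict φ _ _) := by
    refine ⟨by norm_num, LipschitzWith.of_dist_le_mul ?_⟩
    rintro ⟨z, hz⟩ ⟨w, hw⟩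
    have := hφ z w (by simpa [dist_eq_norm] using hz) (by simpa [dist_eq_norm] using hw)
    simpa [Subtype.dist_eq, dist_eq_norm] using this
  obtain ⟨y, hy, hfix, -⟩ := ContractingWith.exists_fixedPoint'
    Metric.isClosed_closedBall.isComplete hmaps hc
    (x := 1) (by simpa using hr.le) (edist_ne_top _ _)
  exact ⟨y, by simpa [dist_eq_norm] using hy, hfix⟩

lemma mu_eq (_hp : ∀ n, 0 ≤ p n) : ∑' n, (p n : ℂ) * gs 1 1 n = ((∑' n : ℕ, p n * n : ℝ) : ℂ) := by
  rw [Complex.ofReal_tsum]; congr 1; funext n; rw [gs_one]; push_cast; rfl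

theorem renewal_lim (hp0 : p 0 = 0) (hp : ∀ n, 0 ≤ p n) (hsum : HasSum p 1) (hp1 : 0 < p 1)
    {R₀ : ℝ} (hR₀ : 1 < R₀) (hRs₀ : Summable fun n => p n * R₀ ^ n)
    {a : ℕ → ℕ → ℂ} (ha : ∀ L n, ‖a L n‖ ≤ p n)
    (hlim : ∀ n, Tendsto (fun L => a L n) atTop (𝓝 (p n)))
    {κ : ℂ} (hκ : Tendsto (fun L : ℕ => (L : ℂ) * (1 - ∑' n, a L n)) atTop (𝓝 κ))
    {u : ℕ → ℕ → ℂ} (hu0 : ∀ L, u L 0 = 1)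
    (hu : ∀ L n, u L (n + 1) = ∑ k ∈ range (n + 1), a L (k + 1) * u L (n - k)) (j : ℕ) :
    Tendsto (fun L => u L (L - j)) atTop
      (𝓝 (Complex.exp (-κ / (∑' n : ℕ, p n * n : ℝ)) / (∑' n : ℕ, p n * n : ℝ))) := by
  -- choice of radii
  set R := Real.sqrt ((1 + R₀) / 2) with hRdef
  have hR2 : R * R = (1 + R₀) / 2 := Real.mul_self_sqrt (by linarith)
  have hR : 1 < R := by rw [hRdef]; apply Real.lt_sqrt_of_sq_lt; linarith
  have hRR : R * R < R₀ := by rw [hR2]; linarith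
  have hRlt : R < R₀ := by nlinarith
  have hs2 : Summable fun n : ℕ => p n * (n * (R * R) ^ n) :=
    summable_lemma hp (by positivity) hRR hRs₀
  have hs1 : Summable fun n : ℕ => p n * (n * R ^ n) :=
    summable_lemma hp (by positivity) hRlt hRs₀
  have hs0 : Summable fun n : ℕ => p n * R ^ n := by
    refine Summable.of_nonneg_of_le (fun n => mul_nonneg (hp n) (by positivity)) (fun n => ?_) hRs₀
    have := hp n
    gcongr
  have ha0 : ∀ L, a L 0 = 0 := fun L => by
    have := ha L 0
    rw [hp0] at this
    exact norm_le_zero_iff.1 this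
  set Q0 : ℂ → ℂ := fun z => ∑' n, (p n : ℂ) * gs z 1 n with hQ0
  set μ : ℝ := ∑' n : ℕ, p n * n with hμdef
  have hQ01 : Q0 1 = μ := mu_eq hp
  have hμ0 : 0 ≤ μ := tsum_nonneg fun n => mul_nonneg (hp n) (by positivity)
  have hμne : (μ : ℂ) ≠ 0 := by
    rw [← hQ01]; exact Q0_ne hp hsum hp1 hR hs0 hs1 (by simp)
  have hμ : 0 < μ := lt_of_le_of_ne hμ0 (fun h => hμne (by rw [← h]; simp))
  have hQc : ContinuousAt Q0 1 := by
    apply (Q0_cont hp hR hs1).continuousAt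
    apply Metric.closedBall_mem_nhds_of_mem
    simpa using hR
  set Q : ℕ → ℂ → ℂ → ℂ := fun L z w => ∑' n, a L n * gs z w n with hQdef
  set A : ℕ → ℂ → ℂ := fun L z => ∑' n, a L n * z ^ n with hA
  have hQm : ∀ L z w, ‖z‖ ≤ R → ‖w‖ ≤ R → Q L z w * (z - w) = A L z - A L w :=
    fun L z w hz hw => Q_mul (ha L) hs0 hz hw
  have hA1 : ∀ L, A L 1 = ∑' n, a L n := fun L => by simp [hA]
  have hδ : Tendsto (fun L => 1 - A L 1) atTop (𝓝 0) := by
    have h1 : Tendsto (fun L : ℕ => ((L : ℂ))⁻¹) atTop (𝓝 0) := tendsto_inv₀_cobounded.comp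
      (tendsto_natCast_atTop_cobounded)
    have h2 := h1.mul hκ
    rw [zero_mul] at h2
    refine h2.congr' ?_
    filter_upwards [eventually_ne_atTop 0] with L hL
    have : (L : ℂ) ≠ 0 := by exact_mod_cast hL
    rw [hA1]; field_simp
  have hball : ∀ {r : ℝ} {z : ℂ}, 1 + r ≤ R → ‖z - 1‖ ≤ r → ‖z‖ ≤ R := by
    intro r z hr hz
    calc ‖z‖ = ‖1 + (z - 1)‖ := by ring_nf
      _ ≤ ‖(1:ℂ)‖ + ‖z - 1‖ := norm_add_le _ _
      _ ≤ R := by simp; linarith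
  -- existence of the root
  have hroot : ∀ᶠ L in atTop, ∃ z : ℂ, ‖z - 1‖ ≤ 2 * ‖1 - A L 1‖ / μ ∧ A L z = 1 := by
    obtain ⟨r0, hr0, hr0R, hclose⟩ := Q_close hp hR hs2 ha hlim (show 0 < μ / 4 by linarith)
    obtain ⟨r1, hr1, hcl1⟩ := Metric.continuousAt_iff.1 hQc (μ / 4) (by linarith)
    have hev : ∀ᶠ L in atTop, ‖1 - A L 1‖ < μ * min r0 (r1 / 2) / 2 := by
      have := hδ.norm
      rw [norm_zero] at this
      exact this.eventually_lt_const (by positivity)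
    filter_upwards [hclose, hev] with L hL hL2
    set r := 2 * ‖1 - A L 1‖ / μ with hr
    by_cases hz0 : 1 - A L 1 = 0
    · exact ⟨1, by rw [hr, hz0]; simp, by linear_combination -hz0⟩
    have hrpos : 0 < r := by
      have := norm_pos_iff.2 hz0
      positivity
    have hrm : r < min r0 (r1 / 2) := by
      rw [hr, div_lt_iff₀ hμ]; linarith
    have hrr0 : r < r0 := hrm.trans_le (min_le_left _ _)
    have hrr1 : r < r1 := by linarith [hrm.trans_le (min_le_right _ _)]
    obtain ⟨z, hz, hfix⟩ := fixed_point (φ := fun z => z - (A L z - 1) / μ) hrpos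
      (by
        intro z w hz hw
        have hzR := hball (by linarith) hz
        have hwR := hball (by linarith) hw
        have e1 := hQm L z w hzR hwR
        have e2 : (z - (A L z - 1) / μ) - (w - (A L w - 1) / μ) = ((μ - Q L z w) / μ) * (z - w) := by
          have : A L z = Q L z w * (z - w) + A L w := by linear_combination -e1
          rw [this]; field_simp; ring
        rw [e2, norm_mul]
        gcongr
        rw [norm_div, Complex.norm_real, Real.norm_of_nonneg hμ.le, div_le_iff₀ hμ]
        have e3 := hL z w hzR (by linarith)
        have e4 := hcl1 (show dist z 1 < r1 by rw [dist_eq_norm]; linarith)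
        rw [hQ01, dist_eq_norm] at e4
        calc ‖(μ : ℂ) - Q L z w‖ = ‖(Q L z w - Q0 z) + (Q0 z - μ)‖ := by
              rw [← norm_neg]; ring_nf
          _ ≤ μ / 4 + μ / 4 := (norm_add_le _ _).trans (add_le_add e3 e4.le)
          _ = 1 / 2 * μ := by ring)
      (by
        have : (1:ℂ) - (A L 1 - 1) / μ - 1 = (1 - A L 1) / μ := by ring
        rw [this, norm_div, Complex.norm_real, Real.norm_of_nonneg hμ.le, hr]
        apply le_of_eq; ring)
    refine ⟨z, hz, ?_⟩
    have : (A L z - 1) / μ = 0 := by linear_combination -hfix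
    rw [div_eq_zero_iff] at this
    rcases this with h | h
    · linear_combination h
    · exact absurd h hμne
  choose! zz hzz using fun L => (Classical.em (∃ z : ℂ, ‖z - 1‖ ≤ 2 * ‖1 - A L 1‖ / μ ∧ A L z = 1)).elim
    (fun h => ⟨h.choose, fun _ => h.choose_spec⟩)
    (fun h => (⟨1, fun h' => absurd h' h⟩ : ∃ z : ℂ, (∃ z : ℂ, ‖z - 1‖ ≤ 2 * ‖1 - A L 1‖ / μ ∧ A L z = 1) →
      ‖z - 1‖ ≤ 2 * ‖1 - A L 1‖ / μ ∧ A L z = 1))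
  replace hzz : ∀ᶠ L in atTop, ‖zz L - 1‖ ≤ 2 * ‖1 - A L 1‖ / μ ∧ A L (zz L) = 1 := by
    filter_upwards [hroot] with L hL
    exact hzz L hL
  have hz1 : Tendsto zz atTop (𝓝 1) := by
    rw [tendsto_iff_norm_sub_tendsto_zero]
    have h2 : Tendsto (fun L => 2 * ‖1 - A L 1‖ / μ) atTop (𝓝 0) := by
      simpa using (hδ.norm.const_mul 2).div_const μ
    exact squeeze_zero' (Eventually.of_forall fun _ => norm_nonneg _)
      (hzz.mono fun L hL => hL.1) h2
  -- convergence of Q along sequences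
  have hQconv : ∀ {w z : ℕ → ℂ}, Tendsto z atTop (𝓝 1) → Tendsto w atTop (𝓝 1) →
      Tendsto (fun L => Q L (z L) (w L)) atTop (𝓝 μ) := by
    intro w z hz hw
    have h1 : Tendsto (fun L => Q0 (z L)) atTop (𝓝 μ) := by
      rw [← hQ01]; exact hQc.tendsto.comp hz
    have h2 : Tendsto (fun L => Q L (z L) (w L) - Q0 (z L)) atTop (𝓝 0) := by
      rw [tendsto_zero_iff_norm_tendsto_zero, Metric.tendsto_atTop']
      intro ε hε
      obtain ⟨r0, hr0, hr0R, hclose⟩ := Q_close hp hR hs2 ha hlim (show 0 < ε / 2 by linarith)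
      have hz' : ∀ᶠ L in atTop, ‖z L - 1‖ < r0 :=
        (tendsto_iff_norm_sub_tendsto_zero.1 hz).eventually_lt_const hr0
      have hw' : ∀ᶠ L in atTop, ‖w L - 1‖ < r0 :=
        (tendsto_iff_norm_sub_tendsto_zero.1 hw).eventually_lt_const hr0
      have := hclose.and (hz'.and hw')
      obtain ⟨N, hN⟩ := eventually_atTop.1 this
      refine ⟨N, fun n hn => ?_⟩
      obtain ⟨h1, h2, h3⟩ := hN n hn.le
      have := h1 (z n) (w n) (hball hr0R h2.le) h3.le
      rw [Real.dist_eq, sub_zero, abs_of_nonneg (norm_nonneg _)]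
      exact lt_of_le_of_lt this (by linarith)
    simpa using h2.add h1
  have hzL : Tendsto (fun L : ℕ => (L : ℂ) * (zz L - 1)) atTop (𝓝 (κ / μ)) := by
    have h1 := hQconv hz1 (tendsto_const_nhds (x := (1:ℂ)))
    have h2 := hκ.div h1 hμne
    refine h2.congr' ?_
    have hne : ∀ᶠ L in atTop, Q L (zz L) 1 ≠ 0 := h1.eventually_ne hμne
    have hzR : ∀ᶠ L in atTop, ‖zz L‖ < R := by
      have := hz1.norm
      rw [norm_one] at this
      exact this.eventually_lt_const hR
    filter_upwards [hne, hzz, hzR] with L h3 h4 h5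
    have h6 := hQm L (zz L) 1 h5.le (by simpa using hR.le)
    rw [h4.2, hA1] at h6
    simp only [Pi.div_apply]
    rw [← h6]; field_simp
  have hzpow : Tendsto (fun L => zz L ^ (L + 1)) atTop (𝓝 (Complex.exp (κ / μ))) := by
    have h1 := Complex.tendsto_one_add_pow_exp_of_tendsto hzL
    have h2 := h1.mul hz1
    simp only [add_sub_cancel, mul_one] at h2
    exact h2.congr fun L => (pow_succ _ _).symm
  -- lower bound
  obtain ⟨R', m, hR'1, hR'R, hm, hlow⟩ := Q0_lower hp hsum hp1 hR hs0 hs1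
  obtain ⟨r0, hr0, hr0R, hclose⟩ := Q_close hp hR hs2 ha hlim (show 0 < m / 2 by linarith)
  set q := (1 + R'⁻¹) / 2 with hq
  have hR'inv : R'⁻¹ < 1 := inv_lt_one_of_one_lt₀ hR'1
  have hR'inv0 : 0 < R'⁻¹ := inv_pos.2 (by linarith)
  have hq1 : q < 1 := by linarith
  have hq0 : 0 ≤ q := by linarith
  have hqR : 1 < q * R' := by
    have : q * R' = (R' + 1) / 2 := by rw [hq]; field_simp
    rw [this]; linarith
  have hbound : ∀ᶠ L in atTop, ∀ n, ‖zz L ^ (n + 1) * u L n - (Q L (zz L) (zz L))⁻¹‖ ≤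
      (m / 2)⁻¹ * q ^ (n + 1) / (1 - q) := by
    have hz' : ∀ᶠ L in atTop, ‖zz L - 1‖ < r0 :=
        (tendsto_iff_norm_sub_tendsto_zero.1 hz1).eventually_lt_const hr0
    have hzR : ∀ᶠ L in atTop, ‖zz L‖ < q * R' := by
      have := hz1.norm
      rw [norm_one] at this
      exact this.eventually_lt_const hqR
    filter_upwards [hz', hzR, hzz, hclose] with L h1 h2 h3 h4 n
    refine single (ha L) (ha0 L) hR'1 hR'R hs0 hs1 hq0 hq1 h2.le h3.2 (by linarith) ?_ (hu0 L)
      (hu L) n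
    intro z hz
    have h5 := h4 z (zz L) (by linarith) h1.le
    have h6 := hlow z hz
    have h7 := norm_sub_norm_le (∑' n, (p n : ℂ) * gs z 1 n) (∑' n, a L n * gs z (zz L) n)
    rw [norm_sub_rev] at h7
    linarith
  have hsub : Tendsto (fun L : ℕ => L - j) atTop atTop := tendsto_sub_atTop_nat j
  have hmain : Tendsto (fun L => zz L ^ (L - j + 1) * u L (L - j)) atTop (𝓝 (μ : ℂ)⁻¹) := by
    have h1 := (hQconv hz1 hz1).inv₀ hμne
    have h2 : Tendsto (fun L => zz L ^ (L - j + 1) * u L (L - j) - (Q L (zz L) (zz L))⁻¹) atTop (𝓝 0) := by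
      rw [tendsto_zero_iff_norm_tendsto_zero]
      have h3 : Tendsto (fun n : ℕ => (m / 2)⁻¹ * q ^ (n + 1) / (1 - q)) atTop (𝓝 0) := by
        have := ((tendsto_pow_atTop_nhds_zero_of_lt_one hq0 hq1).comp (tendsto_add_atTop_nat 1))
        simpa using (this.const_mul (m / 2)⁻¹).div_const (1 - q)
      exact squeeze_zero' (Eventually.of_forall fun _ => norm_nonneg _)
        (hbound.mono fun L hL => hL (L - j)) (h3.comp hsub)
    simpa using h2.add h1
  have hzj : Tendsto (fun L => zz L ^ (L - j + 1)) atTop (𝓝 (Complex.exp (κ / μ))) := by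
    have h1 := hzpow.div (hz1.pow j) (by simp)
    rw [one_pow, div_one] at h1
    refine h1.congr' ?_
    filter_upwards [eventually_ge_atTop j, hz1.eventually_ne one_ne_zero] with L hL hne
    simp only [Pi.div_apply]
    rw [div_eq_iff (pow_ne_zero _ hne), ← pow_add]
    congr 1; omega
  have hfin := hmain.div hzj (Complex.exp_ne_zero _)
  have e : (μ : ℂ)⁻¹ / Complex.exp (κ / μ) = Complex.exp (-κ / μ) / μ := by
    rw [neg_div, Complex.exp_neg]; field_simp
  rw [e] at hfin
  refine hfin.congr' ?_
  filter_upwards [hz1.eventually_ne one_ne_zero] with L hne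
  simp only [Pi.div_apply]
  have := pow_ne_zero (L - j + 1) hne
  field_simp

end PrudAux

end

section
open Filter Set
open Matrix MeasureTheory

namespace PrudAux

open Topology in
lemma gaussDensity_formula {a b : ℝ} (hab : |b| < a) (x y : ℝ) :
    gaussDensity2 !![a, b; b, a] (x, y) = (2 * Real.pi * Real.sqrt (a ^ 2 - b ^ 2))⁻¹ *
      Real.exp (-(a * x ^ 2 - 2 * b * x * y + a * y ^ 2) / (2 * (a ^ 2 - b ^ 2))) := by
  have h1 : -a < b := neg_lt_of_abs_lt hab
  have h2 : b < a := lt_of_abs_lt hab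
  have hD : 0 < a ^ 2 - b ^ 2 := by nlinarith
  unfold gaussDensity2
  have hdet : Matrix.det !![a, b; b, a] = a ^ 2 - b ^ 2 := by
    rw [Matrix.det_fin_two_of]; ring
  rw [hdet]
  congr 2
  rw [Matrix.inv_def, hdet, Matrix.adjugate_fin_two_of, Ring.inverse_eq_inv']
  simp [dotProduct, Matrix.mulVec, Fin.sum_univ_two]
  field_simp
  ring

lemma quad_lower {a b : ℝ} (hab : |b| < a) (x y : ℝ) :
    (x ^ 2 + y ^ 2) * (2 * (a + |b|))⁻¹ ≤
      (a * x ^ 2 - 2 * b * x * y + a * y ^ 2) / (2 * (a ^ 2 - b ^ 2)) := by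
  have hb0 := abs_nonneg b
  have hD : a ^ 2 - b ^ 2 = (a - |b|) * (a + |b|) := by
    have := sq_abs b
    nlinarith
  have h1 : 0 < a - |b| := by linarith
  have h2 : 0 < a + |b| := by linarith
  rw [hD, le_div_iff₀ (by positivity)]
  have : (x ^ 2 + y ^ 2) * (2 * (a + |b|))⁻¹ * (2 * ((a - |b|) * (a + |b|))) =
    (x ^ 2 + y ^ 2) * (a - |b|) := by field_simp
  rw [this]
  have h3 : 2 * (b * x * y) ≤ |b| * (x ^ 2 + y ^ 2) := by
    have : b * x * y ≤ |b| * (|x| * |y|) := by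
      rw [← abs_mul, ← abs_mul, ← mul_assoc]; exact le_abs_self _
    nlinarith [sq_nonneg (|x| - |y|), sq_abs x, sq_abs y]
  nlinarith

lemma gauss_integrable {a b : ℝ} (hab : |b| < a) :
    Integrable (fun v : ℝ × ℝ => gaussDensity2 !![a, b; b, a] v) := by
  have hb0 := abs_nonneg b
  have hs : 0 < a + |b| := by linarith
  have hk : 0 < (2 * (a + |b|))⁻¹ := by positivity
  have h1 := integrable_exp_neg_mul_sq hk
  have h2 := (h1.mul_prod h1).const_mul (2 * Real.pi * Real.sqrt (a ^ 2 - b ^ 2))⁻¹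
  have e : (fun v : ℝ × ℝ => gaussDensity2 !![a, b; b, a] v) = fun v =>
    (2 * Real.pi * Real.sqrt (a ^ 2 - b ^ 2))⁻¹ *
      Real.exp (-(a * v.1 ^ 2 - 2 * b * v.1 * v.2 + a * v.2 ^ 2) / (2 * (a ^ 2 - b ^ 2))) := by
    funext v; exact gaussDensity_formula hab v.1 v.2
  rw [e]
  refine h2.mono' (by fun_prop) (Eventually.of_forall fun v => ?_)
  rw [Real.norm_of_nonneg (by positivity)]
  gcongr
  rw [← Real.exp_add]
  gcongr
  have := quad_lower hab v.1 v.2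
  rw [neg_div]
  linarith

lemma gauss_fourier {a b : ℝ} (hab : |b| < a) (s t : ℝ) :
    ∫ v : ℝ × ℝ, (gaussDensity2 !![a, b; b, a] v : ℂ) *
      Complex.exp (Complex.I * (s * v.1 + t * v.2)) =
    Complex.exp (-(1 / 2) * (a * s ^ 2 + 2 * b * s * t + a * t ^ 2)) := by
  have hb0 := abs_nonneg b
  have ha : 0 < a := by linarith
  have h1 : -a < b := neg_lt_of_abs_lt hab
  have h2 : b < a := lt_of_abs_lt hab
  set D := a ^ 2 - b ^ 2 with hDdef
  have hD : 0 < D := by nlinarith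
  have haC : (a : ℂ) ≠ 0 := by exact_mod_cast ha.ne'
  have hDC : (D : ℂ) ≠ 0 := by exact_mod_cast hD.ne'
  have hDe : (D : ℂ) = (a : ℂ) ^ 2 - (b : ℂ) ^ 2 := by rw [hDdef]; push_cast; ring
  set K : ℂ := (((2 * Real.pi * Real.sqrt D)⁻¹ : ℝ) : ℂ) with hK
  have hInt : Integrable (fun v : ℝ × ℝ => (gaussDensity2 !![a, b; b, a] v : ℂ) *
      Complex.exp (Complex.I * (s * v.1 + t * v.2))) := by
    refine (gauss_integrable hab).ofReal.mul_bdd (c := 1) ?_ ?_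
    · exact (by fun_prop : Continuous fun v : ℝ × ℝ =>
        Complex.exp (Complex.I * (s * v.1 + t * v.2))).aestronglyMeasurable
    · refine Eventually.of_forall fun v => ?_
      rw [Complex.norm_exp]
      simp
  rw [Measure.volume_eq_prod] at hInt ⊢
  rw [integral_prod _ hInt]
  have hinner : ∀ x : ℝ, ∫ y : ℝ, (gaussDensity2 !![a, b; b, a] (x, y) : ℂ) *
      Complex.exp (Complex.I * (s * x + t * y)) =
      K * ((Real.sqrt (2 * Real.pi * D / a) : ℝ) : ℂ) *
        Complex.exp ((-1 / (2 * a)) * x ^ 2 + (Complex.I * (s + b * t / a)) * x +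
          (-D * t ^ 2 / (2 * a))) := by
    intro x
    have e : ∀ y : ℝ, (gaussDensity2 !![a, b; b, a] (x, y) : ℂ) *
      Complex.exp (Complex.I * (s * x + t * y)) = K *
      Complex.exp ((-(a / (2 * D) : ℝ) : ℂ) * y ^ 2 + (b * x / D + Complex.I * t) * y +
        (-(a / (2 * D)) * x ^ 2 + Complex.I * s * x)) := by
      intro y
      rw [gaussDensity_formula hab]
      rw [Complex.ofReal_mul, ← hK, mul_assoc, Complex.ofReal_exp, ← Complex.exp_add]
      congr 2
      rw [← hDdef]
      push_cast
      field_simp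
      ring
    simp_rw [e]
    rw [integral_const_mul, integral_cexp_quadratic, mul_assoc K]
    · congr 1
      congr 1
      · rw [neg_neg, Real.sqrt_eq_rpow, Complex.ofReal_cpow (by positivity)]
        congr 1
        · push_cast; field_simp
        · push_cast; rfl
      · congr 1
        push_cast
        rw [hDe] at hDC ⊢
        field_simp
        ring_nf
        rw [Complex.I_sq]
        ring
    · simp only [Complex.neg_re, Complex.ofReal_re]
      have : 0 < a / (2 * D) := by positivity
      linarith
  simp only [hinner]
  rw [integral_const_mul, integral_cexp_quadratic]
  · rw [← mul_assoc]
    have hc : K * ((Real.sqrt (2 * Real.pi * D / a) : ℝ) : ℂ) *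
      (Real.pi / -(-1 / (2 * a)) : ℂ) ^ (1 / 2 : ℂ) = 1 := by
      have e1 : (Real.pi / -(-1 / (2 * a)) : ℂ) ^ (1 / 2 : ℂ) =
          ((Real.sqrt (2 * Real.pi * a) : ℝ) : ℂ) := by
        rw [Real.sqrt_eq_rpow, Complex.ofReal_cpow (by positivity)]
        congr 1
        · push_cast; field_simp
        · push_cast; rfl
      rw [e1, hK, ← Complex.ofReal_mul, ← Complex.ofReal_mul]
      norm_cast
      rw [mul_assoc, ← Real.sqrt_mul (by positivity)]
      have e2 : 2 * Real.pi * D / a * (2 * Real.pi * a) = (2 * Real.pi) ^ 2 * D := by field_simp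
      rw [e2, Real.sqrt_mul (by positivity), Real.sqrt_sq (by positivity)]
      have : 0 < Real.sqrt D := Real.sqrt_pos.2 hD
      field_simp
    rw [hc, one_mul]
    congr 1
    rw [hDe]
    field_simp
    ring_nf
    rw [Complex.I_sq]
    ring
  · have : ((-1 / (2 * a) : ℂ)).re = -(1 / (2 * a)) := by
      have : (-1 / (2 * a) : ℂ) = ((-(1 / (2 * a)) : ℝ) : ℂ) := by push_cast; ring
      rw [this, Complex.ofReal_re]
    rw [this]
    have : 0 < 1 / (2 * a) := by positivity
    linarith

end PrudAux

end

section
open Filter Set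
open Matrix MeasureTheory

namespace PrudAux

noncomputable def toE (v : ℝ × ℝ) : EuclideanSpace ℝ (Fin 2) := !₂[v.1, v.2]

lemma toE_cont : Continuous toE := by
  unfold toE
  refine (PiLp.continuous_toLp 2 _).comp ?_
  refine continuous_pi fun i => ?_
  fin_cases i
  · exact continuous_fst
  · exact continuous_snd

lemma toE_inner (v : ℝ × ℝ) (u : EuclideanSpace ℝ (Fin 2)) :
    inner ℝ (toE v) u = u 0 * v.1 + u 1 * v.2 := by
  simp [toE, PiLp.inner_apply, Fin.sum_univ_two]

noncomputable def empM {ι : Type*} (T : Finset ι) (X : ι → ℝ × ℝ) :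
    Measure (EuclideanSpace ℝ (Fin 2)) := by
  classical
  exact if T.card = 0 then Measure.dirac 0 else
    ∑ π ∈ T, ENNReal.ofReal ((T.card : ℝ)⁻¹) • Measure.dirac (toE (X π))

instance empM_prob {ι : Type*} (T : Finset ι) (X : ι → ℝ × ℝ) :
    IsProbabilityMeasure (empM T X) := by
  unfold empM
  split_ifs with h
  · infer_instance
  · constructor
    simp only [Measure.coe_finset_sum, Finset.sum_apply, Measure.smul_apply, measure_univ,
      smul_eq_mul, mul_one, Finset.sum_const, nsmul_eq_mul]
    have hc : (0 : ℝ) < T.card := by exact_mod_cast Nat.pos_of_ne_zero h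
    rw [ENNReal.ofReal_inv_of_pos hc, ENNReal.ofReal_natCast]
    exact ENNReal.mul_inv_cancel (by exact_mod_cast h) (by simp)

lemma empM_integral {ι : Type*} (T : Finset ι) (X : ι → ℝ × ℝ) (h : T.card ≠ 0)
    {F : Type*} [NormedAddCommGroup F] [NormedSpace ℝ F] [CompleteSpace F]
    (g : EuclideanSpace ℝ (Fin 2) → F) :
    ∫ x, g x ∂(empM T X) = ((T.card : ℝ)⁻¹) • ∑ π ∈ T, g (toE (X π)) := by
  unfold empM
  rw [if_neg h, integral_finset_sum_measure, Finset.smul_sum]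
  · refine Finset.sum_congr rfl fun π _ => ?_
    rw [integral_smul_measure, integral_dirac, ENNReal.toReal_ofReal (by positivity)]
  · intro π _
    exact (integrable_dirac (by simp)).smul_measure (by simp)

noncomputable def gM (S : Matrix (Fin 2) (Fin 2) ℝ) : Measure (EuclideanSpace ℝ (Fin 2)) :=
  ((volume : Measure (ℝ × ℝ)).withDensity fun v => ENNReal.ofReal (gaussDensity2 S v)).map toE

lemma gaussDensity_nonneg (S : Matrix (Fin 2) (Fin 2) ℝ) (v) : 0 ≤ gaussDensity2 S v := by
  unfold gaussDensity2; positivity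

lemma gaussDensity_cont (S : Matrix (Fin 2) (Fin 2) ℝ) : Continuous (gaussDensity2 S) := by
  unfold gaussDensity2
  simp only [dotProduct, Matrix.mulVec, Fin.sum_univ_two]
  simp
  fun_prop

lemma gM_integral (S : Matrix (Fin 2) (Fin 2) ℝ)
    {F : Type*} [NormedAddCommGroup F] [NormedSpace ℝ F] 
    {g : EuclideanSpace ℝ (Fin 2) → F} (hg : Continuous g) [SecondCountableTopology F] :
    ∫ x, g x ∂(gM S) = ∫ v, gaussDensity2 S v • g (toE v) := by
  unfold gM
  rw [integral_map toE_cont.aemeasurable]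
  · rw [integral_withDensity_eq_integral_toReal_smul]
    · simp only [ENNReal.toReal_ofReal (gaussDensity_nonneg S _)]
    · exact (gaussDensity_cont S).measurable.ennreal_ofReal
    · exact Eventually.of_forall fun v => ENNReal.ofReal_lt_top
  · exact hg.aestronglyMeasurable

lemma gM_prob {a b : ℝ} (hab : |b| < a) : IsProbabilityMeasure (gM !![a, b; b, a]) := by
  unfold gM
  have h : IsProbabilityMeasure ((volume : Measure (ℝ × ℝ)).withDensity
      fun v => ENNReal.ofReal (gaussDensity2 !![a, b; b, a] v)) := by
    constructor
    rw [withDensity_apply _ MeasurableSet.univ, Measure.restrict_univ,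
      ← ofReal_integral_eq_lintegral_ofReal (gauss_integrable hab)
        (Eventually.of_forall fun v => gaussDensity_nonneg _ v)]
    have := gauss_fourier hab 0 0
    simp at this
    rw [integral_complex_ofReal] at this
    have h2 : ∫ v : ℝ × ℝ, gaussDensity2 !![a, b; b, a] v = 1 := by exact_mod_cast this
    rw [h2]; simp
  exact Measure.isProbabilityMeasure_map toE_cont.aemeasurable

open Topology in
theorem levy_transfer {a b : ℝ} (hab : |b| < a) {ι : ℕ → Type} (T : ∀ L, Finset (ι L))
    (X : ∀ L, ι L → ℝ × ℝ)
    (h : ∀ s t : ℝ, Tendsto (fun L => (∑ π ∈ T L, Complex.exp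
      (Complex.I * (s * (X L π).1 + t * (X L π).2))) / ((T L).card : ℂ)) atTop
      (𝓝 (Complex.exp (-(1 / 2) * (a * s ^ 2 + 2 * b * s * t + a * t ^ 2)))))
    {f : ℝ × ℝ → ℝ} (hf : Continuous f) {M : ℝ} (hM : ∀ x, |f x| ≤ M) :
    Tendsto (fun L => (∑ π ∈ T L, f (X L π)) / ((T L).card : ℝ)) atTop
      (𝓝 (∫ x : ℝ × ℝ, f x * gaussDensity2 !![a, b; b, a] x)) := by
  have hcard : ∀ᶠ L in atTop, (T L).card ≠ 0 := by
    have h0 := h 0 0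
    simp at h0
    have := h0.eventually_ne (one_ne_zero)
    filter_upwards [this] with L hL hc
    rw [hc] at hL
    simp at hL
  haveI := gM_prob hab
  set P : ℕ → ProbabilityMeasure (EuclideanSpace ℝ (Fin 2)) := fun L => ⟨empM (T L) (X L), inferInstance⟩
  set P0 : ProbabilityMeasure (EuclideanSpace ℝ (Fin 2)) := ⟨gM !![a, b; b, a], inferInstance⟩
  have key : Tendsto P atTop (𝓝 P0) := by
    rw [ProbabilityMeasure.tendsto_iff_tendsto_charFun]
    intro u
    have e0 : charFun (P0 : Measure _) u =
        Complex.exp (-(1 / 2) * (a * (u 0) ^ 2 + 2 * b * (u 0) * (u 1) + a * (u 1) ^ 2)) := by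
      rw [charFun_apply]
      change ∫ x, _ ∂(gM _) = _
      rw [gM_integral _ (by fun_prop), ← gauss_fourier hab]
      congr 1
      funext v
      rw [toE_inner, Complex.real_smul]
      congr 2
      push_cast
      ring
    rw [e0]
    refine (h (u 0) (u 1)).congr' ?_
    filter_upwards [hcard] with L hL
    rw [charFun_apply]
    change _ = ∫ x, _ ∂(empM _ _)
    rw [empM_integral _ _ hL, div_eq_inv_mul, Complex.real_smul]
    push_cast
    congr 1
    refine Finset.sum_congr rfl fun π _ => ?_
    rw [toE_inner]
    congr 1
    push_cast
    ring
  rw [ProbabilityMeasure.tendsto_iff_forall_integral_tendsto] at key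
  have hg : Continuous fun x : EuclideanSpace ℝ (Fin 2) => f (x 0, x 1) := by
    refine hf.comp ?_
    fun_prop
  have := key (BoundedContinuousFunction.ofNormedAddCommGroup
    (fun x : EuclideanSpace ℝ (Fin 2) => f (x 0, x 1)) hg M (fun x => hM _))
  have e0 : ∫ x, f (x 0, x 1) ∂(gM !![a, b; b, a]) =
      ∫ x : ℝ × ℝ, f x * gaussDensity2 !![a, b; b, a] x := by
    rw [gM_integral _ hg]
    congr 1
    funext v
    rw [smul_eq_mul, mul_comm]
    simp [toE]
  rw [← e0]
  refine this.congr' ?_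
  filter_upwards [hcard] with L hL
  change ∫ x, f (x 0, x 1) ∂(empM _ _) = _
  rw [empM_integral _ _ hL, div_eq_inv_mul, smul_eq_mul]
  simp [toE]

end PrudAux

end

section
open Filter Set
open Matrix MeasureTheory

namespace PrudAux

/-- the states of the automaton; `N d`, `A d` have depth `d` and `W d` has depth `d + 1` -/
inductive St
  | N (d : ℕ)
  | A (d : ℕ)
  | W (d : ℕ)

def ZZ (n : ℕ) : St → ℂ → ℂ → ℂ :=
  match n with
  | 0 => fun q _ _ => match q with
    | St.N 0 => 1
    | St.A 0 => 1
    | _ => 0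
  | n + 1 => fun q x y => match q with
    | St.N 0 => y * ZZ n (St.N 0) x y + x * ZZ n (St.N 0) y x + ZZ n (St.W 0) x y
    | St.N (d + 1) => y * ZZ n (St.N (d + 1)) x y + ZZ n (St.W (d + 1)) x y + ZZ n (St.A d) x y
    | St.A 0 => y * ZZ n (St.N 0) x y + x * ZZ n (St.N 0) y x
    | St.A (d + 1) => y * ZZ n (St.N (d + 1)) x y + ZZ n (St.A d) x y
    | St.W d => y * ZZ n (St.N (d + 1)) x y + ZZ n (St.W (d + 1)) x y

def OK (V : Set (ℤ × ℤ)) (p s : ℤ × ℤ) : Prop := ∀ k : ℕ, 1 ≤ k → p + (k : ℤ) • s ∉ V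

def Corner (V : Set (ℤ × ℤ)) (p : ℤ × ℤ) : Prop := ∀ q ∈ V, q.1 ≤ p.1 ∧ q.2 ≤ p.2

open Classical in
noncomputable def cnt : ℕ → Set (ℤ × ℤ) → ℤ × ℤ → ℂ → ℂ → ℂ
  | 0, V, p, x, y => if Corner V p then x ^ p.1 * y ^ p.2 else 0
  | n + 1, V, p, x, y =>
    (if OK V p (0, 1) then cnt n (insert (p + (0, 1)) V) (p + (0, 1)) x y else 0) +
    (if OK V p (1, 0) then cnt n (insert (p + (1, 0)) V) (p + (1, 0)) x y else 0) +
    (if OK V p (-1, 0) then cnt n (insert (p + (-1, 0)) V) (p + (-1, 0)) x y else 0) +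
    (if OK V p (0, -1) then cnt n (insert (p + (0, -1)) V) (p + (0, -1)) x y else 0)

def sw (V : Set (ℤ × ℤ)) : Set (ℤ × ℤ) := {p | (p.2, p.1) ∈ V}

lemma OK_sw (V : Set (ℤ × ℤ)) (p s : ℤ × ℤ) : OK (sw V) p s ↔ OK V (p.2, p.1) (s.2, s.1) := by
  simp [OK, sw]

lemma sw_insert (V : Set (ℤ × ℤ)) (p : ℤ × ℤ) : sw (insert p V) = insert (p.2, p.1) (sw V) := by
  ext q
  simp only [sw, mem_insert_iff, mem_ofPred_eq, Prod.ext_iff]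
  tauto

open Classical in
lemma cnt_sw (n : ℕ) : ∀ V p x y, cnt n V p x y = cnt n (sw V) (p.2, p.1) y x := by
  induction n with
  | zero =>
    intro V p x y
    have : Corner (sw V) (p.2, p.1) ↔ Corner V p := by
      simp only [Corner, sw, mem_ofPred_eq, Prod.forall]
      constructor
      · intro h a b hab; exact (h b a hab).symm
      · intro h a b hab; exact (h b a hab).symm
    simp only [cnt]
    rw [if_congr this rfl rfl, mul_comm]
  | succ n ih =>
    intro V p x y
    have h1 : OK (sw V) (p.2, p.1) (0, 1) ↔ OK V p (1, 0) := OK_sw _ _ _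
    have h2 : OK (sw V) (p.2, p.1) (1, 0) ↔ OK V p (0, 1) := OK_sw _ _ _
    have h3 : OK (sw V) (p.2, p.1) (0, -1) ↔ OK V p (-1, 0) := OK_sw _ _ _
    have h4 : OK (sw V) (p.2, p.1) (-1, 0) ↔ OK V p (0, -1) := OK_sw _ _ _
    simp only [cnt]
    rw [if_congr h1 rfl rfl, if_congr h2 rfl rfl, if_congr h3 rfl rfl, if_congr h4 rfl rfl]
    rw [ih (insert (p + (0, 1)) V), ih (insert (p + (1, 0)) V), ih (insert (p + (-1, 0)) V),
      ih (insert (p + (0, -1)) V)]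
    simp only [sw_insert, Prod.fst_add, Prod.snd_add, Prod.mk_add_mk]
    ring

/-- common invariant -/
structure InvC (V : Set (ℤ × ℤ)) (X Y : ℤ) : Prop where
  bd : ∀ a b, (a, b) ∈ V → a ≤ X ∧ b ≤ Y
  rows : ∀ b, b ≤ Y → ∃ a, (a, b) ∈ V
  cols : ∀ a, a ≤ X → ∃ b, b < Y ∧ (a, b) ∈ V

def posOf (q : St) (X Y : ℤ) : ℤ × ℤ := match q with
  | St.N d => (X - d, Y)
  | St.A d => (X - d, Y)
  | St.W d => (X - d - 1, Y)

def Inv (q : St) (V : Set (ℤ × ℤ)) (X Y : ℤ) : Prop :=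
  InvC V X Y ∧ posOf q X Y ∈ V ∧ match q with
  | St.N d => ∀ a, (a, Y) ∈ V → a = X - d
  | St.A d => (∀ a, (a, Y) ∈ V → a ≤ X - d) ∧ (X - d - 1, Y) ∈ V
  | St.W d => (∀ a, (a, Y) ∈ V → X - d - 1 ≤ a) ∧ (X - d, Y) ∈ V

lemma okN {V X Y} (h : InvC V X Y) (a : ℤ) : OK V (a, Y) (0, 1) := by
  intro k hk hV
  simp at hV
  have := (h.bd _ _ hV).2
  omega

lemma okE {V X Y} (h : InvC V X Y) (b : ℤ) : OK V (X, b) (1, 0) := by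
  intro k hk hV
  simp at hV
  have := (h.bd _ _ hV).1
  omega

lemma nokS {V X Y} (h : InvC V X Y) (a : ℤ) (ha : a ≤ X) : ¬ OK V (a, Y) (0, -1) := by
  intro hk
  obtain ⟨b, hb, hV⟩ := h.cols a ha
  have := hk (Y - b).toNat (by omega)
  apply this
  have e : (((Y - b).toNat : ℕ) : ℤ) = Y - b := by omega
  simp only [e]
  simpa using hV

lemma nok1 {V} {p s : ℤ × ℤ} (h : p + s ∈ V) : ¬ OK V p s := by
  intro hk
  have := hk 1 le_rfl
  simp at this
  exact this h

lemma okE' {V : Set (ℤ × ℤ)} {a b : ℤ} (h : ∀ a', (a', b) ∈ V → a' ≤ a) : OK V (a, b) (1, 0) := by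
  intro k hk hV
  simp at hV
  have := h _ hV
  omega

lemma okW' {V : Set (ℤ × ℤ)} {a b : ℤ} (h : ∀ a', (a', b) ∈ V → a ≤ a') : OK V (a, b) (-1, 0) := by
  intro k hk hV
  simp at hV
  have := h _ hV
  omega

lemma invC_north {V X Y} (h : InvC V X Y) (a : ℤ) (ha : a ≤ X) :
    InvC (insert (a, Y + 1) V) X (Y + 1) := by
  constructor
  · intro a' b' h'
    rcases h' with h' | h'
    · simp at h'; omega
    · have := h.bd _ _ h'; omega
  · intro b hb
    rcases eq_or_lt_of_le hb with rfl | hb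
    · exact ⟨a, mem_insert _ _⟩
    · obtain ⟨c, hc⟩ := h.rows b (by omega)
      exact ⟨c, mem_insert_of_mem _ hc⟩
  · intro c hc
    obtain ⟨b, hb, hV⟩ := h.cols c hc
    exact ⟨b, by omega, mem_insert_of_mem _ hV⟩

lemma invC_same {V X Y} (h : InvC V X Y) (a : ℤ) (ha : a ≤ X) :
    InvC (insert (a, Y) V) X Y := by
  constructor
  · intro a' b' h'
    rcases h' with h' | h'
    · simp at h'; omega
    · have := h.bd _ _ h'; omega
  · intro b hb
    obtain ⟨c, hc⟩ := h.rows b (by omega)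
    exact ⟨c, mem_insert_of_mem _ hc⟩
  · intro c hc
    obtain ⟨b, hb, hV⟩ := h.cols c hc
    exact ⟨b, by omega, mem_insert_of_mem _ hV⟩

lemma inv_north {V X Y} (h : InvC V X Y) (d : ℕ) :
    Inv (St.N d) (insert (X - d, Y + 1) V) X (Y + 1) := by
  refine ⟨invC_north h _ (by omega), mem_insert _ _, ?_⟩
  intro a ha
  rcases ha with ha | ha
  · simpa using ha
  · have := h.bd _ _ ha; omega

lemma inv_east {V X Y} (h : InvC V X Y) :
    Inv (St.N 0) (sw (insert (X + 1, Y) V)) Y (X + 1) := by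
  refine ⟨⟨?_, ?_, ?_⟩, by simp [posOf, sw], ?_⟩
  · intro a b hab
    rcases hab with hab | hab
    · simp at hab; omega
    · have := h.bd _ _ hab
      simp at this; omega
  · intro b hb
    rcases eq_or_lt_of_le hb with rfl | hb
    · exact ⟨Y, by simp [sw]⟩
    · obtain ⟨c, hc, hV⟩ := h.cols b (by omega)
      exact ⟨c, mem_insert_of_mem _ hV⟩
  · intro a ha
    obtain ⟨c, hV⟩ := h.rows a ha
    exact ⟨c, by have := h.bd _ _ hV; omega, mem_insert_of_mem _ hV⟩
  · intro a ha
    rcases ha with ha | ha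
    · simpa using ha
    · have := h.bd _ _ ha
      simp at this

lemma cnt_Inv {n : ℕ} : ∀ q V X Y x y, x ≠ 0 → y ≠ 0 → Inv q V X Y →
    cnt n V (posOf q X Y) x y = x ^ X * y ^ Y * ZZ n q x y := by
  induction n with
  | zero =>
    intro q V X Y x y hx hy h
    obtain ⟨hC, hp, hq⟩ := h
    have hcor : Corner V (X, Y) := fun p hp => hC.bd p.1 p.2 hp
    obtain ⟨a, ha⟩ := hC.rows Y le_rfl
    obtain ⟨c, hc, hcV⟩ := hC.cols X le_rfl
    have hno : ∀ d : ℕ, ¬ Corner V (X - (d + 1), Y) := by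
      intro d hc
      have := hc _ hcV
      simp at this; omega
    rcases q with (_ | d) | (_ | d) | d
    · simp [cnt, ZZ, posOf, hcor]
    · have := hno d
      simp [cnt, ZZ, posOf, this]
    · simp [cnt, ZZ, posOf, hcor]
    · have := hno d
      simp [cnt, ZZ, posOf, this]
    · have := hno d
      simp [cnt, ZZ, posOf, sub_sub, this]
  | succ n ih =>
    intro q V X Y x y hx hy h
    obtain ⟨hC, hp, hq⟩ := h
    have north : ∀ d : ℕ, cnt n (insert (X - (d : ℤ), Y + 1) V) (X - (d : ℤ), Y + 1) x y =
        x ^ X * y ^ Y * (y * ZZ n (St.N d) x y) := by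
      intro d
      have := ih _ _ _ _ x y hx hy (inv_north hC d)
      rw [zpow_add_one₀ hy] at this
      simp only [posOf] at this
      rw [this]; ring
    have east : cnt n (insert (X + 1, Y) V) (X + 1, Y) x y =
        x ^ X * y ^ Y * (x * ZZ n (St.N 0) y x) := by
      have := ih _ _ _ _ y x hy hx (inv_east hC)
      rw [zpow_add_one₀ hx] at this
      rw [cnt_sw]
      simp only [posOf] at this
      simp at this
      rw [this]; ring
    have hS : ∀ d : ℕ, ¬ OK V (X - (d : ℤ), Y) (0, -1) := fun d => nokS hC _ (by omega)
    have hS' : ∀ d : ℕ, ¬ OK V (X - (d : ℤ) - 1, Y) (0, -1) := fun d => nokS hC _ (by omega)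
    have north0 := north 0
    have hS0 := hS 0
    simp only [Nat.cast_zero, sub_zero] at north0 hS0
    have west : ∀ d : ℕ, (X - (d : ℤ), Y) ∈ V → (∀ a, (a, Y) ∈ V → X - (d : ℤ) ≤ a) →
        cnt n (insert (X - (d : ℤ) - 1, Y) V) (X - (d : ℤ) - 1, Y) x y =
        x ^ X * y ^ Y * (ZZ n (St.W d) x y) := by
      intro d h1 h2
      refine ih (St.W d) _ X Y x y hx hy ⟨invC_same hC _ (by omega), mem_insert _ _, ?_,
        mem_insert_of_mem _ h1⟩
      intro a ha
      rcases ha with ha | ha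
      · simp at ha; omega
      · have := h2 a ha; omega
    have eastT : ∀ d : ℕ, (X - (d : ℤ) - 1, Y) ∈ V → (∀ a, (a, Y) ∈ V → a ≤ X - (d : ℤ) - 1) →
        cnt n (insert (X - (d : ℤ), Y) V) (X - (d : ℤ), Y) x y =
        x ^ X * y ^ Y * (ZZ n (St.A d) x y) := by
      intro d h1 h2
      refine ih (St.A d) _ X Y x y hx hy ⟨invC_same hC _ (by omega), mem_insert _ _, ?_,
        mem_insert_of_mem _ h1⟩
      intro a ha
      rcases ha with ha | ha
      · simp at ha; omega
      · have := h2 a ha; omega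
    rcases q with (_ | d) | (_ | d) | d
    · simp only [posOf, Nat.cast_zero, sub_zero] at hp hq ⊢
      have hW : OK V (X, Y) (-1, 0) := okW' fun a ha => (hq a ha).ge
      have w := west 0 (by simpa using hp) (by simpa using fun a ha => (hq a ha).ge)
      simp only [Nat.cast_zero, sub_zero] at w
      simp only [cnt, okN hC, okE hC, hW, hS0, if_true, if_false, Prod.mk_add_mk, add_zero,
        ← sub_eq_add_neg]
      rw [north0, east, w, ZZ]
      ring
    · simp only [posOf] at hp hq ⊢
      have hW : OK V (X - ((d + 1 : ℕ) : ℤ), Y) (-1, 0) := okW' fun a ha => (hq a ha).ge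
      have hE : OK V (X - ((d + 1 : ℕ) : ℤ), Y) (1, 0) := okE' fun a ha => (hq a ha).le
      have w := west (d + 1) hp fun a ha => (hq a ha).ge
      have e1 : X - ((d + 1 : ℕ) : ℤ) + 1 = X - d := by push_cast; ring
      have e := eastT d (by convert hp using 2; push_cast; ring)
        (fun a ha => by have := hq a ha; push_cast at this; omega)
      simp only [cnt, okN hC, hE, hW, hS, if_true, if_false, Prod.mk_add_mk, add_zero,
        ← sub_eq_add_neg, e1]
      rw [north, e, w, ZZ]
      ring
    · simp only [posOf, Nat.cast_zero, sub_zero] at hp hq ⊢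
      have hW : ¬ OK V (X, Y) (-1, 0) := nok1 (by simpa [← sub_eq_add_neg] using hq.2)
      simp only [cnt, okN hC, okE hC, hW, hS0, if_true, if_false, Prod.mk_add_mk, add_zero]
      rw [north0, east, ZZ]
      ring
    · simp only [posOf] at hp hq ⊢
      have hW : ¬ OK V (X - ((d + 1 : ℕ) : ℤ), Y) (-1, 0) :=
        nok1 (by simpa [← sub_eq_add_neg] using hq.2)
      have hE : OK V (X - ((d + 1 : ℕ) : ℤ), Y) (1, 0) := okE' fun a ha => (hq.1 a ha)
      have e1 : X - ((d + 1 : ℕ) : ℤ) + 1 = X - d := by push_cast; ring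
      have e := eastT d (by convert hp using 2; push_cast; ring)
        (fun a ha => by have := hq.1 a ha; push_cast at this; omega)
      simp only [cnt, okN hC, hE, hW, hS, if_true, if_false, Prod.mk_add_mk, add_zero, e1]
      rw [north, e, ZZ]
      ring
    · have e2 : X - (d : ℤ) - 1 = X - ((d + 1 : ℕ) : ℤ) := by push_cast; ring
      simp only [posOf, e2] at hp hq ⊢
      have hW : OK V (X - ((d + 1 : ℕ) : ℤ), Y) (-1, 0) := okW' fun a ha => (hq.1 a ha)
      have hE : ¬ OK V (X - ((d + 1 : ℕ) : ℤ), Y) (1, 0) := by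
        refine nok1 ?_
        have e1 : X - ((d + 1 : ℕ) : ℤ) + 1 = X - d := by push_cast; ring
        simp only [Prod.mk_add_mk, e1, add_zero]
        exact hq.2
      have w := west (d + 1) hp fun a ha => (hq.1 a ha)
      simp only [cnt, okN hC, hE, hW, hS, if_true, if_false, Prod.mk_add_mk, add_zero,
        ← sub_eq_add_neg]
      rw [north, w, ZZ]
      ring

def Q : Set (ℤ × ℤ) := {p | p.1 ≤ 0 ∧ p.2 ≤ 0}

lemma cnt_start (n : ℕ) {x y : ℂ} (hx : x ≠ 0) (hy : y ≠ 0) :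
    cnt n (insert (1, 0) Q) (1, 0) x y = x * ZZ n (St.N 0) y x := by
  have h : Inv (St.N 0) (sw (insert (1, 0) Q)) 0 1 := by
    refine ⟨⟨?_, ?_, ?_⟩, by simp [posOf, sw], ?_⟩
    · intro a b hab
      simp [sw, Q] at hab; omega
    · intro b hb
      exact ⟨0, by simp [sw, Q]; omega⟩
    · intro a ha
      exact ⟨0, by omega, by simp [sw, Q]; omega⟩
    · intro a ha
      simp [sw, Q] at ha ⊢; omega
  have := cnt_Inv (n := n) _ _ _ _ y x hy hx h
  rw [cnt_sw]
  simpa [posOf] using this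

end PrudAux

end

section
open Filter Set
open Matrix MeasureTheory

namespace PrudAux

def steps : Finset (ℤ × ℤ) := {(0, 1), (1, 0), (-1, 0), (0, -1)}

lemma mem_steps (s : ℤ × ℤ) : s ∈ steps ↔ IsStep s := by
  simp [steps, IsStep]; tauto

def Vset {L : ℕ} (π : Fin (L + 1) → ℤ × ℤ) : Set (ℤ × ℤ) := range π ∪ Q

/-- prudent two-sided paths, without endpoint condition -/
def DD (L : ℕ) (π : Fin (L + 1) → ℤ × ℤ) : Prop :=
  π 0 = (0, 0) ∧ (∀ h : 0 < L, π ⟨1, by omega⟩ = (1, 0)) ∧ ∀ i : Fin L,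
    IsStep (π i.succ - π i.castSucc) ∧ ∀ k : ℕ, 1 ≤ k →
      (∀ j : Fin (L + 1), j ≤ i.castSucc →
        π i.castSucc + (k : ℤ) • (π i.succ - π i.castSucc) ≠ π j) ∧
      π i.castSucc + (k : ℤ) • (π i.succ - π i.castSucc) ∉ Q

open Classical in
noncomputable def Dfin : (m : ℕ) → Finset (Fin (m + 2) → ℤ × ℤ)
  | 0 => {![(0, 0), (1, 0)]}
  | m + 1 => (Dfin m).biUnion fun π =>
      (steps.filter fun s => OK (Vset π) (π (Fin.last _)) s).image
        fun s => Fin.snoc (α := fun _ => ℤ × ℤ) π (π (Fin.last _) + s)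

lemma twoSided_iff (L : ℕ) (π : Fin (L + 1) → ℤ × ℤ) :
    π ∈ twoSidedSet L ↔ DD L π ∧ ∀ i : Fin (L + 1),
      (π i).1 ≤ (π (Fin.last L)).1 ∧ (π i).2 ≤ (π (Fin.last L)).2 := by
  unfold twoSidedSet prudentSet DD Q
  simp only [mem_ofPred_eq]
  constructor
  · rintro ⟨⟨h0, h1⟩, h2, h3, h4⟩
    exact ⟨⟨h0, h4, fun i => ⟨(h1 i).1, fun k hk => ⟨(h1 i).2 k hk, h2 i k hk⟩⟩⟩, h3⟩
  · rintro ⟨⟨h0, h4, h1⟩, h3⟩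
    exact ⟨⟨h0, fun i => ⟨(h1 i).1, fun k hk => ((h1 i).2 k hk).1⟩⟩,
      fun i k hk => ((h1 i).2 k hk).2, h3, h4⟩

lemma DD_snoc (m : ℕ) (π : Fin (m + 2) → ℤ × ℤ) (s : ℤ × ℤ) :
    DD (m + 2) (Fin.snoc (α := fun _ => ℤ × ℤ) π (π (Fin.last _) + s)) ↔
      DD (m + 1) π ∧ IsStep s ∧ OK (Vset π) (π (Fin.last _)) s := by
  set π' : Fin (m + 3) → ℤ × ℤ := Fin.snoc (α := fun _ => ℤ × ℤ) π (π (Fin.last _) + s) with hπ'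
  have c : ∀ j : Fin (m + 2), π' j.castSucc = π j := fun j => by
    rw [hπ']; exact Fin.snoc_castSucc (α := fun _ => ℤ × ℤ) ..
  have l : π' (Fin.last _) = π (Fin.last _) + s := by
    rw [hπ']; exact Fin.snoc_last (α := fun _ => ℤ × ℤ) ..
  have h0 : π' 0 = π 0 := c 0
  have h1 : π' ⟨1, by omega⟩ = π ⟨1, by omega⟩ := c ⟨1, by omega⟩
  unfold DD
  rw [h0]
  constructor
  · rintro ⟨a, b, h⟩
    refine ⟨⟨a, fun _ => h1.symm.trans (b (by omega)), fun i => ?_⟩, ?_⟩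
    · have := h i.castSucc
      rw [Fin.succ_castSucc, c, c] at this
      refine ⟨this.1, fun k hk => ⟨fun j hj => ?_, (this.2 k hk).2⟩⟩
      have h' := (this.2 k hk).1 j.castSucc (by simpa using hj)
      rwa [c] at h'
    · have := h (Fin.last _)
      rw [Fin.succ_last, c, l, add_sub_cancel_left] at this
      refine ⟨this.1, fun k hk hV => ?_⟩
      rcases hV with ⟨j, hj⟩ | hV
      · exact (this.2 k hk).1 j.castSucc (Fin.le_last j) (by rw [c, hj])
      · exact (this.2 k hk).2 hV
  · rintro ⟨⟨a, b, h⟩, hs, hok⟩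
    refine ⟨a, fun _ => h1.trans (b (by omega)), fun i => ?_⟩
    induction i using Fin.lastCases with
    | last =>
      rw [Fin.succ_last, c, l, add_sub_cancel_left]
      refine ⟨hs, fun k hk => ⟨fun j hj => ?_, fun hQ => hok k hk (Or.inr hQ)⟩⟩
      induction j using Fin.lastCases with
      | last => exact absurd hj (by simp [Fin.le_def])
      | cast j =>
        rw [c]
        exact fun e => hok k hk (Or.inl ⟨j, e.symm⟩)
    | cast i =>
      rw [Fin.succ_castSucc, c, c]
      refine ⟨(h i).1, fun k hk => ⟨fun j hj => ?_, ((h i).2 k hk).2⟩⟩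
      induction j using Fin.lastCases with
      | last => exact absurd hj (by simp [Fin.le_def]; omega)
      | cast j =>
        rw [c]
        exact ((h i).2 k hk).1 j (by simpa using hj)

lemma mem_Dfin (m : ℕ) : ∀ π, π ∈ Dfin m ↔ DD (m + 1) π := by
  induction m with
  | zero =>
    intro π
    simp only [Dfin, Finset.mem_singleton]
    constructor
    · rintro rfl
      refine ⟨rfl, fun _ => rfl, fun i => ?_⟩
      have : i = 0 := by ext; have := i.2; simp
      subst this
      refine ⟨by simp [IsStep], fun k hk => ⟨fun j hj => ?_, ?_⟩⟩
      · have : j = 0 := by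
          have : j.val ≤ 0 := hj
          ext; simp; omega
        subst this
        simp; omega
      · simp [Q]; omega
    · rintro ⟨h0, h1, -⟩
      have h1 := h1 (by omega)
      funext i
      fin_cases i
      · exact h0
      · exact h1
  | succ m ih =>
    intro π'
    simp only [Dfin, Finset.mem_biUnion, Finset.mem_image, Finset.mem_filter, mem_steps, ih]
    constructor
    · rintro ⟨π, h, s, ⟨h1, h2⟩, rfl⟩
      exact (DD_snoc m π s).2 ⟨h, h1, h2⟩
    · intro h
      set π : Fin (m + 2) → ℤ × ℤ := fun i => π' i.castSucc with hπ
      set s := π' (Fin.last _) - π (Fin.last _) with hs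
      have e : Fin.snoc (α := fun _ => ℤ × ℤ) π (π (Fin.last _) + s) = π' := by
        rw [hs, add_sub_cancel]
        exact Fin.snoc_init_self (α := fun _ => ℤ × ℤ) π'
      have := (DD_snoc m π s).1 (by rw [e]; exact h)
      exact ⟨π, this.1, s, this.2, e⟩

lemma Vset_snoc {m : ℕ} (π : Fin (m + 2) → ℤ × ℤ) (p : ℤ × ℤ) :
    Vset (Fin.snoc (α := fun _ => ℤ × ℤ) π p : Fin (m + 3) → ℤ × ℤ) = insert p (Vset π) := by
  ext q
  simp only [Vset, mem_union, mem_range, mem_insert_iff, Fin.exists_fin_succ', Fin.snoc_castSucc,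
    Fin.snoc_last]
  constructor
  · rintro ((h | h) | h)
    · exact Or.inr (Or.inl h)
    · exact Or.inl h.symm
    · exact Or.inr (Or.inr h)
  · rintro (h | (h | h))
    · exact Or.inl (Or.inr h.symm)
    · exact Or.inl (Or.inl h)
    · exact Or.inr h

open Classical in
lemma sum_Dfin_succ (m : ℕ) (F : (Fin (m + 3) → ℤ × ℤ) → ℂ) :
    ∑ π ∈ Dfin (m + 1), F π = ∑ π ∈ Dfin m,
      ∑ s ∈ steps.filter (fun s => OK (Vset π) (π (Fin.last _)) s),
        F (Fin.snoc (α := fun _ => ℤ × ℤ) π (π (Fin.last _) + s)) := by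
  rw [Dfin, Finset.sum_biUnion]
  · refine Finset.sum_congr rfl fun π _ => ?_
    rw [Finset.sum_image]
    intro s _ s' _ h
    have := congrFun h (Fin.last _)
    simpa using this
  · intro π _ π' _ hne
    rw [Function.onFun, Finset.disjoint_left]
    intro ρ h1 h2
    rw [Finset.mem_image] at h1 h2
    obtain ⟨s, -, rfl⟩ := h1
    obtain ⟨s', -, h⟩ := h2
    apply hne
    funext j
    have := congrFun h j.castSucc
    simpa using this.symm

lemma sum_cnt (n : ℕ) : ∀ (m : ℕ) (x y : ℂ),
    ∑ π ∈ Dfin (m + n), cnt 0 (Vset π) (π (Fin.last _)) x y =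
    ∑ π ∈ Dfin m, cnt n (Vset π) (π (Fin.last _)) x y := by
  induction n with
  | zero => intros; rfl
  | succ n ih =>
    intro m x y
    have := ih (m + 1) x y
    rw [show m + 1 + n = m + (n + 1) by ring] at this
    rw [this, sum_Dfin_succ]
    refine Finset.sum_congr rfl fun π _ => ?_
    rw [Finset.sum_filter]
    simp only [Vset_snoc, Fin.snoc_last, steps]
    rw [Finset.sum_insert (by simp), Finset.sum_insert (by simp), Finset.sum_insert (by simp),
      Finset.sum_singleton, cnt]
    ring

open Classical in
/-- The finset of two-sided paths of length `n + 1`. -/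
noncomputable def TS (n : ℕ) : Finset (Fin (n + 2) → ℤ × ℤ) :=
  (Dfin n).filter fun π => Corner (Vset π) (π (Fin.last _))

open Classical in
lemma mem_TS (n : ℕ) (π) : π ∈ TS n ↔ π ∈ twoSidedSet (n + 1) := by
  rw [TS, Finset.mem_filter, mem_Dfin, twoSided_iff]
  refine and_congr_right fun h => ⟨fun hc i => hc _ (Or.inl ⟨i, rfl⟩), fun hc q hq => ?_⟩
  rcases hq with ⟨i, rfl⟩ | hq
  · exact hc i
  · have := hc 0
    rw [h.1] at this
    exact ⟨hq.1.trans this.1, hq.2.trans this.2⟩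

open Classical in
theorem TS_sum (n : ℕ) {x y : ℂ} (hx : x ≠ 0) (hy : y ≠ 0) :
    ∑ π ∈ TS n, x ^ (π (Fin.last _)).1 * y ^ (π (Fin.last _)).2 = x * ZZ n (St.N 0) y x := by
  have h := sum_cnt n 0 x y
  rw [zero_add] at h
  rw [TS, Finset.sum_filter]
  refine (Eq.trans ?_ h).trans ?_
  · rfl
  · rw [Dfin, Finset.sum_singleton, ← cnt_start n hx hy]
    congr 1
    ext q
    simp [Vset, Q]
    constructor
    · rintro ((h | h) | h)
      · left; exact h
      · right; simp [h]
      · right; exact h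
    · rintro (h | h)
      · left; left; exact h
      · right; exact h

end PrudAux

end

section
open Filter Set
open Matrix MeasureTheory

namespace PrudAux

section
variable {K : Type*} [CommSemiring K]

/-- first passage weights -/
def tt (y : K) (n : ℕ) : St → K :=
  match n with
  | 0 => fun q => match q with
    | St.A 0 => 1
    | _ => 0
  | n + 1 => fun q => match q with
    | St.N 0 => 0
    | St.N (d + 1) => y * tt y n (St.N (d + 1)) + tt y n (St.W (d + 1)) + tt y n (St.A d)
    | St.A 0 => 0
    | St.A (d + 1) => y * tt y n (St.N (d + 1)) + tt y n (St.A d)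
    | St.W d => y * tt y n (St.N (d + 1)) + tt y n (St.W (d + 1))

def bb (y : K) : ℕ → K
  | 0 => 0
  | 1 => y
  | n + 2 => y * tt y n (St.W 0)

lemma tt_map {K' : Type*} [CommSemiring K'] (φ : K →+* K') (y : K) (n : ℕ) :
    ∀ q, φ (tt y n q) = tt (φ y) n q := by
  induction n with
  | zero => rintro ((_ | d) | (_ | d) | d) <;> simp [tt]
  | succ n ih => rintro ((_ | d) | (_ | d) | d) <;> simp [tt, ih]

lemma bb_map {K' : Type*} [CommSemiring K'] (φ : K →+* K') (y : K) (n : ℕ) :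
    φ (bb y n) = bb (φ y) n := by
  rcases n with _ | _ | n <;> simp [bb, tt_map]

end

lemma ZZ_decomp (x y : ℂ) (n : ℕ) : ∀ q, (q ≠ St.N 0) →
    ZZ n q x y = ∑ k ∈ Finset.range (n + 1), tt y k q * ZZ (n - k) (St.A 0) x y := by
  induction n with
  | zero => rintro ((_ | d) | (_ | d) | d) h <;> simp_all [tt, ZZ]
  | succ n ih =>
    intro q h
    rw [Finset.sum_range_succ']
    simp only [Nat.add_sub_add_right]
    rcases q with (_ | d) | (_ | d) | d
    · exact absurd rfl h
    · simp only [tt, ZZ, add_mul, Finset.sum_add_distrib]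
      rw [ih _ (by simp), ih _ (by simp), ih _ (by simp), Finset.mul_sum]
      simp [mul_assoc]
    · simp [tt]
    · simp only [tt, ZZ, add_mul, Finset.sum_add_distrib]
      rw [ih _ (by simp), ih _ (by simp), Finset.mul_sum]
      simp [mul_assoc]
    · simp only [tt, ZZ, add_mul, Finset.sum_add_distrib]
      rw [ih _ (by simp), ih _ (by simp), Finset.mul_sum]
      simp [mul_assoc]

noncomputable def UU (x y : ℂ) (n : ℕ) : ℂ := ZZ n (St.A 0) x y

lemma UU_symm (x y : ℂ) (n : ℕ) : UU x y n = UU y x n := by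
  rcases n with _ | n
  · simp [UU, ZZ]
  · simp [UU, ZZ]; ring

lemma N0_decomp (x y : ℂ) (n : ℕ) :
    y * ZZ n (St.N 0) x y = ∑ k ∈ Finset.range (n + 1), bb y (k + 1) * UU x y (n - k) := by
  rcases n with _ | n
  · simp [ZZ, bb, UU]
  · rw [Finset.sum_range_succ']
    have h1 : ZZ (n + 1) (St.N 0) x y = ZZ (n + 1) (St.A 0) x y + ZZ n (St.W 0) x y := by
      simp [ZZ]
    rw [h1, ZZ_decomp x y n (St.W 0) (by simp)]
    simp only [Nat.add_sub_add_right, bb, UU, mul_add, Finset.mul_sum]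
    rw [add_comm]
    simp [mul_assoc]

lemma UU_zero (x y : ℂ) : UU x y 0 = 1 := by simp [UU, ZZ]

lemma UU_succ (x y : ℂ) (n : ℕ) :
    UU x y (n + 1) = ∑ k ∈ Finset.range (n + 1), (bb x (k + 1) + bb y (k + 1)) * UU x y (n - k) := by
  have : UU x y (n + 1) = y * ZZ n (St.N 0) x y + x * ZZ n (St.N 0) y x := by simp [UU, ZZ]
  rw [this, N0_decomp, N0_decomp]
  simp only [UU_symm y x, add_mul, Finset.sum_add_distrib]
  ring

theorem TS_sum' (n : ℕ) {x y : ℂ} (hx : x ≠ 0) (hy : y ≠ 0) :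
    ∑ π ∈ TS n, x ^ (π (Fin.last _)).1 * y ^ (π (Fin.last _)).2 =
      ∑ k ∈ Finset.range (n + 1), bb x (k + 1) * UU x y (n - k) := by
  rw [TS_sum n hx hy, N0_decomp]
  simp only [UU_symm y x]

end PrudAux

end

section
open Filter Set
open Matrix MeasureTheory

namespace PrudAux

lemma tt_deg (n : ℕ) : ∀ q, (tt (Polynomial.X : Polynomial ℕ) n q).natDegree ≤ n := by
  induction n with
  | zero => rintro ((_ | d) | (_ | d) | d) <;> simp [tt]
  | succ n ih =>
    have hX : ∀ q, (Polynomial.X * tt (Polynomial.X : Polynomial ℕ) n q).natDegree ≤ n + 1 := by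
      intro q
      refine Polynomial.natDegree_mul_le.trans ?_
      have := ih q
      have := Polynomial.natDegree_X_le (R := ℕ)
      omega
    have h1 : ∀ q, (tt (Polynomial.X : Polynomial ℕ) n q).natDegree ≤ n + 1 :=
      fun q => (ih q).trans (by omega)
    rintro ((_ | d) | (_ | d) | d)
    · simp [tt]
    · simp only [tt]
      exact Polynomial.natDegree_add_le_of_degree_le
        (Polynomial.natDegree_add_le_of_degree_le (hX _) (h1 _)) (h1 _)
    · simp [tt]
    · simp only [tt]
      exact Polynomial.natDegree_add_le_of_degree_le (hX _) (h1 _)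
    · simp only [tt]
      exact Polynomial.natDegree_add_le_of_degree_le (hX _) (h1 _)

lemma bb_deg (n : ℕ) : (bb (Polynomial.X : Polynomial ℕ) n).natDegree ≤ n := by
  rcases n with _ | _ | n
  · simp [bb]
  · simp [bb, Polynomial.natDegree_X_le]
  · simp only [bb]
    refine Polynomial.natDegree_mul_le.trans ?_
    have := tt_deg n (St.W 0)
    have := Polynomial.natDegree_X_le (R := ℕ)
    omega

/-- the number of blocks with length `n` and height `h` -/
noncomputable def bet (n h : ℕ) : ℕ := (bb (Polynomial.X : Polynomial ℕ) n).coeff h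

lemma bb_eq {K : Type*} [CommSemiring K] (y : K) (n : ℕ) :
    bb y n = ∑ h ∈ Finset.range (n + 1), (bet n h : K) * y ^ h := by
  have := bb_map (Polynomial.eval₂RingHom (Nat.castRingHom K) y) Polynomial.X n
  rw [Polynomial.coe_eval₂RingHom, Polynomial.eval₂_X] at this
  rw [← this, Polynomial.eval₂_eq_sum_range' _ (Nat.lt_succ_of_le (bb_deg n))]
  rfl

lemma bet_one_one : bet 1 1 = 1 := by simp [bet, bb]

lemma bet_four_two : bet 4 2 = 1 := by
  have : bb (Polynomial.X : Polynomial ℕ) 4 = Polynomial.X ^ 2 := by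
    simp [bb, tt]; ring
  rw [bet, this]; simp

noncomputable def VV : St → ℝ
  | St.N _ => 1
  | St.A _ => 0.71
  | St.W _ => 0.71

lemma tt_nonneg (n : ℕ) : ∀ q, 0 ≤ tt (1 : ℝ) n q := by
  induction n with
  | zero => rintro ((_ | d) | (_ | d) | d) <;> simp [tt]
  | succ n ih =>
    rintro ((_ | d) | (_ | d) | d) <;> simp only [tt, one_mul, le_refl]
    · linarith [ih (St.N (d + 1)), ih (St.W (d + 1)), ih (St.A d)]
    · linarith [ih (St.N (d + 1)), ih (St.A d)]
    · linarith [ih (St.N (d + 1)), ih (St.W (d + 1))]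

lemma tt_bound (n : ℕ) : ∀ q, tt (1 : ℝ) n q * 0.41 ^ n ≤ (1 / 0.71) * 0.9922 ^ n * VV q := by
  induction n with
  | zero => rintro ((_ | d) | (_ | d) | d) <;> simp [tt, VV] <;> norm_num
  | succ n ih =>
    have hp : (0 : ℝ) < (1 / 0.71) * 0.9922 ^ n := by positivity
    have e : ((1 : ℝ) / 0.71) * 0.9922 ^ (n + 1) = ((1 / 0.71) * 0.9922 ^ n) * 0.9922 := by ring
    rw [e, pow_succ]
    set P := ((1 : ℝ) / 0.71) * 0.9922 ^ n
    rintro ((_ | d) | (_ | d) | d) <;> simp only [tt, one_mul]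
    · simp only [VV]; nlinarith
    · have h1 := ih (St.N (d + 1))
      have h2 := ih (St.W (d + 1))
      have h3 := ih (St.A d)
      simp only [VV] at h1 h2 h3 ⊢
      nlinarith
    · simp only [VV]; nlinarith
    · have h1 := ih (St.N (d + 1))
      have h3 := ih (St.A d)
      simp only [VV] at h1 h3 ⊢
      nlinarith
    · have h1 := ih (St.N (d + 1))
      have h2 := ih (St.W (d + 1))
      simp only [VV] at h1 h2 ⊢
      nlinarith

lemma tt_summable (q : St) : Summable fun n => tt (1 : ℝ) n q * 0.41 ^ n := by
  refine Summable.of_nonneg_of_le (fun n => mul_nonneg (tt_nonneg n q) (by positivity))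
    (fun n => tt_bound n q) ?_
  exact ((summable_geometric_of_lt_one (by norm_num) (by norm_num)).mul_left _).mul_right _

noncomputable def gg : St → ℝ
  | St.N d => 1.2626 * 0.85 ^ d
  | St.A d => 0.85 ^ d
  | St.W d => 0.7945 * 0.85 ^ (d + 1)

noncomputable def GG (M : ℕ) (q : St) : ℝ := ∑ n ∈ Finset.range (M + 1), tt (1 : ℝ) n q * 0.41 ^ n

lemma gg_le (M : ℕ) : ∀ q, q ≠ St.N 0 → gg q ≤ GG M q + 2 * 0.9922 ^ M * VV q := by
  induction M with
  | zero =>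
    have hd : ∀ d : ℕ, (0.85 : ℝ) ^ d ≤ 1 := fun d => pow_le_one₀ (by norm_num) (by norm_num)
    rintro ((_ | d) | (_ | d) | d) h
    · exact absurd rfl h
    · have := hd (d + 1); simp [gg, GG, tt, VV]; nlinarith
    · simp [gg, GG, tt, VV]; norm_num
    · have := hd (d + 1); simp [gg, GG, tt, VV]; nlinarith
    · have := hd (d + 1); simp [gg, GG, tt, VV]; nlinarith
  | succ M ih =>
    have e : (2 : ℝ) * 0.9922 ^ (M + 1) = (2 * 0.9922 ^ M) * 0.9922 := by ring
    have hp : (0 : ℝ) < 2 * 0.9922 ^ M := by positivity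
    rw [e]
    set P := (2 : ℝ) * 0.9922 ^ M
    have hd : ∀ d : ℕ, (0 : ℝ) < 0.85 ^ d := fun d => by positivity
    rintro ((_ | d) | (_ | d) | d) h
    · exact absurd rfl h
    · have E : GG (M + 1) (St.N (d + 1)) = 0.41 *
          (GG M (St.N (d + 1)) + GG M (St.W (d + 1)) + GG M (St.A d)) := by
        unfold GG
        rw [Finset.sum_range_succ']
        simp only [tt, one_mul, ← Finset.sum_add_distrib, Finset.mul_sum]
        rw [zero_mul, add_zero]
        exact Finset.sum_congr rfl fun n _ => by ring
      have h1 := ih (St.N (d + 1)) (by simp)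
      have h2 := ih (St.W (d + 1)) (by simp)
      have h3 := ih (St.A d) (by simp)
      have := hd d
      rw [E]
      simp only [VV, gg, pow_succ] at h1 h2 h3 ⊢
      nlinarith
    · have E : GG (M + 1) (St.A 0) = 1 := by
        unfold GG
        rw [Finset.sum_range_succ']
        simp [tt]
      rw [E]
      simp only [gg, VV]
      nlinarith
    · have E : GG (M + 1) (St.A (d + 1)) = 0.41 *
          (GG M (St.N (d + 1)) + GG M (St.A d)) := by
        unfold GG
        rw [Finset.sum_range_succ']
        simp only [tt, one_mul, ← Finset.sum_add_distrib, Finset.mul_sum]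
        rw [zero_mul, add_zero]
        exact Finset.sum_congr rfl fun n _ => by ring
      have h1 := ih (St.N (d + 1)) (by simp)
      have h3 := ih (St.A d) (by simp)
      have := hd d
      rw [E]
      simp only [VV, gg, pow_succ] at h1 h3 ⊢
      nlinarith
    · have E : GG (M + 1) (St.W d) = 0.41 *
          (GG M (St.N (d + 1)) + GG M (St.W (d + 1))) := by
        unfold GG
        rw [Finset.sum_range_succ']
        simp only [tt, one_mul, ← Finset.sum_add_distrib, Finset.mul_sum]
        rw [zero_mul, add_zero]
        exact Finset.sum_congr rfl fun n _ => by ring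
      have h1 := ih (St.N (d + 1)) (by simp)
      have h2 := ih (St.W (d + 1)) (by simp)
      have := hd d
      rw [E]
      simp only [VV, gg, pow_succ] at h1 h2 ⊢
      nlinarith

open Topology in
lemma W_lower : 0.675 ≤ ∑' n, tt (1 : ℝ) n (St.W 0) * 0.41 ^ n := by
  have h1 : Tendsto (fun M => GG M (St.W 0) + 2 * 0.9922 ^ M * VV (St.W 0)) atTop
      (𝓝 ((∑' n, tt (1 : ℝ) n (St.W 0) * 0.41 ^ n) + 2 * 0 * VV (St.W 0))) := by
    refine Tendsto.add ?_ (Tendsto.mul_const _ (Tendsto.const_mul _ ?_))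
    · exact ((tt_summable (St.W 0)).hasSum.tendsto_sum_nat).comp (tendsto_add_atTop_nat 1)
    · exact tendsto_pow_atTop_nhds_zero_of_lt_one (by norm_num) (by norm_num)
  have h2 := ge_of_tendsto h1 (Eventually.of_forall fun M => gg_le M (St.W 0) (by simp))
  simp [gg] at h2
  refine le_trans ?_ h2
  norm_num

lemma bb_nonneg (n : ℕ) : 0 ≤ bb (1 : ℝ) n := by
  rw [bb_eq]; positivity

lemma bb_summable : Summable fun n => bb (1 : ℝ) n * 0.41 ^ n := by
  rw [← summable_nat_add_iff 2]
  refine ((tt_summable (St.W 0)).mul_left (0.41 ^ 2)).congr fun n => ?_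
  simp only [bb]
  ring

lemma bb_big : 1 / 2 < ∑' n, bb (1 : ℝ) n * 0.41 ^ n := by
  rw [← bb_summable.sum_add_tsum_nat_add 2]
  have : ∑' n, bb (1 : ℝ) (n + 2) * 0.41 ^ (n + 2) =
      0.41 ^ 2 * ∑' n, tt (1 : ℝ) n (St.W 0) * 0.41 ^ n := by
    rw [← tsum_mul_left]
    congr 1
    funext n
    simp only [bb]
    ring
  rw [this, Finset.sum_range_succ, Finset.sum_range_succ]
  simp only [bb]
  have := W_lower
  norm_num at this ⊢
  linarith

theorem exists_rho : ∃ ρ : ℝ, 0 < ρ ∧ ρ < 0.41 ∧ HasSum (fun n => bb (1 : ℝ) n * ρ ^ n) (1 / 2) := by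
  have hcont : ContinuousOn (fun z : ℝ => ∑' n, bb (1 : ℝ) n * z ^ n) (Icc 0 0.41) := by
    refine continuousOn_tsum (fun n => by fun_prop) bb_summable ?_
    intro n z hz
    rw [Real.norm_of_nonneg (mul_nonneg (bb_nonneg n) (pow_nonneg hz.1 _))]
    exact mul_le_mul_of_nonneg_left (pow_le_pow_left₀ hz.1 hz.2 _) (bb_nonneg n)
  have h0 : ∑' n, bb (1 : ℝ) n * 0 ^ n = 0 := by
    rw [tsum_eq_single 0 (fun n hn => by simp [hn])]
    simp [bb]
  have := intermediate_value_Ioo (by norm_num : (0 : ℝ) ≤ 0.41) hcont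
  have hmem : (1 / 2 : ℝ) ∈ Ioo (∑' n, bb (1 : ℝ) n * 0 ^ n) (∑' n, bb (1 : ℝ) n * 0.41 ^ n) :=
    ⟨by rw [h0]; norm_num, bb_big⟩
  obtain ⟨ρ, hρ, h⟩ := this hmem
  refine ⟨ρ, hρ.1, hρ.2, ?_⟩
  have hs : Summable fun n => bb (1 : ℝ) n * ρ ^ n := by
    refine Summable.of_nonneg_of_le (fun n => mul_nonneg (bb_nonneg n) (pow_nonneg hρ.1.le _))
      (fun n => ?_) bb_summable
    exact mul_le_mul_of_nonneg_left (pow_le_pow_left₀ hρ.1.le hρ.2.le _) (bb_nonneg n)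
  have h' : ∑' n, bb (1 : ℝ) n * ρ ^ n = 1 / 2 := h
  rw [← h']
  exact hs.hasSum

end PrudAux

end

section
open Filter Set
open Matrix MeasureTheory

namespace PrudAux

/-- second order remainder -/
noncomputable def phi (x : ℝ) : ℂ := 1 + Complex.I * x - Complex.exp (Complex.I * x)

lemma norm_I_mul (x : ℝ) : ‖Complex.I * (x : ℂ)‖ = |x| := by simp

lemma norm_exp_I (x : ℝ) : ‖Complex.exp (Complex.I * (x : ℂ))‖ = 1 := by
  rw [mul_comm]; exact Complex.norm_exp_ofReal_mul_I x

lemma phi_bound (x : ℝ) : ‖phi x‖ ≤ 3 * x ^ 2 := by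
  by_cases hx : |x| ≤ 1
  · have := Complex.norm_exp_sub_one_sub_id_le (x := Complex.I * x) (by rwa [norm_I_mul])
    rw [norm_I_mul, sq_abs] at this
    have e : phi x = -(Complex.exp (Complex.I * x) - 1 - Complex.I * x) := by unfold phi; ring
    rw [e, norm_neg]
    nlinarith [sq_nonneg x]
  · push Not at hx
    have : ‖phi x‖ ≤ 1 + |x| + 1 := by
      unfold phi
      refine (norm_sub_le _ _).trans ?_
      rw [norm_exp_I]
      gcongr
      refine (norm_add_le _ _).trans ?_
      rw [norm_I_mul]; simp
    nlinarith [sq_abs x]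

lemma phi_third {x : ℝ} (hx : |x| ≤ 1) : ‖phi x - (x : ℂ) ^ 2 / 2‖ ≤ |x| ^ 3 := by
  have := Complex.exp_bound (x := Complex.I * x) (by rwa [norm_I_mul]) (n := 3) (by norm_num)
  rw [norm_I_mul] at this
  have e : phi x - (x : ℂ) ^ 2 / 2 = -(Complex.exp (Complex.I * x) -
      ∑ m ∈ Finset.range 3, (Complex.I * (x : ℂ)) ^ m / (m.factorial : ℂ)) := by
    unfold phi
    simp [Finset.sum_range_succ, mul_pow, Nat.factorial]
    ring
  rw [e, norm_neg]
  refine this.trans ?_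
  have h3 : 0 ≤ |x| ^ 3 := by positivity
  norm_num [Nat.factorial]
  linarith

open Topology in
lemma phi_lim (α : ℝ) :
    Tendsto (fun L : ℕ => (L : ℂ) * phi (α * (Real.sqrt L)⁻¹)) atTop (𝓝 ((α : ℂ) ^ 2 / 2)) := by
  have hs : Tendsto (fun L : ℕ => (Real.sqrt L)⁻¹) atTop (𝓝 0) :=
    (Real.tendsto_sqrt_atTop.comp tendsto_natCast_atTop_atTop).inv_tendsto_atTop
  have h1 : Tendsto (fun L : ℕ => |α| ^ 3 * (Real.sqrt L)⁻¹) atTop (𝓝 0) := by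
    simpa using hs.const_mul (|α| ^ 3)
  have h2 : ∀ᶠ L : ℕ in atTop, |α * (Real.sqrt L)⁻¹| ≤ 1 := by
    have : Tendsto (fun L : ℕ => |α * (Real.sqrt L)⁻¹|) atTop (𝓝 0) := by
      simpa using (hs.const_mul α).abs
    exact this.eventually_le_const (by norm_num)
  rw [tendsto_iff_norm_sub_tendsto_zero]
  refine squeeze_zero' (Eventually.of_forall fun L => norm_nonneg _) ?_ h1
  filter_upwards [h2, eventually_gt_atTop 0] with L hL hL0
  have hL0' : (0 : ℝ) < L := by exact_mod_cast hL0
  have hsp : 0 < Real.sqrt L := Real.sqrt_pos.2 hL0'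
  have hss : Real.sqrt L * Real.sqrt L = L := Real.mul_self_sqrt hL0'.le
  have e : (L : ℂ) * phi (α * (Real.sqrt L)⁻¹) - (α : ℂ) ^ 2 / 2 =
      (L : ℂ) * (phi (α * (Real.sqrt L)⁻¹) - ((α * (Real.sqrt L)⁻¹ : ℝ) : ℂ) ^ 2 / 2) := by
    rw [mul_sub]
    congr 1
    have hr : (L : ℝ) * ((α * (Real.sqrt L)⁻¹) ^ 2 / 2) = α ^ 2 / 2 := by
      rw [mul_pow, inv_pow, Real.sq_sqrt hL0'.le]; field_simp
    have := congrArg (fun r : ℝ => (r : ℂ)) hr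
    push_cast at this ⊢
    exact this.symm
  rw [e, norm_mul]
  have := phi_third hL
  have hn : ‖(L : ℂ)‖ = L := by simp
  rw [hn]
  calc (L : ℝ) * _ ≤ L * |α * (Real.sqrt L)⁻¹| ^ 3 := by gcongr
    _ = |α| ^ 3 * (Real.sqrt L)⁻¹ := by
      rw [abs_mul, abs_of_pos (inv_pos.2 hsp), mul_pow]
      rw [← hss]
      field_simp
      simp
      ring

structure WH (w : ℕ → ℕ → ℝ) (q : ℕ → ℝ) (R : ℝ) : Prop where
  nn : ∀ n h, 0 ≤ w n h
  hq : ∀ n, q n = ∑ h ∈ Finset.range (n + 1), w n h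
  q0 : q 0 = 0
  q1 : 0 < q 1
  sum : HasSum q (1 / 2)
  hR : 1 < R
  sR : Summable fun n => q n * R ^ n

variable {w : ℕ → ℕ → ℝ} {q : ℕ → ℝ} {R : ℝ}

lemma WH.qn (H : WH w q R) (n) : 0 ≤ q n := by
  rw [H.hq]; exact Finset.sum_nonneg fun h _ => H.nn n h

lemma WH.s2 (H : WH w q R) : Summable fun n : ℕ => q n * (n : ℝ) ^ 2 := by
  have hR := H.hR
  have h1 := summable_lemma H.qn (S := (1 + R) / 2) (by linarith) (by linarith) H.sR
  have h2 := summable_lemma (p := fun n => q n * n) (fun n => mul_nonneg (H.qn n) (by positivity))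
    (R := (1 + R) / 2) (S := 1) (by norm_num) (by linarith) (by simpa [mul_assoc] using h1)
  refine h2.congr fun n => ?_
  simp; ring

lemma WH.s1 (H : WH w q R) : Summable fun n : ℕ => q n * (n : ℝ) := by
  have hR := H.hR
  have h1 := summable_lemma H.qn (S := 1) (by linarith) (by linarith) H.sR
  simpa using h1

/-- `II w F` is the weighted sum of `F` -/
noncomputable def J (w : ℕ → ℕ → ℝ) (F : ℕ → ℕ → ℝ) (n : ℕ) : ℝ :=
  ∑ h ∈ Finset.range (n + 1), w n h * F n h

lemma WH.sJ (H : WH w q R) {F : ℕ → ℕ → ℝ} {C : ℝ}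
    (hF : ∀ n h : ℕ, h ≤ n → |F n h| ≤ C * (n : ℝ) ^ 2) : Summable (J w F) := by
  refine Summable.of_norm_bounded (H.s2.mul_left C) fun n => ?_
  unfold J
  rw [H.hq, Finset.sum_mul, Finset.mul_sum]
  refine (norm_sum_le _ _).trans (Finset.sum_le_sum fun h hh => ?_)
  rw [norm_mul, Real.norm_of_nonneg (H.nn n h)]
  have := hF n h (by simpa [Nat.lt_succ_iff] using hh)
  calc w n h * |F n h| ≤ w n h * (C * n ^ 2) := by have := H.nn n h; gcongr
    _ = _ := by ring

noncomputable def aF (w : ℕ → ℕ → ℝ) (α : ℕ → ℕ → ℝ) (L n : ℕ) : ℂ :=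
  ∑ h ∈ Finset.range (n + 1), (w n h : ℂ) * Complex.exp (Complex.I * (α n h * (Real.sqrt L)⁻¹ : ℝ))

lemma WH.aF_bound (H : WH w q R) (α : ℕ → ℕ → ℝ) (L n : ℕ) : ‖aF w α L n‖ ≤ q n := by
  unfold aF
  rw [H.hq]
  refine (norm_sum_le _ _).trans (Finset.sum_le_sum fun h hh => ?_)
  rw [norm_mul, norm_exp_I, mul_one, Complex.norm_real, Real.norm_of_nonneg (H.nn n h)]

open Topology in
lemma WH.aF_lim (H : WH w q R) (α : ℕ → ℕ → ℝ) (n : ℕ) :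
    Tendsto (fun L => aF w α L n) atTop (𝓝 (q n)) := by
  have hs : Tendsto (fun L : ℕ => (Real.sqrt L)⁻¹) atTop (𝓝 0) :=
    (Real.tendsto_sqrt_atTop.comp tendsto_natCast_atTop_atTop).inv_tendsto_atTop
  unfold aF
  rw [H.hq]
  push_cast
  refine tendsto_finsetSum _ fun h _ => ?_
  have h1 : Continuous fun e : ℝ => (w n h : ℂ) * Complex.exp (Complex.I * (α n h * e)) := by fun_prop
  have h2 := (h1.tendsto 0).comp hs
  simp at h2
  refine h2.congr fun L => ?_
  simp

open Topology in
lemma WH.kappa (H : WH w q R) {α β : ℕ → ℕ → ℝ} {C : ℝ} (hC : 0 ≤ C)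
    (hα : ∀ n h : ℕ, h ≤ n → |α n h| ≤ C * n) (hβ : ∀ n h : ℕ, h ≤ n → |β n h| ≤ C * n)
    (hz : ∑' n, J w (fun n h => α n h + β n h) n = 0) :
    Tendsto (fun L : ℕ => (L : ℂ) * (1 - ∑' n, (aF w α L n + aF w β L n))) atTop
      (𝓝 ((∑' n, J w (fun n h => (α n h ^ 2 + β n h ^ 2) / 2) n : ℝ) : ℂ)) := by
  have hn1 : ∀ n : ℕ, (n : ℝ) ≤ n ^ 2 := fun n => by
    rcases n with _ | n
    · simp
    · push_cast; nlinarith [(Nat.cast_nonneg n : (0 : ℝ) ≤ n)]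
  -- the rewritten terms
  set G : ℕ → ℕ → ℂ := fun L n => ∑ h ∈ Finset.range (n + 1), (w n h : ℂ) *
    ((L : ℂ) * phi (α n h * (Real.sqrt L)⁻¹) + (L : ℂ) * phi (β n h * (Real.sqrt L)⁻¹)) with hG
  have hsJ : Summable (J w fun n h => α n h + β n h) := by
    refine H.sJ (C := 2 * C) fun n h hh => ?_
    refine (abs_add_le _ _).trans ?_
    have := hα n h hh
    have := hβ n h hh
    have := hn1 n
    nlinarith
  have key : ∀ L : ℕ, (L : ℂ) * (1 - ∑' n, (aF w α L n + aF w β L n)) = ∑' n, G L n := by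
    intro L
    have s1 : HasSum (fun n => ((2 * q n : ℝ) : ℂ)) 1 := by
      have := H.sum.mul_left 2
      rw [show (2 : ℝ) * (1 / 2) = 1 by norm_num] at this
      have h := Complex.hasSum_ofReal.2 this
      rwa [Complex.ofReal_one] at h
    have s2 : HasSum (fun n => ((J w (fun n h => α n h + β n h) n : ℝ) : ℂ)) 0 := by
      have := hsJ.hasSum
      rw [hz] at this
      have h := Complex.hasSum_ofReal.2 this
      rwa [Complex.ofReal_zero] at h
    have s3 : Summable fun n => aF w α L n + aF w β L n :=
      (Summable.of_norm_bounded H.sum.summable (H.aF_bound α L)).add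
        (Summable.of_norm_bounded H.sum.summable (H.aF_bound β L))
    have s4 := (((s1.add (s2.mul_left (Complex.I * ((Real.sqrt L)⁻¹ : ℝ)))).sub s3.hasSum).mul_left
      (L : ℂ))
    rw [mul_zero, add_zero] at s4
    rw [← s4.tsum_eq]
    congr 1
    funext n
    rw [hG, H.hq]
    simp only [J, aF, phi]
    push_cast
    rw [Finset.mul_sum, Finset.mul_sum, ← Finset.sum_add_distrib, ← Finset.sum_add_distrib,
      ← Finset.sum_sub_distrib, Finset.mul_sum]
    refine Finset.sum_congr rfl fun h _ => ?_
    ring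
  simp_rw [key]
  rw [Complex.ofReal_tsum]
  refine tendsto_tsum_of_dominated_convergence (bound := fun n => (6 * C ^ 2) * (q n * (n : ℝ) ^ 2))
    (H.s2.mul_left _) ?_ ?_
  · intro n
    simp only [hG, J]
    push_cast
    refine tendsto_finsetSum _ fun h _ => ?_
    refine Tendsto.const_mul _ ?_
    rw [add_div]
    exact (phi_lim _).add (phi_lim _)
  · filter_upwards [eventually_gt_atTop 0] with L hL n
    have hL0' : (0 : ℝ) < L := by exact_mod_cast hL
    have hb : ∀ a : ℝ, |a| ≤ C * n → ‖(L : ℂ) * phi (a * (Real.sqrt L)⁻¹)‖ ≤ 3 * (C ^ 2 * n ^ 2) := by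
      intro a ha
      rw [norm_mul, Complex.norm_natCast]
      have h1 := phi_bound (a * (Real.sqrt L)⁻¹)
      have e : (L : ℝ) * (3 * (a * (Real.sqrt L)⁻¹) ^ 2) = 3 * a ^ 2 := by
        rw [mul_pow, inv_pow, Real.sq_sqrt hL0'.le]; field_simp
      calc (L : ℝ) * _ ≤ L * (3 * (a * (Real.sqrt L)⁻¹) ^ 2) := by gcongr
        _ = 3 * a ^ 2 := e
        _ ≤ 3 * (C * n) ^ 2 := by
          have := sq_le_sq' (by linarith [abs_nonneg a, neg_abs_le a]) (le_of_abs_le ha)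
          linarith
        _ = _ := by ring
    simp only [hG]
    rw [H.hq, Finset.sum_mul, Finset.mul_sum]
    refine (norm_sum_le _ _).trans (Finset.sum_le_sum fun h hh => ?_)
    have hh' : h ≤ n := by simpa [Nat.lt_succ_iff] using hh
    rw [norm_mul, Complex.norm_real, Real.norm_of_nonneg (H.nn n h)]
    have h1 := hb _ (hα n h hh')
    have h2 := hb _ (hβ n h hh')
    have h3 := (norm_add_le ((L : ℂ) * phi (α n h * (Real.sqrt L)⁻¹))
      ((L : ℂ) * phi (β n h * (Real.sqrt L)⁻¹))).trans (add_le_add h1 h2)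
    have := mul_le_mul_of_nonneg_left h3 (H.nn n h)
    linarith

lemma u_bound {p : ℕ → ℝ} (hp : ∀ n, 0 ≤ p n) (hsum : HasSum p 1) {a u : ℕ → ℂ}
    (ha : ∀ n, ‖a n‖ ≤ p n) (hu0 : u 0 = 1)
    (hu : ∀ n, u (n + 1) = ∑ k ∈ Finset.range (n + 1), a (k + 1) * u (n - k)) (n : ℕ) :
    ‖u n‖ ≤ 1 := by
  induction n using Nat.strong_induction_on with
  | _ n ih =>
    rcases n with _ | n
    · simp [hu0]
    · rw [hu]
      refine (norm_sum_le _ _).trans ?_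
      calc ∑ k ∈ Finset.range (n + 1), ‖a (k + 1) * u (n - k)‖
          ≤ ∑ k ∈ Finset.range (n + 1), p (k + 1) := by
            refine Finset.sum_le_sum fun k _ => ?_
            rw [norm_mul]
            have h1 := ih (n - k) (by omega)
            have h2 := ha (k + 1)
            have := hp (k + 1)
            nlinarith [norm_nonneg (u (n - k)), norm_nonneg (a (k + 1))]
        _ ≤ ∑ k ∈ Finset.range (n + 2), p k := by
            rw [Finset.sum_range_succ' p (n + 1)]
            linarith [hp 0]
        _ ≤ 1 := by
            rw [← hsum.tsum_eq]
            exact hsum.summable.sum_le_tsum _ fun k _ => hp k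

open Topology in
theorem WH.W_lim (H : WH w q R) {α β : ℕ → ℕ → ℝ} {C : ℝ} (hC : 0 ≤ C)
    (hα : ∀ n h : ℕ, h ≤ n → |α n h| ≤ C * n) (hβ : ∀ n h : ℕ, h ≤ n → |β n h| ≤ C * n)
    (hz : ∑' n, J w (fun n h => α n h + β n h) n = 0)
    {u : ℕ → ℕ → ℂ} (hu0 : ∀ L, u L 0 = 1)
    (hu : ∀ L n, u L (n + 1) = ∑ k ∈ Finset.range (n + 1),
      (aF w α L (k + 1) + aF w β L (k + 1)) * u L (n - k)) :
    Tendsto (fun L : ℕ => ∑ k ∈ Finset.range L, aF w α L (k + 1) * u L (L - 1 - k)) atTop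
      (𝓝 ((1 / 2 : ℝ) * (Complex.exp (-((∑' n, J w (fun n h => (α n h ^ 2 + β n h ^ 2) / 2) n : ℝ) : ℂ)
        / (∑' n : ℕ, 2 * q n * n : ℝ)) / (∑' n : ℕ, 2 * q n * n : ℝ)))) := by
  have hp : ∀ n, 0 ≤ 2 * q n := fun n => by have := H.qn n; positivity
  have hps : HasSum (fun n => 2 * q n) 1 := by
    have := H.sum.mul_left 2
    rwa [show (2 : ℝ) * (1 / 2) = 1 by norm_num] at this
  have hab : ∀ L n, ‖aF w α L n + aF w β L n‖ ≤ 2 * q n := fun L n =>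
    (norm_add_le _ _).trans (by linarith [H.aF_bound α L n, H.aF_bound β L n])
  have hlim := renewal_lim (p := fun n => 2 * q n) (by simp [H.q0]) hp hps
    (by have := H.q1; positivity) H.hR
    (by simpa [mul_assoc] using H.sR.mul_left 2) (a := fun L n => aF w α L n + aF w β L n) hab
    (fun n => by
      have := (H.aF_lim α n).add (H.aF_lim β n)
      convert this using 2
      push_cast; ring) (H.kappa hC hα hβ hz) hu0 hu
  set U : ℂ := Complex.exp (-((∑' n, J w (fun n h => (α n h ^ 2 + β n h ^ 2) / 2) n : ℝ) : ℂ)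
        / (∑' n : ℕ, 2 * q n * n : ℝ)) / (∑' n : ℕ, 2 * q n * n : ℝ)
  have hub : ∀ L n, ‖u L n‖ ≤ 1 := fun L n => u_bound hp hps (hab L) (hu0 L) (hu L) n
  have hsq : HasSum (fun n => q (n + 1)) (1 / 2) := by
    have := (hasSum_nat_add_iff' 1).2 H.sum
    simpa [H.q0] using this
  have e1 : ∀ L : ℕ, ∑ k ∈ Finset.range L, aF w α L (k + 1) * u L (L - 1 - k) =
      ∑' k, if k < L then aF w α L (k + 1) * u L (L - 1 - k) else 0 := by
    intro L
    rw [tsum_eq_sum (s := Finset.range L)]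
    · refine Finset.sum_congr rfl fun k hk => ?_
      rw [if_pos (Finset.mem_range.1 hk)]
    · intro k hk
      rw [if_neg (by simpa using hk)]
  have e2 : ((1 / 2 : ℝ) : ℂ) * U = ∑' k, (q (k + 1) : ℂ) * U := by
    rw [tsum_mul_right, ← Complex.ofReal_tsum, hsq.tsum_eq]
  rw [e2]
  simp_rw [e1]
  refine tendsto_tsum_of_dominated_convergence hsq.summable ?_ (Eventually.of_forall fun L k => ?_)
  · intro k
    have := (H.aF_lim α (k + 1)).mul (hlim (1 + k))
    refine this.congr' ?_
    filter_upwards [eventually_gt_atTop k] with L hL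
    rw [if_pos hL, Nat.sub_sub]
  · split_ifs
    · rw [norm_mul]
      have h1 := H.aF_bound α L (k + 1)
      have h2 := hub L (L - 1 - k)
      nlinarith [norm_nonneg (aF w α L (k + 1)), norm_nonneg (u L (L - 1 - k)), H.qn (k + 1)]
    · simpa using H.qn (k + 1)

end PrudAux

end

section
open Filter Set
open Matrix MeasureTheory

namespace PrudAux

lemma J_lin (w : ℕ → ℕ → ℝ) (F G : ℕ → ℕ → ℝ) (a b : ℝ) (n : ℕ) :
    J w (fun n h => a * F n h + b * G n h) n = a * J w F n + b * J w G n := by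
  simp only [J, Finset.mul_sum, ← Finset.sum_add_distrib]
  exact Finset.sum_congr rfl fun h _ => by ring

lemma tsum_J_lin {w : ℕ → ℕ → ℝ} {F G : ℕ → ℕ → ℝ} (hF : Summable (J w F)) (hG : Summable (J w G))
    (a b : ℝ) : ∑' n, J w (fun n h => a * F n h + b * G n h) n =
      a * ∑' n, J w F n + b * ∑' n, J w G n := by
  simp_rw [J_lin]
  rw [Summable.tsum_add (hF.mul_left a) (hG.mul_left b), tsum_mul_left, tsum_mul_left]

lemma J_pos {w : ℕ → ℕ → ℝ} (nn : ∀ n h, 0 ≤ w n h) {F : ℕ → ℕ → ℝ} (hF : Summable (J w F))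
    (hF0 : ∀ n h, 0 ≤ F n h) {n h : ℕ} (hh : h ≤ n) (hw : 0 < w n h) (hp : 0 < F n h) :
    0 < ∑' n, J w F n := by
  refine hF.tsum_pos (fun m => Finset.sum_nonneg fun k _ => mul_nonneg (nn m k) (hF0 m k)) n ?_
  refine lt_of_lt_of_le (mul_pos hw hp) ?_
  exact Finset.single_le_sum (f := fun h => w n h * F n h)
    (fun k _ => mul_nonneg (nn n k) (hF0 n k)) (Finset.mem_range.2 (by omega))

lemma rescaled_one (n : ℕ) (π : Fin (n + 2) → ℤ × ℤ) :
    rescaled (n + 1) π 1 = ((n + 1 : ℕ) : ℝ)⁻¹ • toR (π (Fin.last _)) := by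
  unfold rescaled
  have h : ⌊((n + 1 : ℕ) : ℝ)⌋₊ = n + 1 := Nat.floor_natCast _
  simp only [one_mul, h, sub_self, zero_smul, add_zero, min_self]
  rfl

lemma expUnifPlus_eq (n : ℕ) (g : (Fin (n + 2) → ℤ × ℤ) → ℝ) :
    expUnifPlus (n + 1) g = (∑ π ∈ TS n, g π) / ((TS n).card : ℝ) := by
  have e : twoSidedSet (n + 1) = (TS n : Set (Fin (n + 2) → ℤ × ℤ)) := by
    ext π; rw [Finset.mem_coe, mem_TS]
  unfold expUnifPlus
  rw [e, finsum_mem_coe_finset]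
  simp

/-- The combination of everything. -/
theorem main_aux : ∃ c : ℝ, 0 < c ∧ ∃ a b : ℝ, |b| < a ∧
    ∀ s t : ℝ, Tendsto (fun n : ℕ => (∑ π ∈ TS n, Complex.exp (Complex.I *
      (s * ((Real.sqrt (n + 1 : ℕ) • (rescaled (n + 1) π 1 - c • evec 1)).1 : ℝ) +
       t * ((Real.sqrt (n + 1 : ℕ) • (rescaled (n + 1) π 1 - c • evec 1)).2 : ℝ)))) /
      ((TS n).card : ℂ)) atTop
      (nhds (Complex.exp (-(1 / 2) * (a * s ^ 2 + 2 * b * s * t + a * t ^ 2)))) := by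
  obtain ⟨ρ, hρ0, hρ1, hρs⟩ := exists_rho
  set w : ℕ → ℕ → ℝ := fun n h => (bet n h : ℝ) * ρ ^ n with hw
  set q : ℕ → ℝ := fun n => bb (1 : ℝ) n * ρ ^ n with hq
  have H : WH w q (0.41 / ρ) := by
    refine ⟨fun n h => by simp only [hw]; positivity, fun n => ?_, by simp [hq, bb],
      by simp [hq, bb, hρ0], hρs, ?_, ?_⟩
    · simp only [hq, hw, bb_eq (1 : ℝ) n, one_pow, mul_one, Finset.sum_mul]
    · rwa [lt_div_iff₀ hρ0, one_mul]
    · refine bb_summable.congr fun n => ?_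
      simp only [hq]
      rw [mul_assoc, ← mul_pow, mul_div_cancel₀ _ hρ0.ne']
  have hn1 : ∀ n : ℕ, (n : ℝ) ≤ n ^ 2 := fun n => by
    rcases n with _ | n
    · simp
    · push_cast; nlinarith [(Nat.cast_nonneg n : (0 : ℝ) ≤ n)]
  set Jn : ℕ → ℕ → ℝ := fun n _ => n with hJn
  set Jh : ℕ → ℕ → ℝ := fun _ h => h with hJh
  set Jnn : ℕ → ℕ → ℝ := fun n _ => n ^ 2 with hJnn
  set Jhh : ℕ → ℕ → ℝ := fun _ h => h ^ 2 with hJhh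
  set Jhn : ℕ → ℕ → ℝ := fun n h => h * n with hJhn
  have hcast : ∀ n h : ℕ, h ≤ n → (h : ℝ) ≤ n := fun n h hh => by exact_mod_cast hh
  have sn : Summable (J w Jn) := H.sJ (C := 1) fun n h hh => by
    simp only [hJn, Nat.abs_cast, one_mul]; exact hn1 n
  have sh : Summable (J w Jh) := H.sJ (C := 1) fun n h hh => by
    simp only [hJh, Nat.abs_cast, one_mul]; exact (hcast n h hh).trans (hn1 n)
  have snn : Summable (J w Jnn) := H.sJ (C := 1) fun n h hh => by
    simp [hJnn]
  have shh : Summable (J w Jhh) := H.sJ (C := 1) fun n h hh => by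
    simp only [hJhh, abs_pow, Nat.abs_cast, one_mul]
    exact pow_le_pow_left₀ (by positivity) (hcast n h hh) 2
  have shn : Summable (J w Jhn) := H.sJ (C := 1) fun n h hh => by
    simp only [hJhn, abs_mul, Nat.abs_cast, one_mul]
    have := hcast n h hh
    have h0 : (0 : ℝ) ≤ n := by positivity
    nlinarith
  set μ : ℝ := ∑' n : ℕ, 2 * q n * n with hμ
  have hμn : ∑' n, J w Jn n = μ / 2 := by
    rw [hμ, ← tsum_div_const]
    congr 1
    funext n
    simp only [J, hJn]
    rw [H.hq, ← Finset.sum_mul]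
    ring
  have w11 : 0 < w 1 1 := by simp [hw, bet_one_one, hρ0]
  have w42 : 0 < w 4 2 := by simp [hw, bet_four_two, hρ0]
  have hμ0 : 0 < μ := by
    have := J_pos H.nn sn (fun n h => by simp [hJn]) (n := 1) (h := 1) le_rfl w11 (by simp [hJn])
    rw [hμn] at this; linarith
  set Hh : ℝ := ∑' n, J w Jh n with hHh
  have hH0 : 0 < Hh :=
    J_pos H.nn sh (fun n h => by simp [hJh]) (n := 1) (h := 1) le_rfl w11 (by simp [hJh])
  set c : ℝ := Hh / μ with hc
  have hc0 : 0 < c := div_pos hH0 hμ0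
  have hcμ : c * μ = Hh := by rw [hc]; field_simp
  set NN : ℝ := ∑' n, J w Jnn n with hNN
  set HH : ℝ := ∑' n, J w Jhh n with hHH
  set HN : ℝ := ∑' n, J w Jhn n with hHN
  -- the value of a quadratic form
  have s2' : ∀ a b : ℝ, Summable (J w fun n h => a * Jhh n h + b * Jhn n h) := fun a b => by
    refine ((shh.mul_left a).add (shn.mul_left b)).congr fun n => ?_
    rw [J_lin]
  have quad : ∀ a b d : ℝ, ∑' n, J w (fun n h => 1 * (a * Jhh n h + b * Jhn n h) + d * Jnn n h) n =
      a * HH + b * HN + d * NN := by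
    intro a b d
    rw [tsum_J_lin (F := fun n h => a * Jhh n h + b * Jhn n h) (s2' a b) snn, tsum_J_lin shh shn]
    ring
  have squad : ∀ a b d : ℝ, Summable (J w
      (fun n h => 1 * (a * Jhh n h + b * Jhn n h) + d * Jnn n h)) := by
    intro a b d
    refine (((s2' a b).mul_left 1).add (snn.mul_left d)).congr fun n => ?_
    rw [J_lin w (fun n h => a * Jhh n h + b * Jhn n h)]
  set A : ℝ := HH - 2 * c * HN + 2 * c ^ 2 * NN with hA
  set B : ℝ := - 2 * c * HN + 2 * c ^ 2 * NN with hB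
  have hAmB : 0 < A - B := by
    have : A - B = HH := by rw [hA, hB]; ring
    rw [this]
    exact J_pos H.nn shh (fun n h => by simp only [hJhh]; positivity) (n := 1) (h := 1) le_rfl w11
      (by simp [hJhh])
  have hApB : 0 < A + B := by
    have e : A + B = 1 * HH + (-4 * c) * HN + (4 * c ^ 2) * NN := by rw [hA, hB]; ring
    have e2 : ∀ n h : ℕ, 1 * (1 * Jhh n h + (-4 * c) * Jhn n h) + (4 * c ^ 2) * Jnn n h =
        ((h : ℝ) - 2 * c * n) ^ 2 := by
      intro n h; simp only [hJhh, hJhn, hJnn]; ring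
    rw [e, ← quad]
    have hnn : ∀ n h : ℕ, 0 ≤ 1 * (1 * Jhh n h + (-4 * c) * Jhn n h) + (4 * c ^ 2) * Jnn n h := by
      intro n h; rw [e2]; positivity
    by_cases hc2 : c = 1 / 2
    · refine J_pos H.nn (squad _ _ _) hnn (n := 4) (h := 2) (by norm_num) w42 ?_
      rw [e2, hc2]; norm_num
    · refine J_pos H.nn (squad _ _ _) hnn (n := 1) (h := 1) (by norm_num) w11 ?_
      rw [e2]
      have : ((1 : ℕ) : ℝ) - 2 * c * (1 : ℕ) ≠ 0 := by
        intro h; apply hc2; push_cast at h; linarith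
      positivity
  refine ⟨c, hc0, A / μ, B / μ, ?_, ?_⟩
  · rw [abs_div, abs_of_pos hμ0]
    refine div_lt_div_of_pos_right ?_ hμ0
    rw [abs_lt]; constructor <;> linarith
  -- the limit of the weighted sums
  have main : ∀ s t : ℝ, Tendsto (fun n : ℕ => (ρ : ℂ) ^ (n + 1) *
      ∑ π ∈ TS n, Complex.exp (Complex.I *
      (s * ((Real.sqrt (n + 1 : ℕ) • (rescaled (n + 1) π 1 - c • evec 1)).1 : ℝ) +
       t * ((Real.sqrt (n + 1 : ℕ) • (rescaled (n + 1) π 1 - c • evec 1)).2 : ℝ)))) atTop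
      (nhds ((1 / 2 : ℝ) * (Complex.exp (-(1 / 2) *
        ((A / μ : ℝ) * s ^ 2 + 2 * (B / μ : ℝ) * s * t + (A / μ : ℝ) * t ^ 2)) / μ))) := by
    intro s t
    set α : ℕ → ℕ → ℝ := fun n h => s * h - c * (s + t) * n with hα
    set β : ℕ → ℕ → ℝ := fun n h => t * h - c * (s + t) * n with hβ
    have bnd : ∀ r : ℝ, |r| ≤ |s| + |t| → ∀ n h : ℕ, h ≤ n →
        |r * h - c * (s + t) * n| ≤ ((1 + c) * (|s| + |t|)) * n := by
      intro r hr n h hh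
      have h1 := hcast n h hh
      have h0 : (0 : ℝ) ≤ h := by positivity
      have h2 : |r * (h : ℝ)| ≤ (|s| + |t|) * n := by
        rw [abs_mul, Nat.abs_cast]
        have := abs_nonneg r
        calc |r| * (h : ℝ) ≤ (|s| + |t|) * h := by gcongr
          _ ≤ _ := by gcongr
      have h3 : |c * (s + t) * (n : ℝ)| ≤ c * (|s| + |t|) * n := by
        rw [abs_mul, abs_mul, Nat.abs_cast, abs_of_pos hc0]
        gcongr
        exact abs_add_le s t
      have h4 := (abs_sub (r * (h : ℝ)) (c * (s + t) * n))
      linarith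
    have hαb := bnd s (by linarith [abs_nonneg t])
    have hβb := bnd t (by linarith [abs_nonneg s])
    have hz : ∑' n, J w (fun n h => α n h + β n h) n = 0 := by
      have e : (fun n h => α n h + β n h) =
          fun n h => (s + t) * Jh n h + (-2 * c * (s + t)) * Jn n h := by
        funext n h; simp only [hα, hβ, hJh, hJn]; ring
      rw [e, tsum_J_lin sh sn, hμn, ← hHh, ← hcμ]
      ring
    have hκ : ∑' n, J w (fun n h => (α n h ^ 2 + β n h ^ 2) / 2) n =
        (1 / 2) * (A * s ^ 2 + 2 * B * s * t + A * t ^ 2) := by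
      have e : (fun n h => (α n h ^ 2 + β n h ^ 2) / 2) =
          fun n h => 1 * (((s ^ 2 + t ^ 2) / 2) * Jhh n h + (-c * (s + t) ^ 2) * Jhn n h) +
            (c ^ 2 * (s + t) ^ 2) * Jnn n h := by
        funext n h; simp only [hα, hβ, hJhh, hJhn, hJnn]; ring
      rw [e, quad, hA, hB]
      ring
    set X : ℕ → ℂ := fun L => Complex.exp (Complex.I * (s * (Real.sqrt L)⁻¹ : ℝ)) with hX
    set Y : ℕ → ℂ := fun L => Complex.exp (Complex.I * (t * (Real.sqrt L)⁻¹ : ℝ)) with hY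
    set Z : ℕ → ℂ := fun L => Complex.exp (Complex.I * (-c * (s + t) * (Real.sqrt L)⁻¹ : ℝ)) with hZ
    have haα : ∀ L n, aF w α L n = ((ρ : ℂ) * Z L) ^ n * bb (X L) n := by
      intro L n
      rw [bb_eq, Finset.mul_sum]
      refine Finset.sum_congr rfl fun h _ => ?_
      simp only [hw, hX, hZ, hα, mul_pow, ← Complex.exp_nat_mul]
      rw [show ∀ a b c d : ℂ, a * b * (c * d) = (c * a) * (b * d) by intros; ring, ← Complex.exp_add]
      push_cast
      congr 2
      ring
    have haβ : ∀ L n, aF w β L n = ((ρ : ℂ) * Z L) ^ n * bb (Y L) n := by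
      intro L n
      rw [bb_eq, Finset.mul_sum]
      refine Finset.sum_congr rfl fun h _ => ?_
      simp only [hw, hY, hZ, hβ, mul_pow, ← Complex.exp_nat_mul]
      rw [show ∀ a b c d : ℂ, a * b * (c * d) = (c * a) * (b * d) by intros; ring, ← Complex.exp_add]
      push_cast
      congr 2
      ring
    have hW := H.W_lim (by positivity) hαb hβb hz
      (u := fun L n => ((ρ : ℂ) * Z L) ^ n * UU (X L) (Y L) n)
      (fun L => by simp [UU_zero]) (fun L n => by
        rw [UU_succ, Finset.mul_sum]
        refine Finset.sum_congr rfl fun k hk => ?_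
        have hk' : k ≤ n := by simpa [Nat.lt_succ_iff] using hk
        rw [show n + 1 = (k + 1) + (n - k) by omega, pow_add]
        have e1 := haα L (k + 1)
        have e2 := haβ L (k + 1)
        simp only [hα, hβ] at e1 e2
        rw [e1, e2]
        ring)
    have hW2 := hW.comp (tendsto_add_atTop_nat 1)
    refine (hW2.congr fun n => ?_).trans_eq ?_
    · have hTS := TS_sum' n (x := X (n + 1)) (y := Y (n + 1)) (Complex.exp_ne_zero _)
        (Complex.exp_ne_zero _)
      have hterm : ∀ π ∈ TS n, Complex.exp (Complex.I *
        (s * ((Real.sqrt (n + 1 : ℕ) • (rescaled (n + 1) π 1 - c • evec 1)).1 : ℝ) +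
         t * ((Real.sqrt (n + 1 : ℕ) • (rescaled (n + 1) π 1 - c • evec 1)).2 : ℝ))) =
        Z (n + 1) ^ (n + 1) *
          (X (n + 1) ^ (π (Fin.last _)).1 * Y (n + 1) ^ (π (Fin.last _)).2) := by
        intro π _
        simp only [hX, hY, hZ, ← Complex.exp_nat_mul, ← Complex.exp_int_mul, ← Complex.exp_add]
        congr 1
        rw [rescaled_one]
        have hL0 : (0 : ℝ) < ((n + 1 : ℕ) : ℝ) := by positivity
        have hsq : Real.sqrt ((n + 1 : ℕ) : ℝ) * ((n + 1 : ℕ) : ℝ)⁻¹ =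
            (Real.sqrt ((n + 1 : ℕ) : ℝ))⁻¹ := by
          rw [← div_eq_mul_inv, Real.sqrt_div_self]
        have hsq2 : Real.sqrt ((n + 1 : ℕ) : ℝ) =
            ((n + 1 : ℕ) : ℝ) * (Real.sqrt ((n + 1 : ℕ) : ℝ))⁻¹ := by
          rw [← div_eq_mul_inv, Real.div_sqrt]
        have hcoord : ∀ v : ℝ, Real.sqrt ((n + 1 : ℕ) : ℝ) * (((n + 1 : ℕ) : ℝ)⁻¹ * v - c) =
            (Real.sqrt ((n + 1 : ℕ) : ℝ))⁻¹ * (v - c * ((n + 1 : ℕ) : ℝ)) := by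
          intro v
          rw [mul_sub, ← mul_assoc, hsq]
          nth_rewrite 2 [hsq2]
          ring
        simp only [toR, evec, Prod.smul_fst, Prod.smul_snd, Prod.fst_sub, Prod.snd_sub,
          smul_eq_mul, mul_one, hcoord]
        push_cast
        ring
      rw [Finset.sum_congr rfl hterm, ← Finset.mul_sum, hTS]
      rw [← mul_assoc, ← mul_pow, Finset.mul_sum]
      refine Finset.sum_congr rfl fun k hk => ?_
      have hk' : k ≤ n := by simpa [Nat.lt_succ_iff] using hk
      have e1 := haα (n + 1) (k + 1)
      simp only [hα] at e1
      rw [e1]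
      simp only [Nat.add_sub_cancel]
      have e3 : ((ρ : ℂ) * Z (n + 1)) ^ (n + 1) =
          ((ρ : ℂ) * Z (n + 1)) ^ (k + 1) * ((ρ : ℂ) * Z (n + 1)) ^ (n - k) := by
        rw [← pow_add]; congr 1; omega
      rw [e3]
      ring
    · congr 1
      have hκ' := hκ
      simp only [hα, hβ] at hκ'
      rw [hκ', ← hμ]
      congr 3
      have hμC : (μ : ℂ) ≠ 0 := by exact_mod_cast hμ0.ne'
      push_cast
      field_simp
  intro s t
  have h1 := main s t
  have h0 := main 0 0
  have hμC : (μ : ℂ) ≠ 0 := by exact_mod_cast hμ0.ne'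
  have hdiv := h1.div h0 (by simp [hμC])
  refine (hdiv.congr fun n => ?_).trans_eq ?_
  · have hρC : (ρ : ℂ) ^ (n + 1) ≠ 0 := pow_ne_zero _ (by exact_mod_cast hρ0.ne')
    simp only [Pi.div_apply]
    rw [mul_div_mul_left _ _ hρC]
    simp
  · congr 1
    simp
    field_simp

end PrudAux

end

/-- **Endpoint CLT for the 2-sided walk.** There are a constant `c > 0` and a symmetric
positive-definite covariance matrix `Σ` such that under `P^+_{unif,L}`, the law of
`√L(π̃^L_1 − c e⃗₁)` converges weakly to `N(0,Σ)`. -/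
theorem two_sided_prudent_endpoint_clt :
    ∃ c : ℝ, 0 < c ∧ ∃ S : Matrix (Fin 2) (Fin 2) ℝ, S.IsSymm ∧ S.PosDef ∧
      ∀ f : ℝ × ℝ → ℝ, Continuous f → (∃ M : ℝ, ∀ x, |f x| ≤ M) →
        Tendsto (fun L : ℕ =>
            expUnifPlus L (fun π => f (Real.sqrt L • (rescaled L π 1 - c • evec 1))))
          atTop (nhds (∫ x : ℝ × ℝ, f x * gaussDensity2 S x)) := by
  obtain ⟨c, hc, a, b, hab, h⟩ := PrudAux.main_aux
  refine ⟨c, hc, !![a, b; b, a], ?_, ?_, ?_⟩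
  · ext i j
    fin_cases i <;> fin_cases j <;> rfl
  · refine Matrix.PosDef.of_dotProduct_mulVec_pos ?_ ?_
    · ext i j
      fin_cases i <;> fin_cases j <;> simp
    · intro x hx
      have h1 : -a < b := neg_lt_of_abs_lt hab
      have h2 : b < a := lt_of_abs_lt hab
      have hx' : x 0 ≠ 0 ∨ x 1 ≠ 0 := by
        by_contra hcon
        push Not at hcon
        apply hx
        funext i
        fin_cases i
        · exact hcon.1
        · exact hcon.2
      simp [dotProduct, Matrix.mulVec, Fin.sum_univ_two]
      have key : x 0 * (a * x 0 + b * x 1) + x 1 * (b * x 0 + a * x 1) =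
        ((a + b) * (x 0 + x 1) ^ 2 + (a - b) * (x 0 - x 1) ^ 2) / 2 := by ring
      rw [key]
      have hs : 0 < x 0 ^ 2 + x 1 ^ 2 := by
        rcases hx' with h | h
        · positivity
        · positivity
      by_cases h3 : x 0 + x 1 = 0
      · have h4 : x 0 - x 1 ≠ 0 := by
          intro h4
          have e0 : x 0 = 0 := by linarith
          have e1 : x 1 = 0 := by linarith
          simp [e0, e1] at hs
        have : 0 < a - b := by linarith
        have : 0 < (x 0 - x 1) ^ 2 := by positivity
        rw [h3]
        have : 0 < (a - b) * (x 0 - x 1) ^ 2 := by positivity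
        linarith
      · have : 0 < a + b := by linarith
        have : 0 < a - b := by linarith
        have : 0 < (x 0 + x 1) ^ 2 := by positivity
        positivity
  · intro f hf ⟨M, hM⟩
    rw [← tendsto_add_atTop_iff_nat 1]
    simp only [PrudAux.expUnifPlus_eq]
    exact PrudAux.levy_transfer hab PrudAux.TS
      (fun n π => Real.sqrt ((n + 1 : ℕ) : ℝ) • (rescaled (n + 1) π 1 - c • evec 1)) h hf hM
end

section
/- For every integer L ≥ 1, the number of 2-sided prudent paths of length L factorizes over excursion lengths: |Ω_L^+| = Σ_{r≥1} Σ_{(t_1,…,t_r)} Π_{i=1}^r |I_{t_i}|, where the inner sum runs over all compositions of L, i.e. all r-tuples of integers t_i ≥ 1 with t_1 + ⋯ + t_r = L. -/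
open Filter Set

/-- The set `I_t` of horizontal excursions of length `t`: self-avoiding `t`-step paths in
`ℤ²` starting `(0,0) → (1,0)`, with steps east, north or south, staying in the upper
half-plane and ending on the `x`-axis. -/
def excSet (t : ℕ) : Set (Fin (t + 1) → ℤ × ℤ) :=
  {π | π 0 = (0, 0) ∧ (∀ _h : 0 < t, π ⟨1, by omega⟩ = (1, 0)) ∧
    (∀ i : Fin t,
      π i.succ - π i.castSucc = (1, 0) ∨ π i.succ - π i.castSucc = (0, 1) ∨
        π i.succ - π i.castSucc = (0, -1)) ∧
    Function.Injective π ∧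
    (∀ i : Fin (t + 1), 0 ≤ (π i).2) ∧
    (π (Fin.last t)).2 = 0}

/-- A unit step of the path with coordinate functions `x`, `y` at time `i`. -/
def StepN (x y : ℕ → ℤ) (i : ℕ) : Prop :=
  (x (i+1) - x i = 1 ∧ y (i+1) - y i = 0) ∨ (x (i+1) - x i = -1 ∧ y (i+1) - y i = 0) ∨
  (x (i+1) - x i = 0 ∧ y (i+1) - y i = 1) ∨ (x (i+1) - x i = 0 ∧ y (i+1) - y i = -1)

/-- Coordinate version of 2-sided prudent paths. -/
structure TwoN (L : ℕ) (x y : ℕ → ℤ) : Prop where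
  x0 : x 0 = 0
  y0 : y 0 = 0
  step : ∀ i < L, StepN x y i
  prud : ∀ i < L, ∀ k : ℕ, 1 ≤ k → ∀ j ≤ i,
    x i + k * (x (i+1) - x i) = x j → y i + k * (y (i+1) - y i) = y j → False
  quad : ∀ i < L, ∀ k : ℕ, 1 ≤ k →
    x i + k * (x (i+1) - x i) ≤ 0 → y i + k * (y (i+1) - y i) ≤ 0 → False
  mx : ∀ i ≤ L, x i ≤ x L ∧ y i ≤ y L
  first : 0 < L → x 1 = 1 ∧ y 1 = 0

/-- Coordinate version of excursions. -/
structure ExcN (t : ℕ) (x y : ℕ → ℤ) : Prop where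
  x0 : x 0 = 0
  y0 : y 0 = 0
  first : 0 < t → x 1 = 1 ∧ y 1 = 0
  step : ∀ i < t, (x (i+1) - x i = 1 ∧ y (i+1) - y i = 0) ∨
    (x (i+1) - x i = 0 ∧ y (i+1) - y i = 1) ∨ (x (i+1) - x i = 0 ∧ y (i+1) - y i = -1)
  inj : ∀ i ≤ t, ∀ j ≤ t, x i = x j → y i = y j → i = j
  nonneg : ∀ i ≤ t, 0 ≤ y i
  last : y t = 0

theorem mem_two (L : ℕ) (g : ℕ → ℤ × ℤ) :
    (fun i : Fin (L+1) => g i) ∈ twoSidedSet L ↔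
      TwoN L (fun i => (g i).1) (fun i => (g i).2) := by
  constructor
  · rintro ⟨⟨h0, h1⟩, h2, h3, h4⟩
    simp only [Fin.val_zero, Fin.val_succ, Fin.val_castSucc, Fin.val_last] at h0 h1 h2 h3 h4
    refine ⟨by simp [h0], by simp [h0], ?_, ?_, ?_, ?_, ?_⟩
    · intro i hi
      have := (h1 ⟨i, hi⟩).1
      simpa [IsStep, StepN, Prod.ext_iff] using this
    · intro i hi k hk j hj hx hy
      have := (h1 ⟨i, hi⟩).2 k hk ⟨j, by omega⟩ (by simpa [Fin.le_def] using hj)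
      apply this
      ext <;> simpa using by assumption
    · intro i hi k hk hx hy
      have := h2 ⟨i, hi⟩ k hk
      apply this
      constructor <;> simpa using by assumption
    · intro i hi
      exact h3 ⟨i, by omega⟩
    · intro h
      have := h4 h
      simp [this]
  · rintro ⟨hx0, hy0, hs, hp, hq, hm, hf⟩
    refine ⟨⟨?_, ?_⟩, ?_, ?_, ?_⟩
    · ext <;> simpa using by assumption
    · intro i
      refine ⟨?_, ?_⟩
      · have := hs i i.2
        simpa [IsStep, StepN, Prod.ext_iff] using this
      · intro k hk j hj he
        refine hp i i.2 k hk j (by simpa [Fin.le_def] using hj) ?_ ?_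
        · simpa using congrArg Prod.fst he
        · simpa using congrArg Prod.snd he
    · rintro i k hk ⟨h1, h2⟩
      refine hq i i.2 k hk ?_ ?_
      · simpa using h1
      · simpa using h2
    · intro i
      exact hm i (by omega)
    · intro h
      exact Prod.ext (hf h).1 (hf h).2

theorem mem_exc (L : ℕ) (g : ℕ → ℤ × ℤ) :
    (fun i : Fin (L+1) => g i) ∈ excSet L ↔
      ExcN L (fun i => (g i).1) (fun i => (g i).2) := by
  constructor
  · rintro ⟨h0, h1, h2, h3, h4, h5⟩
    simp only [Fin.val_zero, Fin.val_succ, Fin.val_castSucc, Fin.val_last] at h0 h1 h2 h3 h4 h5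
    refine ⟨by simp [h0], by simp [h0], ?_, ?_, ?_, ?_, h5⟩
    · intro h
      have := h1 h
      simp [this]
    · intro i hi
      have := h2 ⟨i, hi⟩
      simpa [Prod.ext_iff] using this
    · intro i hi j hj hx hy
      have := @h3 ⟨i, by omega⟩ ⟨j, by omega⟩ (Prod.ext hx hy)
      simpa using this
    · intro i hi
      exact h4 ⟨i, by omega⟩
  · rintro ⟨hx0, hy0, hf, hs, hi, hn, hl⟩
    refine ⟨?_, ?_, ?_, ?_, ?_, hl⟩
    · ext <;> simpa using by assumption
    · intro h
      exact Prod.ext (hf h).1 (hf h).2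
    · intro i
      have := hs i i.2
      simpa [Prod.ext_iff] using this
    · intro i j he
      exact Fin.ext (hi i (by omega) j (by omega) (congrArg Prod.fst he) (congrArg Prod.snd he))
    · intro i
      exact hn i (by omega)

theorem ExcN.mono {t x y} (h : ExcN t x y) : ∀ j ≤ t, ∀ i ≤ j, x i ≤ x j := by
  intro j
  induction j with
  | zero => intro _ i hi; simp [Nat.le_zero.mp hi]
  | succ j ih =>
    intro hj i hi
    rcases Nat.lt_or_ge j i with h1 | h1
    · have : i = j + 1 := by omega
      simp [this]
    · have := ih (by omega) i h1
      have := h.step j (by omega)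
      omega

theorem ExcN.key {t x y} (h : ExcN t x y) : ∀ i < t, ∀ j ≤ i, x j = x (i+1) →
    (y (i+1) = y i + 1 ∧ y j < y (i+1)) ∨ (y (i+1) = y i - 1 ∧ y (i+1) < y j) := by
  intro i
  induction i with
  | zero =>
    intro hi j hj he
    have := h.step 0 hi
    obtain rfl : j = 0 := by omega
    omega
  | succ i ih =>
    intro hi j hj he
    have h1 := h.step (i+1) hi
    have h2 := h.mono (i+1) (by omega) j hj
    rcases Nat.lt_or_ge i j with h3 | h3
    · obtain rfl : j = i + 1 := by omega
      omega
    · have h4 := ih (by omega) j h3 (by omega)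
      have h5 := h.inj i (by omega) (i+1+1) (by omega)
      have h6 := h.mono i (by omega) j h3
      have h7 := h.mono (i+1) (by omega) i (by omega)
      omega

theorem ExcN.prud {t x y} (h : ExcN t x y) : ∀ i < t, ∀ k : ℕ, 1 ≤ k → ∀ j ≤ i,
    x i + k * (x (i+1) - x i) = x j → y i + k * (y (i+1) - y i) = y j → False := by
  intro i hi k hk j hj hx hy
  have hm := h.mono i (by omega) j hj
  have hkey := h.key i hi j hj
  rcases h.step i hi with ⟨a, b⟩ | ⟨a, b⟩ | ⟨a, b⟩ <;> rw [a] at hx <;> rw [b] at hy <;> omega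

theorem ivt (x : ℕ → ℤ) (h0 : x 0 = 0) : ∀ t : ℕ, (∀ i < t, x (i+1) - x i ≤ 1) →
    ∀ a : ℤ, 0 ≤ a → a ≤ x t → ∃ j ≤ t, x j = a := by
  intro t
  induction t with
  | zero => intro _ a h1 h2; exact ⟨0, le_rfl, by omega⟩
  | succ t ih =>
    intro hs a h1 h2
    by_cases h : a ≤ x t
    · obtain ⟨j, hj, e⟩ := ih (fun i hi => hs i (by omega)) a h1 h
      exact ⟨j, by omega, e⟩
    · have := hs t (by omega)
      exact ⟨t+1, le_rfl, by omega⟩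

theorem split_exc {L t x y} (h : TwoN L x y) (ht : 1 ≤ t) (htL : t ≤ L)
    (hy : ∀ i ≤ t, y i ≤ 0) (hn : t < L → 0 < y (t+1)) : ExcN t x (fun i => - y i) := by
  have hyt : y t = 0 := by
    have h1 := hy t le_rfl
    rcases Nat.lt_or_ge t L with h2 | h2
    · have := hn h2
      have := h.step t h2
      unfold StepN at this
      omega
    · obtain rfl : t = L := by omega
      have := (h.mx 0 (by omega)).2
      have := h.y0
      omega
  refine ⟨h.x0, by simp [h.y0], fun _ => ⟨(h.first (by omega)).1, by simp [h.first (by omega)]⟩,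
    ?_, ?_, fun i hi => by simpa using hy i hi, by simp [hyt]⟩
  · intro i hi
    have h1 := h.quad i (by omega) ((x i).toNat + 1) (by omega)
    have h2 := hy i (by omega)
    rcases h.step i (by omega) with ⟨a, b⟩ | ⟨a, b⟩ | ⟨a, b⟩ | ⟨a, b⟩
    · omega
    · exfalso
      rw [a, b] at h1
      apply h1
      · push_cast; omega
      · omega
    · omega
    · omega
  · have key : ∀ i j, i < j → j ≤ t → x i = x j → y i = y j → False := by
      intro i j hij hj hx hy
      obtain ⟨j, rfl⟩ : ∃ j', j = j' + 1 := ⟨j - 1, by omega⟩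
      refine h.prud j (by omega) 1 le_rfl i (by omega) ?_ ?_
      · push_cast; omega
      · push_cast; omega
    intro i hi j hj hx hy
    rcases lt_trichotomy i j with h1 | h1 | h1
    · exact (key i j h1 hj hx (by simpa using hy)).elim
    · exact h1
    · exact (key j i h1 hi hx.symm (by simpa using hy.symm)).elim

theorem split_two {L t x y} (h : TwoN L x y) (ht : 1 ≤ t) (htL : t ≤ L)
    (hy : ∀ i ≤ t, y i ≤ 0) (hn : t < L → 0 < y (t+1)) :
    TwoN (L - t) (fun i => y (t + i)) (fun i => x (t + i) - x t) := by
  have he := split_exc h ht htL hy hn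
  have hyt : y t = 0 := by simpa using he.last
  have hfirst : t < L → x (t+1) = x t ∧ y (t+1) = 1 := by
    intro h1
    have := hn h1
    have := h.step t h1
    unfold StepN at this
    omega
  have claim : ∀ i, t < i → i < L → ¬ (x i ≤ x t ∧ y i ≤ 0) → ∀ k : ℕ, 1 ≤ k →
      x i + k * (x (i+1) - x i) ≤ x t → y i + k * (y (i+1) - y i) ≤ 0 → False := by
    intro i hti hi hnot k hk hx hy'
    rcases h.step i hi with ⟨a, b⟩ | ⟨a, b⟩ | ⟨a, b⟩ | ⟨a, b⟩
    · rw [a] at hx; rw [b] at hy'; omega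
    · have h1 := h.quad i hi ((x i).toNat + 1) (by omega)
      rw [a, b] at h1
      rw [b] at hy'
      apply h1
      · push_cast; omega
      · omega
    · rw [a] at hx; rw [b] at hy'; omega
    · have hxi : x i ≤ x t := by rw [a] at hx; omega
      by_cases h0 : x i ≤ 0
      · have h1 := h.quad i hi k hk
        rw [a, b] at h1
        rw [b] at hy'
        exact h1 (by omega) (by omega)
      · obtain ⟨j, hj, e⟩ := ivt x h.x0 t (fun i hi => by have := he.step i hi; omega) (x i)
          (by omega) hxi
        have h2 := hy j hj
        have h1 := h.prud i hi (y i - y j).toNat (by omega) j (by omega)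
        rw [a, b] at h1
        exact h1 (by omega) (by omega)
  have hnot : ∀ i, t < i → i ≤ L → ¬ (x i ≤ x t ∧ y i ≤ 0) := by
    intro i hi
    induction i, hi using Nat.le_induction with
    | base => intro h1; change ¬ (x (t+1) ≤ x t ∧ y (t+1) ≤ 0); have := hn (by omega); omega
    | succ i hi ih =>
      intro h1 h2
      refine claim i hi (by omega) (ih (by omega)) 1 le_rfl ?_ ?_
      · push_cast; omega
      · push_cast; omega
  refine ⟨by simpa using hyt, by simp, ?_, ?_, ?_, ?_, ?_⟩
  · intro i hi
    have := h.step (t+i) (by omega)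
    unfold StepN at *
    simp only [← add_assoc]
    omega
  · intro i hi k hk j hj h1 h2
    simp only [← add_assoc] at h1 h2
    refine h.prud (t+i) (by omega) k hk (t+j) (by omega) ?_ ?_
    · linarith
    · linarith
  · intro i hi k hk h1 h2
    simp only [← add_assoc] at h1 h2
    rcases Nat.eq_zero_or_pos i with h0 | h0
    · subst h0
      have := hfirst (by omega)
      simp only [add_zero, this.2, hyt] at h1
      omega
    · refine claim (t+i) (by omega) (by omega) (hnot _ (by omega) (by omega)) k hk ?_ ?_
      · linarith
      · linarith
  · intro i hi
    have := h.mx (t+i) (by omega)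
    have e : t + (L - t) = L := by omega
    simp only [e]
    omega
  · intro h0
    have := hfirst (by omega)
    change y (t+1) = 1 ∧ x (t+1) - x t = 0
    omega

/-- First coordinate of the concatenation. -/
def gx (t : ℕ) (px qy : ℕ → ℤ) (i : ℕ) : ℤ := if i ≤ t then px i else px t + qy (i - t)
/-- Second coordinate of the concatenation. -/
def gy (t : ℕ) (py qx : ℕ → ℤ) (i : ℕ) : ℤ := if i ≤ t then - py i else qx (i - t)

theorem glue_two {t m px py qx qy} (hp : ExcN t px py) (hq : TwoN m qx qy) (ht : 1 ≤ t) :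
    TwoN (t + m) (gx t px qy) (gy t py qx) := by
  have lox : ∀ i ≤ t, gx t px qy i = px i := fun i hi => by simp [gx, hi]
  have loy : ∀ i ≤ t, gy t py qx i = - py i := fun i hi => by simp [gy, hi]
  have hix : ∀ i, gx t px qy (t + i) = px t + qy i := fun i => by
    rcases Nat.eq_zero_or_pos i with h | h
    · simp [gx, h, hq.y0]
    · simp [gx]; omega
  have hiy : ∀ i, gy t py qx (t + i) = qx i := fun i => by
    rcases Nat.eq_zero_or_pos i with h | h
    · simp [gy, h, hq.x0, hp.last]
    · simp [gy]; omega
  have hix' : ∀ i, gx t px qy (t + i + 1) = px t + qy (i+1) := fun i => hix (i+1)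
  have hiy' : ∀ i, gy t py qx (t + i + 1) = qx (i+1) := fun i => hiy (i+1)
  have cases : ∀ i, t ≤ i → ∃ i', i = t + i' := fun i hi => ⟨i - t, by omega⟩
  refine ⟨?_, ?_, ?_, ?_, ?_, ?_, ?_⟩
  · rw [lox 0 (by omega), hp.x0]
  · rw [loy 0 (by omega), hp.y0]; rfl
  · intro i hi
    unfold StepN
    rcases Nat.lt_or_ge i t with h | h
    · rw [lox i (by omega), lox (i+1) (by omega), loy i (by omega), loy (i+1) (by omega)]
      have := hp.step i h
      omega
    · obtain ⟨i, rfl⟩ := cases i h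
      have := hq.step i (by omega)
      unfold StepN at this
      rw [hix, hiy, hix', hiy']
      omega
  · intro i hi k hk j hj
    rcases Nat.lt_or_ge i t with h | h
    · rw [lox i (by omega), lox (i+1) (by omega), loy i (by omega), loy (i+1) (by omega),
        lox j (by omega), loy j (by omega)]
      intro h1 h2
      refine hp.prud i h k hk j hj h1 ?_
      linarith
    · obtain ⟨i, rfl⟩ := cases i h
      rw [hix, hiy, hix', hiy']
      rcases Nat.lt_or_ge j t with h' | h'
      · rw [lox j (by omega), loy j (by omega)]
        intro h1 h2
        have h3 := hp.mono t le_rfl j (by omega)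
        have h4 := hp.nonneg j (by omega)
        refine hq.quad i (by omega) k hk ?_ ?_
        · linarith
        · linarith
      · obtain ⟨j, rfl⟩ := cases j h'
        rw [hix, hiy]
        intro h1 h2
        refine hq.prud i (by omega) k hk j (by omega) ?_ ?_
        · linarith
        · linarith
  · intro i hi k hk
    rcases Nat.lt_or_ge i t with h | h
    · rw [lox i (by omega), lox (i+1) (by omega), loy i (by omega), loy (i+1) (by omega)]
      intro h1 h2
      have h3 := hp.mono i (by omega) 0 (by omega)
      have h3' := hp.x0
      rcases Nat.eq_zero_or_pos i with h0 | h0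
      · subst h0
        have := hp.first ht
        simp only [zero_add, this.1, h3'] at h1
        omega
      have h4 := hp.mono i (by omega) 1 (by omega)
      have h5 := (hp.first ht).1
      rcases hp.step i h with ⟨a, b⟩ | ⟨a, b⟩ | ⟨a, b⟩ <;> rw [a] at h1 <;> omega
    · obtain ⟨i, rfl⟩ := cases i h
      rw [hix, hiy, hix', hiy']
      intro h1 h2
      have h3 := hp.mono t le_rfl 0 (by omega)
      have h4 := hp.x0
      refine hq.quad i (by omega) k hk ?_ ?_
      · linarith
      · linarith
  · intro i hi
    rw [hix, hiy]
    have h0 := hq.mx 0 (by omega)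
    have h0x := hq.x0
    have h0y := hq.y0
    rcases Nat.lt_or_ge i t with h | h
    · rw [lox i (by omega), loy i (by omega)]
      have h3 := hp.mono t le_rfl i (by omega)
      have h4 := hp.nonneg i (by omega)
      omega
    · obtain ⟨i, rfl⟩ := cases i h
      rw [hix, hiy]
      have := hq.mx i (by omega)
      omega
  · intro _
    rw [lox 1 ht, loy 1 ht]
    have := hp.first ht
    omega

/-- Extension of a finite path to all times. -/
def extN {L : ℕ} (π : Fin (L+1) → ℤ × ℤ) (i : ℕ) : ℤ × ℤ := π ⟨min i L, by omega⟩

theorem extN_coe {L : ℕ} (π : Fin (L+1) → ℤ × ℤ) (i : Fin (L+1)) : extN π i = π i := by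
  unfold extN
  congr 1
  ext
  simp
  omega

theorem restr_extN {L : ℕ} (π : Fin (L+1) → ℤ × ℤ) :
    (fun i : Fin (L+1) => extN π i) = π := funext (extN_coe π)

theorem two_ext {L : ℕ} {π : Fin (L+1) → ℤ × ℤ} (h : π ∈ twoSidedSet L) :
    TwoN L (fun i => (extN π i).1) (fun i => (extN π i).2) := by
  rw [← mem_two, restr_extN]; exact h

theorem exc_ext {L : ℕ} {π : Fin (L+1) → ℤ × ℤ} (h : π ∈ excSet L) :
    ExcN L (fun i => (extN π i).1) (fun i => (extN π i).2) := by
  rw [← mem_exc, restr_extN]; exact h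

theorem bdd_of_step {L : ℕ} {x y : ℕ → ℤ} (hx : x 0 = 0) (hy : y 0 = 0)
    (h : ∀ i < L, StepN x y i) : ∀ i ≤ L, -i ≤ x i ∧ x i ≤ i ∧ -i ≤ y i ∧ y i ≤ i := by
  intro i
  induction i with
  | zero => intro _; simp [hx, hy]
  | succ i ih =>
    intro hi
    have h1 := ih (by omega)
    have h2 := h i (by omega)
    unfold StepN at h2
    push_cast
    omega

theorem finite_of_step {L : ℕ} {S : Set (Fin (L+1) → ℤ × ℤ)}
    (h : ∀ π ∈ S, (extN π 0).1 = 0 ∧ (extN π 0).2 = 0 ∧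
      ∀ i < L, StepN (fun i => (extN π i).1) (fun i => (extN π i).2) i) : S.Finite := by
  refine (Set.finite_Icc (fun _ => ((-L : ℤ), (-L : ℤ))) (fun _ => ((L : ℤ), (L : ℤ)))).subset ?_
  intro π hπ
  obtain ⟨h1, h2, h3⟩ := h π hπ
  have hb := bdd_of_step (x := fun i => (extN π i).1) (y := fun i => (extN π i).2) h1 h2 h3
  constructor
  · intro i
    have h4 := hb i (by omega)
    simp only [extN_coe] at h4
    refine Prod.mk_le_mk.mpr ⟨?_, ?_⟩ <;> omega
  · intro i
    have h4 := hb i (by omega)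
    simp only [extN_coe] at h4
    refine Prod.mk_le_mk.mpr ⟨?_, ?_⟩ <;> omega

theorem finite_two (L : ℕ) : (twoSidedSet L).Finite :=
  finite_of_step fun _ hπ => ⟨(two_ext hπ).x0, (two_ext hπ).y0, (two_ext hπ).step⟩

theorem finite_exc (L : ℕ) : (excSet L).Finite :=
  finite_of_step fun _ hπ => ⟨(exc_ext hπ).x0, (exc_ext hπ).y0, fun i hi => by
    rcases (exc_ext hπ).step i hi with h | h | h
    · exact Or.inl h
    · exact Or.inr (Or.inr (Or.inl h))
    · exact Or.inr (Or.inr (Or.inr h))⟩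

theorem card_two_zero : Nat.card ↥(twoSidedSet 0) = 1 := by
  have : twoSidedSet 0 = {fun _ => (0, 0)} := by
    ext π
    constructor
    · intro h
      have := two_ext h
      refine funext fun i => ?_
      have hi : i = 0 := by omega
      subst hi
      exact h.1.1
    · rintro rfl
      refine ⟨⟨rfl, fun i => i.elim0⟩, fun i => i.elim0, fun i => by simp, fun h => by omega⟩
  rw [this]
  simp

/-- Concatenation of paths. -/
def gluePath (t : ℕ) (p q : ℕ → ℤ × ℤ) (i : ℕ) : ℤ × ℤ :=
  (gx t (fun i => (p i).1) (fun i => (q i).2) i, gy t (fun i => (p i).2) (fun i => (q i).1) i)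

/-- The gluing map. -/
def glueMap (L : ℕ) : (Σ t : Fin L, ↥(excSet (t+1)) × ↥(twoSidedSet (L - (t+1)))) →
    ↥(twoSidedSet L) := fun s =>
  ⟨fun i => gluePath (s.1+1) (extN s.2.1.1) (extN s.2.2.1) i, by
    have h := glue_two (exc_ext s.2.1.2) (two_ext s.2.2.2) (by omega)
    have e : (s.1 : ℕ) + 1 + (L - (s.1 + 1)) = L := by omega
    rw [e] at h
    exact (mem_two L _).2 h⟩

theorem glue_inj (L : ℕ) : Function.Injective (glueMap L) := by
  have aux : ∀ s s', glueMap L s = glueMap L s' → ¬ s.1 < s'.1 := by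
    rintro ⟨t, p, q⟩ ⟨t', p', q'⟩ h hlt
    simp only [Fin.lt_def] at hlt
    have h1 := congrArg Prod.snd (congrFun (congrArg Subtype.val h) ⟨t + 1 + 1, by omega⟩)
    simp only [glueMap, gluePath, gy] at h1
    rw [if_neg (by omega), if_pos (by omega)] at h1
    have h2 := (two_ext q.2).first (by omega)
    have h3 := (exc_ext p'.2).nonneg (t + 1 + 1) (by omega)
    have e : (t : ℕ) + 1 + 1 - (t + 1) = 1 := by omega
    rw [e] at h1
    omega
  intro s s' h
  have ht : s.1 = s'.1 := le_antisymm (not_lt.1 (aux s' s h.symm)) (not_lt.1 (aux s s' h))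
  obtain ⟨t, p, q⟩ := s
  obtain ⟨t', p', q'⟩ := s'
  obtain rfl : t = t' := ht
  have hp : p = p' := by
    refine Subtype.ext (funext fun i => ?_)
    have h1 := congrFun (congrArg Subtype.val h) ⟨i, by omega⟩
    have hi : (i : ℕ) ≤ t + 1 := by omega
    simp only [glueMap, gluePath, gx, gy, if_pos hi, extN_coe, Prod.mk.injEq, neg_inj] at h1
    exact Prod.ext h1.1 h1.2
  subst hp
  have hq : q = q' := by
    refine Subtype.ext (funext fun i => ?_)
    rcases Nat.eq_zero_or_pos (i : ℕ) with h0 | h0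
    · obtain rfl : i = 0 := Fin.ext h0
      rw [q.2.1.1, q'.2.1.1]
    · have h1 := congrFun (congrArg Subtype.val h) ⟨t + 1 + i, by omega⟩
      have hi : ¬ ((t : ℕ) + 1 + i ≤ t + 1) := by omega
      simp only [glueMap, gluePath, gx, gy, if_neg hi, Nat.add_sub_cancel_left, extN_coe,
        Prod.mk.injEq, add_right_inj] at h1
      exact Prod.ext h1.2 h1.1
  subst hq
  rfl

theorem glue_surj (L : ℕ) (hL : 1 ≤ L) : Function.Surjective (glueMap L) := by
  rintro ⟨π, hπ⟩
  have h := two_ext hπ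
  obtain ⟨t, ht, htL, hy, hn⟩ : ∃ t, 1 ≤ t ∧ t ≤ L ∧ (∀ i ≤ t, (extN π i).2 ≤ 0) ∧
      (t < L → 0 < (extN π (t+1)).2) := by
    by_cases hall : ∀ i ≤ L, (extN π i).2 ≤ 0
    · exact ⟨L, hL, le_rfl, hall, fun h => by omega⟩
    · have hall' : ∃ i, i ≤ L ∧ 0 < (extN π i).2 := by
        push Not at hall
        exact hall
      classical
      have hs := Nat.find_spec hall'
      have hm := fun i => @Nat.find_min _ _ hall' i
      generalize Nat.find hall' = n at hs hm
      have h0 : n ≠ 0 := by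
        rintro rfl
        have := h.y0
        omega
      have h1 : n ≠ 1 := by
        rintro rfl
        have := h.first (by omega)
        omega
      refine ⟨n - 1, by omega, by omega, ?_, ?_⟩
      · intro i hi
        have := hm i (by omega)
        by_contra hc
        exact this ⟨by omega, by omega⟩
      · intro _
        have e : n - 1 + 1 = n := by omega
        rw [e]
        exact hs.2
  obtain ⟨t, rfl⟩ : ∃ t', t = t' + 1 := ⟨t - 1, by omega⟩
  have he := split_exc h ht htL hy hn
  have h2 := split_two h ht htL hy hn
  have he' := (mem_exc (t+1) (fun i => ((extN π i).1, -(extN π i).2))).2 he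
  have h2' := (mem_two (L-(t+1)) (fun i => ((extN π (t+1+i)).2,
    (extN π (t+1+i)).1 - (extN π (t+1)).1))).2 h2
  refine ⟨⟨⟨t, by omega⟩, ⟨_, he'⟩, ⟨_, h2'⟩⟩, Subtype.ext (funext fun i => ?_)⟩
  by_cases hi : (i : ℕ) ≤ t + 1
  · have e : min (i : ℕ) (min (t + 1) L) = i := by omega
    simp [glueMap, gluePath, gx, gy, if_pos hi, extN, e]
  · have e1 : min (t + 1 + min (i - (t+1)) (L - (t+1))) L = (i : ℕ) := by omega
    simp [glueMap, gluePath, gx, gy, if_neg hi, extN, e1]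

theorem card_rec (L : ℕ) (hL : 1 ≤ L) : Nat.card ↥(twoSidedSet L) =
    ∑ t : Fin L, Nat.card ↥(excSet (t+1)) * Nat.card ↥(twoSidedSet (L - (t+1))) := by
  have := fun L => (finite_two L).to_subtype
  have := fun L => (finite_exc L).to_subtype
  rw [← Nat.card_eq_of_bijective _ ⟨glue_inj L, glue_surj L hL⟩, Nat.card_sigma]
  simp [Nat.card_prod]

/-- Number of excursions, set to zero at length zero. -/
noncomputable def aW (t : ℕ) : ℕ := if t = 0 then 0 else Nat.card ↥(excSet t)

/-- Weighted sum over tuples. -/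
noncomputable def cW (r n : ℕ) : ℕ :=
  ∑ tup ∈ Finset.Nat.antidiagonalTuple r n, ∏ i : Fin r, aW (tup i)

theorem cW_eq (r n : ℕ) :
    ∑ tup ∈ (Finset.Nat.antidiagonalTuple r n).filter (fun tup => ∀ i, 0 < tup i),
      ∏ i : Fin r, Nat.card ↥(excSet (tup i)) = cW r n := by
  rw [Finset.sum_filter, cW]
  refine Finset.sum_congr rfl fun tup _ => ?_
  split_ifs with h
  · refine Finset.prod_congr rfl fun i _ => ?_
    rw [aW, if_neg (h i).ne']
  · push Not at h
    obtain ⟨i, hi⟩ := h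
    symm
    refine Finset.prod_eq_zero (Finset.mem_univ i) ?_
    rw [aW, if_pos (by omega)]

theorem cW_succ (r n : ℕ) :
    cW (r+1) n = ∑ p ∈ Finset.HasAntidiagonal.antidiagonal n, aW p.1 * cW r p.2 := by
  simp only [cW, Finset.mul_sum]
  rw [Finset.sum_sigma']
  refine Finset.sum_bij' (fun tup _ => ⟨(tup 0, ∑ i, Fin.tail tup i), Fin.tail tup⟩)
    (fun s _ => Fin.cons s.1.1 s.2) ?_ ?_ ?_ ?_ ?_
  · intro tup h
    rw [Finset.Nat.mem_antidiagonalTuple, Fin.sum_univ_succ] at h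
    simp only [Finset.mem_sigma, Finset.HasAntidiagonal.mem_antidiagonal, Finset.Nat.mem_antidiagonalTuple]
    exact ⟨h, trivial⟩
  · rintro ⟨⟨i, j⟩, x⟩ h
    simp only [Finset.mem_sigma, Finset.HasAntidiagonal.mem_antidiagonal, Finset.Nat.mem_antidiagonalTuple] at h ⊢
    rw [Fin.sum_univ_succ]
    simp only [Fin.cons_zero, Fin.cons_succ]
    omega
  · intro tup h
    simp
  · rintro ⟨⟨i, j⟩, x⟩ h
    simp only [Finset.mem_sigma, Finset.HasAntidiagonal.mem_antidiagonal, Finset.Nat.mem_antidiagonalTuple] at h ⊢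
    obtain ⟨h1, rfl⟩ := h
    simp
  · intro tup h
    rw [Fin.prod_univ_succ]
    rfl

theorem card_rec' (L : ℕ) (hL : 1 ≤ L) : Nat.card ↥(twoSidedSet L) =
    ∑ p ∈ Finset.HasAntidiagonal.antidiagonal L, aW p.1 * Nat.card ↥(twoSidedSet p.2) := by
  rw [card_rec L hL, Finset.Nat.sum_antidiagonal_eq_sum_range_succ
    (fun i j => aW i * Nat.card ↥(twoSidedSet j)), Finset.sum_range_succ', ← Fin.sum_univ_eq_sum_range
    (fun t => aW (t+1) * Nat.card ↥(twoSidedSet (L - (t+1))))]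
  simp [aW]

theorem cW_zero_pos (n : ℕ) (hn : 1 ≤ n) : cW 0 n = 0 := by
  obtain ⟨m, rfl⟩ : ∃ m, n = m + 1 := ⟨n - 1, by omega⟩
  simp [cW]

theorem card_eq_cW (N : ℕ) : ∀ n ≤ N,
    Nat.card ↥(twoSidedSet n) = ∑ r ∈ Finset.range (N+1), cW r n := by
  induction N with
  | zero =>
    intro n hn
    obtain rfl : n = 0 := by omega
    rw [card_two_zero]
    simp [cW]
  | succ N ih =>
    intro n hn
    rw [Finset.sum_range_succ']
    simp only [cW_succ]
    rw [Finset.sum_comm]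
    simp only [← Finset.mul_sum]
    have key : ∑ p ∈ Finset.HasAntidiagonal.antidiagonal n, aW p.1 * ∑ r ∈ Finset.range (N+1), cW r p.2 =
        ∑ p ∈ Finset.HasAntidiagonal.antidiagonal n, aW p.1 * Nat.card ↥(twoSidedSet p.2) := by
      refine Finset.sum_congr rfl fun p hp => ?_
      rw [Finset.HasAntidiagonal.mem_antidiagonal] at hp
      by_cases h0 : p.1 = 0
      · simp [aW, h0]
      · rw [ih p.2 (by omega)]
    rw [key]
    rcases Nat.eq_zero_or_pos n with h0 | h0
    · subst h0
      rw [card_two_zero]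
      simp [cW, aW]
    · rw [card_rec' n h0, cW_zero_pos n h0, add_zero]

open Finset in
/-- **Excursion decomposition of 2-sided prudent paths:** for `L ≥ 1`,
`|Ω_L^+| = Σ_{r≥1} Σ_{t_1+⋯+t_r=L, t_i≥1} Π_{i=1}^r |I_{t_i}|` (the sum over `r` may be
restricted to `1 ≤ r ≤ L` since a composition of `L` has at most `L` parts). -/
theorem card_two_sided_eq_sum_over_compositions :
    ∀ L : ℕ, 1 ≤ L →
      Nat.card ↥(twoSidedSet L) =
        ∑ r ∈ Finset.Icc 1 L,
          ∑ tup ∈ (Finset.Nat.antidiagonalTuple r L).filter (fun tup => ∀ i, 0 < tup i),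
            ∏ i : Fin r, Nat.card ↥(excSet (tup i)) := by
  intro L hL
  rw [card_eq_cW L L le_rfl]
  simp only [cW_eq]
  symm
  refine Finset.sum_subset ?_ ?_
  · intro r hr
    simp only [Finset.mem_Icc, Finset.mem_range] at *
    omega
  · intro r hr hr'
    simp only [Finset.mem_Icc, Finset.mem_range] at *
    obtain rfl : r = 0 := by omega
    exact cW_zero_pos L hL
end

section
/- There exists λ* > 0 such that Σ_{t=1}^∞ 2^{−t} |I_t| e^{−λ* t} = 1; i.e. the generating function K̂(λ) = Σ_{t≥1} K(t) e^{−λt} of K(t) := 2^{−t}|I_t| takes the value 1 at some positive λ*. -/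
/-- A word of vertical increments (`0` = east step) is admissible from height `h`, last step `d`. -/
def goodW : ℤ → ℤ → List ℤ → Prop
  | h, _, [] => h = 0
  | h, d, e :: l => (e = 0 ∨ e = 1 ∨ e = -1) ∧ d * e ≠ -1 ∧ 0 ≤ h + e ∧ goodW (h + e) e l

/-- The finite set of admissible words of length `n`. -/
def wordsW : ℕ → ℤ → ℤ → Finset (List ℤ)
  | 0, h, _ => if h = 0 then {[]} else ∅
  | n + 1, h, d =>
    ((if 0 ≤ h then (wordsW n h 0).image (List.cons 0) else ∅) ∪
      (if d = -1 ∨ h + 1 < 0 then ∅ else (wordsW n (h + 1) 1).image (List.cons 1))) ∪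
      (if d = 1 ∨ h - 1 < 0 then ∅ else (wordsW n (h - 1) (-1)).image (List.cons (-1)))

/-- Counting function of `wordsW`. -/
def cntW : ℕ → ℤ → ℤ → ℕ
  | 0, h, _ => if h = 0 then 1 else 0
  | n + 1, h, d =>
    ((if 0 ≤ h then cntW n h 0 else 0) +
      (if d = -1 ∨ h + 1 < 0 then 0 else cntW n (h + 1) 1)) +
      (if d = 1 ∨ h - 1 < 0 then 0 else cntW n (h - 1) (-1))

theorem card_wordsW (n : ℕ) (h d : ℤ) : (wordsW n h d).card = cntW n h d := by
  induction n generalizing h d with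
  | zero => simp only [wordsW, cntW]; split_ifs <;> simp
  | succ n ih =>
    simp only [wordsW, cntW]
    rw [Finset.card_union_of_disjoint, Finset.card_union_of_disjoint]
    · congr 1
      · congr 1
        · split_ifs
          · rw [Finset.card_image_of_injective _ List.cons_injective, ih]
          · simp
        · split_ifs
          · simp
          · rw [Finset.card_image_of_injective _ List.cons_injective, ih]
      · split_ifs
        · simp
        · rw [Finset.card_image_of_injective _ List.cons_injective, ih]
    · rw [Finset.disjoint_left]
      intro a; split_ifs <;> simp <;> rintro x - rfl <;> simp
    · rw [Finset.disjoint_left]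
      intro a ha hb
      have h1 : a.head? = some (-1) := by
        split_ifs at hb
        · simp at hb
        · obtain ⟨x, -, rfl⟩ := Finset.mem_image.mp hb; rfl
      rcases Finset.mem_union.mp ha with ha | ha
      · split_ifs at ha
        · obtain ⟨x, -, rfl⟩ := Finset.mem_image.mp ha; simp at h1
        · simp at ha
      · split_ifs at ha
        · simp at ha
        · obtain ⟨x, -, rfl⟩ := Finset.mem_image.mp ha; simp at h1

theorem mem_wordsW (n : ℕ) (h d : ℤ) (hd : d = 0 ∨ d = 1 ∨ d = -1) (l : List ℤ) :
    l ∈ wordsW n h d ↔ l.length = n ∧ goodW h d l := by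
  induction n generalizing h d l with
  | zero =>
    cases l with
    | nil => simp only [wordsW, goodW]; split_ifs <;> simp_all
    | cons e l => simp only [wordsW]; split_ifs <;> simp
  | succ n ih =>
    cases l with
    | nil =>
      simp only [wordsW]; split_ifs <;> simp
    | cons e l =>
      have key : (e :: l ∈ wordsW (n+1) h d) ↔
          ((0 ≤ h ∧ e = 0 ∧ l ∈ wordsW n h 0) ∨ (¬ (d = -1 ∨ h + 1 < 0) ∧ e = 1 ∧ l ∈ wordsW n (h+1) 1)
           ∨ (¬ (d = 1 ∨ h - 1 < 0) ∧ e = -1 ∧ l ∈ wordsW n (h-1) (-1))) := by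
        simp only [wordsW, Finset.mem_union, or_assoc]
        refine or_congr ?_ (or_congr ?_ ?_)
        · split_ifs with hh <;> simp [hh]
          exact and_comm.trans (and_congr_left' eq_comm) |>.trans Iff.rfl
        · split_ifs with hh
          · simp only [hh]; simp
          · simp only [hh]; simp
            exact and_comm.trans (and_congr_left' eq_comm) |>.trans Iff.rfl
        · split_ifs with hh
          · simp only [hh]; simp
          · simp only [hh]; simp
            exact and_comm.trans (and_congr_left' eq_comm) |>.trans Iff.rfl
      rw [key, ih _ _ (by simp), ih _ _ (by simp), ih _ _ (by simp)]
      simp only [goodW, List.length_cons, Nat.add_right_cancel_iff]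
      constructor
      · rintro (⟨h1, rfl, h2, h3⟩ | ⟨h1, rfl, h2, h3⟩ | ⟨h1, rfl, h2, h3⟩)
        · refine ⟨h2, by simp, by simp, by simpa using h1, by simpa using h3⟩
        · refine ⟨h2, by simp, by omega, by omega, by simpa using h3⟩
        · refine ⟨h2, by simp, by omega, by omega, by simpa [sub_eq_add_neg] using h3⟩
      · rintro ⟨h2, (rfl | rfl | rfl), h4, h5, h6⟩
        · left; exact ⟨by omega, rfl, h2, by simpa using h6⟩
        · right; left; exact ⟨by omega, rfl, h2, by simpa using h6⟩
        · right; right; exact ⟨by omega, rfl, h2, by simpa [sub_eq_add_neg] using h6⟩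

theorem cntW_le (n : ℕ) : ∀ h : ℤ, (cntW n h 0 : ℝ) ≤ 1.43 * 2.43 ^ n ∧
    (cntW n h 1 : ℝ) ≤ 2.43 ^ n ∧ (cntW n h (-1) : ℝ) ≤ 2.43 ^ n := by
  induction n with
  | zero => intro h; simp only [cntW]; split_ifs <;> norm_num
  | succ n ih =>
    intro h
    have h0 := (ih h).1
    have h1 := (ih (h+1)).2.1
    have h2 := (ih (h-1)).2.2
    have hp : (0:ℝ) < 2.43 ^ n := by positivity
    simp only [cntW, pow_succ]
    refine ⟨?_, ?_, ?_⟩ <;> split_ifs <;> push_cast <;> first | linarith | simp_all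

/-- Lower bound invariant for a row of the counting table, starting at height `k`. -/
def leRowW (n : ℕ) : ℤ → List (ℕ × ℕ × ℕ) → Prop
  | _, [] => True
  | k, (e, u, d) :: L =>
    e ≤ cntW n k 0 ∧ u ≤ cntW n k 1 ∧ d ≤ cntW n k (-1) ∧ leRowW n (k + 1) L

/-- One step of the counting table. -/
def stepRowW : ℕ → List (ℕ × ℕ × ℕ) → List (ℕ × ℕ × ℕ)
  | _, [] => []
  | p, (e, _, d) :: L =>
    (e + (L.headD (0, 0, 0)).2.1 + p, e + (L.headD (0, 0, 0)).2.1, e + p) :: stepRowW d L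

/-- The counting table. -/
def rowW : ℕ → List (ℕ × ℕ × ℕ)
  | 0 => (1, 1, 1) :: List.replicate 11 (0, 0, 0)
  | n + 1 => stepRowW 0 (rowW n)

theorem leRowW_step (n p : ℕ) (k : ℤ) (L : List (ℕ × ℕ × ℕ)) (hk : 0 ≤ k)
    (hp : p ≤ if k - 1 < 0 then 0 else cntW n (k - 1) (-1)) (hL : leRowW n k L) :
    leRowW (n + 1) k (stepRowW p L) := by
  induction L generalizing p k with
  | nil => simp [stepRowW, leRowW]
  | cons a L ih =>
    obtain ⟨e, u, d⟩ := a
    obtain ⟨h1, h2, h3, h4⟩ := hL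
    have hu : (L.headD (0, 0, 0)).2.1 ≤ cntW n (k + 1) 1 := by
      cases L with
      | nil => simp
      | cons b L => exact h4.2.1
    have hk1 : ¬ (k + 1 < 0) := by omega
    simp only [stepRowW, leRowW]
    generalize (L.headD (0, 0, 0)).2.1 = q at hu
    refine ⟨?_, ?_, ?_, ih d (k + 1) (by omega) ?_ h4⟩
    · simp only [cntW, hk, hk1]
      simp only [if_true]
      norm_num at hp ⊢
      omega
    · simp only [cntW, hk, hk1]
      norm_num
      omega
    · simp only [cntW, hk, hk1]
      norm_num at hp ⊢
      omega
    · simpa [not_lt.mpr hk] using h3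

theorem leRowW_row (n : ℕ) : leRowW n 0 (rowW n) := by
  induction n with
  | zero => simp [rowW, leRowW, cntW, List.replicate]
  | succ n ih => exact leRowW_step n 0 0 _ le_rfl (by simp) ih

theorem row_le_cntW (n : ℕ) : ((rowW n).headD (0, 0, 0)).1 ≤ cntW n 0 0 := by
  have := leRowW_row n
  cases h : rowW n with
  | nil => simp
  | cons a L => rw [h] at this; exact this.1

theorem cntW_sum : (1:ℝ) ≤ ∑ t ∈ Finset.range 21, (cntW t 0 0 : ℝ) * 0.41 ^ (t + 1) := by
  have h1 : (100 : ℕ) ^ 21 ≤ ∑ t ∈ Finset.range 21,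
      ((rowW t).headD (0, 0, 0)).1 * (41 ^ (t + 1) * 100 ^ (20 - t)) := by
    decide +kernel
  have h2 : (100 : ℕ) ^ 21 ≤ ∑ t ∈ Finset.range 21,
      cntW t 0 0 * (41 ^ (t + 1) * 100 ^ (20 - t)) :=
    h1.trans (Finset.sum_le_sum fun t _ => Nat.mul_le_mul_right _ (row_le_cntW t))
  have h3 : ((100 : ℕ) ^ 21 : ℝ) ≤ ∑ t ∈ Finset.range 21,
      (cntW t 0 0 : ℝ) * (41 ^ (t + 1) * 100 ^ (20 - t)) := by exact_mod_cast h2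
  have h4 : ∑ t ∈ Finset.range 21, (cntW t 0 0 : ℝ) * (41 ^ (t + 1) * 100 ^ (20 - t)) =
      (100 ^ 21) * ∑ t ∈ Finset.range 21, (cntW t 0 0 : ℝ) * 0.41 ^ (t + 1) := by
    rw [Finset.mul_sum]
    refine Finset.sum_congr rfl fun t ht => ?_
    have ht : t + 1 ≤ 21 := Finset.mem_range.mp ht
    have : (100 : ℝ) ^ 21 = 100 ^ (t + 1) * 100 ^ (20 - t) := by
      rw [← pow_add]; congr 1; omega
    rw [this, show (0.41 : ℝ) = 41 / 100 by norm_num, div_pow]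
    field_simp
  rw [h4] at h3
  push_cast at h3
  nlinarith [h3]

theorem goodW_iff (h d : ℤ) (hh : 0 ≤ h) (l : List ℤ) : goodW h d l ↔
    (∀ e ∈ l, e = 0 ∨ e = 1 ∨ e = -1) ∧ (d :: l).IsChain (fun a b => a * b ≠ -1) ∧
    (∀ i, 0 ≤ h + (l.take i).sum) ∧ h + l.sum = 0 := by
  induction l generalizing h d with
  | nil => simp [goodW]; intro h0; omega
  | cons e l ih =>
    simp only [goodW]
    constructor
    · rintro ⟨h1, h2, h3, h4⟩
      obtain ⟨g1, g2, g3, g4⟩ := (ih _ _ h3).1 h4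
      refine ⟨?_, ?_, ?_, ?_⟩
      · intro x hx
        rcases List.mem_cons.1 hx with rfl | hx
        · exact h1
        · exact g1 x hx
      · exact List.isChain_cons_cons.2 ⟨h2, g2⟩
      · intro i
        cases i with
        | zero => simpa using hh
        | succ i => have := g3 i; simp only [List.take_succ_cons, List.sum_cons]; omega
      · simp only [List.sum_cons]; omega
    · rintro ⟨g1, g2, g3, g4⟩
      obtain ⟨g5, g6⟩ := List.isChain_cons_cons.1 g2
      have h3 : 0 ≤ h + e := by simpa using g3 1
      refine ⟨g1 e (by simp), g5, h3, (ih _ _ h3).2 ⟨fun x hx => g1 x (by simp [hx]), g6, ?_, ?_⟩⟩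
      · intro i
        have := g3 (i + 1)
        simp only [List.take_succ_cons, List.sum_cons] at this; omega
      · simp only [List.sum_cons] at g4; omega

/-- Position after `i` steps of the path coded by the word `w`. -/
def posW (w : List ℤ) (i : ℕ) : ℤ × ℤ := (((w.take i).count 0 : ℕ), (w.take i).sum)

theorem posW_succ (w : List ℤ) (i : ℕ) (hi : i < w.length) :
    posW w (i + 1) = posW w i + (if w[i] = 0 then 1 else 0, w[i]) := by
  unfold posW
  rw [← List.take_concat_get' w i hi]
  rw [List.sum_append, List.count_append]
  ext
  · simp [List.count_singleton]
  · simp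

theorem posW_mono (w : List ℤ) (i : ℕ) (j : ℕ) (hij : i ≤ j) (hj : j ≤ w.length) :
    (posW w i).1 ≤ (posW w j).1 := by
  induction j, hij using Nat.le_induction with
  | base => exact le_rfl
  | succ j hij ih =>
    rw [posW_succ w j (by omega)]
    have := ih (by omega)
    simp only [Prod.fst_add]
    split_ifs <;> omega

/-- A vertical stretch is monotone. -/
theorem posW_vert (w : List ℤ) (hw : ∀ e ∈ w, e = 0 ∨ e = 1 ∨ e = -1)
    (hc : w.IsChain (fun a b => a * b ≠ -1)) (i j : ℕ) (hij : i < j) (hj : j ≤ w.length)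
    (hx : (posW w i).1 = (posW w j).1) :
    ∃ s : ℤ, s ≠ 0 ∧ w[j - 1]? = some s ∧ (posW w j).2 = (posW w i).2 + s * (j - i) := by
  induction j, (Nat.succ_le_of_lt hij) using Nat.le_induction with
  | base =>
    have h := posW_succ w i (by omega)
    rw [Nat.succ_eq_add_one, h] at hx
    refine ⟨w[i], ?_, by simp, ?_⟩
    · intro h0; simp [h0] at hx
    · rw [Nat.succ_eq_add_one, h]; simp
  | succ j hij' ih =>
    have h := posW_succ w j (by omega)
    have m1 := posW_mono w i j (by omega) (by omega)
    have m2 := posW_mono w j (j + 1) (by omega) (by omega)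
    obtain ⟨s, hs0, hs, hsy⟩ := ih (by omega) (by omega) (by omega)
    have hne : w[j] ≠ 0 := by
      intro h0
      rw [h] at hx m2
      simp [h0] at hx
      omega
    have hs' : w[j - 1] = s := by
      rw [List.getElem?_eq_getElem (by omega)] at hs
      exact Option.some.inj hs
    have hcc := (List.isChain_iff_getElem.1 hc) (j - 1) (by omega)
    have hjj : j - 1 + 1 = j := by omega
    simp only [hjj, hs'] at hcc
    have e1 := hw w[j] (List.getElem_mem _)
    have e2 := hw w[j - 1] (List.getElem_mem _)
    rw [hs'] at e2
    have heq : w[j] = s := by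
      generalize w[j] = a at *
      rcases e1 with rfl | rfl | rfl <;> rcases e2 with rfl | rfl | rfl <;> simp_all
    refine ⟨s, hs0, by rw [Nat.add_sub_cancel, List.getElem?_eq_getElem (by omega), heq], ?_⟩
    rw [h, Prod.snd_add, hsy, heq]
    push_cast; ring

theorem posW_inj (w : List ℤ) (hw : ∀ e ∈ w, e = 0 ∨ e = 1 ∨ e = -1)
    (hc : w.IsChain (fun a b => a * b ≠ -1)) (i j : ℕ) (hij : i < j) (hj : j ≤ w.length) :
    posW w i ≠ posW w j := by
  intro h
  obtain ⟨s, hs0, -, hs⟩ := posW_vert w hw hc i j hij hj (by rw [h])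
  rw [h] at hs
  have : s * ((j:ℤ) - i) = 0 := by omega
  rcases mul_eq_zero.1 this with h | h
  · exact hs0 h
  · omega

theorem posW_mem (t : ℕ) (l : List ℤ) (hl : l.length = t) (hg : goodW 0 0 l) :
    (fun i : Fin (t + 2) => posW (0 :: l) i) ∈ excSet (t + 1) := by
  have hg' : goodW 0 0 (0 :: l) := by simpa [goodW] using hg
  have hlen : (0 :: l).length = t + 1 := by simp [hl]
  have h0 : posW (0 :: l) 1 = (1, 0) := by simp [posW]
  generalize (0 :: l) = w at *
  obtain ⟨h1, h2, h3, h4⟩ := (goodW_iff 0 0 le_rfl w).1 hg'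
  have h2 : w.IsChain (fun a b => a * b ≠ -1) := h2.tail
  refine ⟨by simp [posW], fun _ => h0, ?_, ?_, ?_, ?_⟩
  · intro i
    have := posW_succ w i (by omega)
    simp only [Fin.val_succ, Fin.val_castSucc, this, add_sub_cancel_left]
    have hi : i.val < w.length := by omega
    have e1 := h1 w[i.val] (List.getElem_mem hi)
    rcases e1 with e | e | e <;> simp [e]
  · intro i j hij
    rcases lt_trichotomy i.val j.val with h | h | h
    · exact absurd hij (posW_inj w h1 h2 _ _ h (by omega))
    · exact Fin.ext h
    · exact absurd hij.symm (posW_inj w h1 h2 _ _ h (by omega))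
  · intro i; simpa [posW] using h3 i
  · have : w.take (t + 1) = w := List.take_of_length_le (by omega)
    simpa [posW, this] using h4

theorem posW_surj (t : ℕ) (π : Fin (t + 2) → ℤ × ℤ) (hπ : π ∈ excSet (t + 1)) :
    ∃ l : List ℤ, l.length = t ∧ goodW 0 0 l ∧ (fun i : Fin (t + 2) => posW (0 :: l) i) = π := by
  obtain ⟨p0, p1, p2, p3, p4, p5⟩ := hπ
  obtain ⟨w, hw⟩ : ∃ w, w = List.ofFn (fun i : Fin (t + 1) => (π i.succ).2 - (π i.castSucc).2) :=
    ⟨_, rfl⟩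
  have hlen : w.length = t + 1 := by simp [hw]
  have hget : ∀ i : Fin (t + 1), w[i] = (π i.succ).2 - (π i.castSucc).2 := by
    intro i; subst hw; simp only [Fin.getElem_fin, List.getElem_ofFn]
  have hpos : ∀ i (hi : i < t + 2), posW w i = π ⟨i, hi⟩ := by
    intro i
    induction i with
    | zero => intro _; simpa [posW] using p0.symm
    | succ i ih =>
      intro hi
      rw [posW_succ w i (by omega), ih (by omega)]
      have a := hget ⟨i, by omega⟩
      have b := p2 ⟨i, by omega⟩
      simp only [Fin.succ_mk, Fin.castSucc_mk, Fin.getElem_fin] at a b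
      generalize π ⟨i + 1, hi⟩ = x at *
      generalize π ⟨i, _⟩ = y at *
      simp only [a]
      obtain ⟨x1, x2⟩ := x
      obtain ⟨y1, y2⟩ := y
      simp only [Prod.mk_sub_mk, Prod.mk.injEq] at b
      simp only [Prod.mk_add_mk, Prod.mk.injEq]
      constructor
      · split_ifs <;> omega
      · omega
  have hstep : ∀ i (hi : i < w.length), w[i] = 0 ∨ w[i] = 1 ∨ w[i] = -1 := by
    intro i hi
    have a := hget ⟨i, by omega⟩
    have b := p2 ⟨i, by omega⟩
    simp only [Fin.getElem_fin] at a
    rw [a, ← Prod.snd_sub]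
    rcases b with b | b | b <;> rw [b] <;> simp
  have hgood : goodW 0 0 w := by
    rw [goodW_iff 0 0 le_rfl]
    refine ⟨?_, ?_, ?_, ?_⟩
    · intro e he
      obtain ⟨i, hi, rfl⟩ := List.getElem_of_mem he
      exact hstep i hi
    · have : w.IsChain (fun a b => a * b ≠ -1) := by
        rw [List.isChain_iff_getElem]
        intro i hi hm
        have q1 := posW_succ w i (by omega)
        have q2 := posW_succ w (i + 1) (by omega)
        have : posW w (i + 2) = posW w i := by
          rw [q2, q1, add_assoc]
          rcases hstep i (by omega) with e | e | e <;> rcases hstep (i+1) (by omega) with e' | e' | e' <;>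
            simp_all
        rw [hpos _ (by omega), hpos _ (by omega)] at this
        have := congrArg Fin.val (p3 this)
        simp at this
      cases w with
      | nil => simp
      | cons a l => exact List.isChain_cons_cons.2 ⟨by simp, this⟩
    · intro i
      rcases lt_or_ge i (t + 2) with hi | hi
      · have := p4 ⟨i, hi⟩
        rw [← hpos] at this
        simpa [posW] using this
      · have := p4 (Fin.last (t + 1))
        rw [Fin.last, ← hpos] at this
        simp only [posW] at this
        rw [List.take_of_length_le (by omega)] at this ⊢
        simpa using this
    · have := p5
      rw [Fin.last, ← hpos] at this
      simp only [posW] at this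
      rw [List.take_of_length_le (by omega)] at this
      simpa using this
  have hhead : posW w 1 = (1, 0) := (hpos 1 (by omega)).trans (p1 (by omega))
  cases w with
  | nil => simp at hlen
  | cons a l =>
    have ha : a = 0 := by simpa [posW] using congrArg Prod.snd hhead
    subst ha
    refine ⟨l, by simpa using hlen, by simpa [goodW] using hgood, ?_⟩
    funext i
    exact hpos i i.2

theorem card_excSet (t : ℕ) : Nat.card ↥(excSet (t + 1)) = cntW t 0 0 := by
  have hm := fun l => mem_wordsW t 0 0 (by simp) l
  rw [← card_wordsW, ← Nat.card_eq_finsetCard]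
  symm
  refine Nat.card_eq_of_bijective (fun l : wordsW t 0 0 =>
    (⟨fun i : Fin (t + 2) => posW (0 :: l.1) i,
      posW_mem t l.1 ((hm _).1 l.2).1 ((hm _).1 l.2).2⟩ : excSet (t + 1))) ⟨?_, ?_⟩
  · rintro ⟨l, hl⟩ ⟨m, hm'⟩ h
    have hl1 := ((hm _).1 hl).1
    have hm1 := ((hm _).1 hm').1
    have h' := Subtype.ext_iff.1 h
    simp only at h'
    have hp : ∀ i, i < t + 2 → posW (0 :: l) i = posW (0 :: m) i := fun i hi =>
      congrFun h' ⟨i, hi⟩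
    apply Subtype.ext
    refine List.ext_getElem (by simp only; omega) ?_
    intro i hi hi'
    simp only at hi hi' ⊢
    have a := posW_succ (0 :: l) (i + 1) (by simp; omega)
    have b := posW_succ (0 :: m) (i + 1) (by simp; omega)
    rw [hp _ (by omega), hp _ (by omega), b] at a
    have := congrArg Prod.snd (add_left_cancel a)
    simpa using this.symm
  · rintro ⟨π, hπ⟩
    obtain ⟨l, h1, h2, h3⟩ := posW_surj t π hπ
    exact ⟨⟨l, (hm l).2 ⟨h1, h2⟩⟩, Subtype.ext h3⟩

/-- **Existence of the critical exponent `λ*`:** there is `λ* > 0` with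
`Σ_{t=1}^∞ 2^{−t}|I_t| e^{−λ* t} = 1`. -/
theorem exists_lambda_star :
    ∃ lam : ℝ, 0 < lam ∧
      ∑' t : ℕ, (1 / 2 : ℝ) ^ (t + 1) * Nat.card ↥(excSet (t + 1)) *
        Real.exp (-lam * (t + 1)) = 1 := by
  have hsum : Summable (fun t : ℕ => (cntW t 0 0 : ℝ) * 0.41 ^ (t + 1)) := by
    refine Summable.of_nonneg_of_le (fun t => by positivity)
      (f := fun t : ℕ => (1.43 * 0.41) * (2.43 * 0.41 : ℝ) ^ t) ?_ ?_
    · intro t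
      have := (cntW_le t 0).1
      calc (cntW t 0 0 : ℝ) * 0.41 ^ (t + 1) ≤ (1.43 * 2.43 ^ t) * 0.41 ^ (t + 1) := by gcongr
        _ = _ := by rw [mul_pow, pow_succ]; ring
    · exact (summable_geometric_of_lt_one (by norm_num) (by norm_num)).mul_left _
  let G : ℝ → ℝ := fun z => ∑' t : ℕ, (cntW t 0 0 : ℝ) * z ^ (t + 1)
  have hcont : ContinuousOn G (Set.Icc 0 0.41) := by
    refine continuousOn_tsum (fun t => by fun_prop) hsum ?_
    rintro t z ⟨h0, h1⟩
    rw [Real.norm_of_nonneg (by positivity)]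
    gcongr
  have hG0 : G 0 = 0 := by simp [G]
  have hG1 : 1 ≤ G 0.41 :=
    cntW_sum.trans (hsum.sum_le_tsum _ (fun t _ => by positivity))
  obtain ⟨z, ⟨hz0, hz1⟩, hz⟩ := intermediate_value_Icc (by norm_num) hcont
    (show (1:ℝ) ∈ Set.Icc (G 0) (G 0.41) from ⟨by rw [hG0]; norm_num, hG1⟩)
  have hzpos : 0 < z := by
    rcases hz0.eq_or_lt with h | h
    · rw [← h, hG0] at hz; norm_num at hz
    · exact h
  refine ⟨-Real.log (2 * z), ?_, ?_⟩
  · rw [neg_pos]; exact Real.log_neg (by linarith) (by norm_num at hz1; linarith)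
  · refine Eq.trans ?_ hz
    refine tsum_congr fun t => ?_
    rw [card_excSet, neg_neg, show Real.log (2 * z) * ((t:ℝ) + 1) = ((t + 1 : ℕ) : ℝ) * Real.log (2 * z) by
      push_cast; ring, Real.exp_nat_mul, Real.exp_log (by linarith), mul_pow, one_div, inv_pow]
    field_simp
end
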